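/- arXiv:2006.04099 — 2 statements merged into one kernel-verified Lean document; each statement's English description precedes it below -/
import Mathlib

section
/- Let q be a prime power with q > 2 and let S be an algebraic hypersurface of PG(6,q^2) of degree q+1 defined over GF(q^2) which does not contain any solid (3-dimensional projective subspace). If the number of GF(q^2)-rational points of S equals q^11 + q^9 + q^7 + q^4 + q^2 + 1, then every solid of PG(6,q^2) meets S in at least q^4 + q^2 + 1 rational points. -/
open MvPolynomial Module

/-- The set of points of the projective subspace of `PG(n-1, F)` determined by
the linear subspace `W` of `F^n`. -/
def projPts {F : Type} [Field F] {n : ℕ} (W : Submodule F (Fin n → F)) :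
    Set (Projectivization F (Fin n → F)) :=
  {P | P.submodule ≤ W}

/-- The set of `F`-rational points of the hypersurface of `PG(n-1, F)` defined by the
homogeneous polynomial `f`. -/
def hypersurfacePts {F : Type} [Field F] {n : ℕ} (f : MvPolynomial (Fin n) F) :
    Set (Projectivization F (Fin n → F)) :=
  {P | MvPolynomial.eval P.rep f = 0}

lemma poly_eval_aeval {F : Type} [Field F] {n : ℕ} (g : Fin n → Polynomial F)
    (p : MvPolynomial (Fin n) F) (t : F) :
    (aeval g p).eval t = eval (fun i => (g i).eval t) p := by
  have := MvPolynomial.comp_aeval_apply (R := F) (f := g) (Polynomial.aeval t) p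
  simpa [Polynomial.coe_aeval_eq_eval, MvPolynomial.coe_aeval_eq_eval] using this

/-- A polynomial of degree at most `e` that does not vanish on a line has at most `e` zeros on it. -/
lemma line_card {F : Type} [Field F] [Fintype F] {n : ℕ} (p : MvPolynomial (Fin n) F) (e : ℕ)
    (he : p.totalDegree ≤ e) (a v : Fin n → F) (t0 : F) (h0 : eval (a + t0 • v) p ≠ 0) :
    Nat.card {t : F // eval (a + t • v) p = 0} ≤ e := by
  classical
  set P : Polynomial F :=
    aeval (fun i => Polynomial.C (a i) + Polynomial.X * Polynomial.C (v i)) p with hP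
  have hev : ∀ t, P.eval t = eval (a + t • v) p := by
    intro t
    rw [hP, poly_eval_aeval]
    congr 2
    ext i
    simp
    ring
  have hdeg : P.natDegree ≤ e := by
    refine (MvPolynomial.aeval_natDegree_le (m := e) (n := 1) p he _ ?_).trans (by simp)
    intro i
    compute_degree
  have hP0 : P ≠ 0 := by
    intro h
    apply h0
    rw [← hev, h]; simp
  have : {t : F | eval (a + t • v) p = 0} ⊆ (P.roots.toFinset : Set F) := by
    intro t ht
    simp [hP0, hev]
    exact ht
  calc Nat.card {t : F // eval (a + t • v) p = 0}
      = Set.ncard {t : F | eval (a + t • v) p = 0} := rfl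
    _ ≤ Set.ncard (P.roots.toFinset : Set F) := Set.ncard_le_ncard this (Finset.finite_toSet _)
    _ = P.roots.toFinset.card := Set.ncard_coe_finset _
    _ ≤ Multiset.card P.roots := Multiset.toFinset_card_le _
    _ ≤ P.natDegree := Polynomial.card_roots' _
    _ ≤ e := hdeg

lemma totalDegree_pderiv_le' {F : Type} [Field F] {n : ℕ} (p : MvPolynomial (Fin n) F) (i : Fin n) :
    (pderiv i p).totalDegree ≤ p.totalDegree - 1 := by
  conv_lhs => rw [p.as_sum, map_sum]
  refine (MvPolynomial.totalDegree_finsetSum_le ?_)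
  intro m hm
  have h1 : m.degree ≤ p.totalDegree := le_totalDegree hm
  have h2 := (isHomogeneous_monomial (coeff m p) (rfl : m.degree = m.degree)).pderiv (i := i)
  exact h2.totalDegree_le.trans (by omega)

lemma finrank_rtd {F : Type} [Field F] (D : ℕ) :
    2 * finrank F (restrictTotalDegree (Fin 2) F D) = (D + 1) * (D + 2) := by
  have h := Module.finrank_eq_nat_card_basis
    (basisRestrictSupport F {n : Fin 2 →₀ ℕ | (n.sum fun _ e => e) ≤ D})
  have h' : finrank F (restrictTotalDegree (Fin 2) F D) =
    Nat.card {n : Fin 2 →₀ ℕ | (n.sum fun _ e => e) ≤ D} := h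
  rw [h']
  have e : {n : Fin 2 →₀ ℕ | (n.sum fun _ e => e) ≤ D} ≃
      (Finset.range (D+1)).sigma (fun k => Finset.HasAntidiagonal.antidiagonal k) :=
    { toFun := fun n => ⟨⟨n.1 0 + n.1 1, (n.1 0, n.1 1)⟩, by
        have := n.2
        simp [Finsupp.sum_fintype] at this
        simp; omega⟩
      invFun := fun x => ⟨Finsupp.equivFunOnFinite.symm ![x.1.2.1, x.1.2.2], by
        have := x.2
        rw [Finset.mem_sigma, Finset.mem_range, Finset.HasAntidiagonal.mem_antidiagonal] at this
        simp [Finsupp.sum_fintype]; omega⟩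
      left_inv := by
        intro n
        ext i
        fin_cases i <;> simp
      right_inv := by
        rintro ⟨⟨k, a, b⟩, hx⟩
        simp at hx
        obtain ⟨_, rfl⟩ := hx
        simp }
  rw [Nat.card_congr e, Nat.card_eq_fintype_card, Fintype.card_coe, Finset.card_sigma]
  simp only [Finset.Nat.card_antidiagonal]
  have := Finset.sum_range_id_mul_two (D+2)
  rw [Finset.sum_range_succ'] at this
  simp at this
  nlinarith

/-- Pencil bound: a curve of degree `e` containing no line has at most `(e-1)Q+e` points. -/
lemma pencil_bound {F : Type} [Field F] [Fintype F] (p : MvPolynomial (Fin 2) F) (e : ℕ)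
    (he : p.totalDegree ≤ e) (he1 : 1 ≤ e)
    (hl : ∀ a v : Fin 2 → F, v ≠ 0 → ∃ t : F, eval (a + t • v) p ≠ 0) :
    Nat.card {x : Fin 2 → F // eval x p = 0} ≤ (e - 1) * Fintype.card F + e := by
  classical
  by_cases hex : ∃ a : Fin 2 → F, eval a p = 0
  swap
  · have : IsEmpty {x : Fin 2 → F // eval x p = 0} := ⟨fun x => hex ⟨x.1, x.2⟩⟩
    simp
  obtain ⟨a, ha⟩ := hex
  -- directions
  let dir : Option F → Fin 2 → F := fun o => o.elim ![0, 1] (fun s => ![1, s])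
  have hdir : ∀ o, dir o ≠ 0 := by
    intro o h
    cases o with
    | none => have := congrFun h 1; simp [dir] at this
    | some s => have := congrFun h 0; simp [dir] at this
  have hT : ∀ o, (Finset.univ.filter (fun t : F => t ≠ 0 ∧ eval (a + t • dir o) p = 0)).card ≤ e - 1 := by
    intro o
    obtain ⟨t0, ht0⟩ := hl a (dir o) (hdir o)
    have h1 := line_card p e he a (dir o) t0 ht0
    rw [Nat.card_eq_fintype_card, Fintype.card_subtype] at h1
    have h2 : (Finset.univ.filter (fun t : F => t ≠ 0 ∧ eval (a + t • dir o) p = 0)) =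
      (Finset.univ.filter (fun t : F => eval (a + t • dir o) p = 0)).erase 0 := by
      ext t; simp
    rw [h2, Finset.card_erase_of_mem (by simp [ha])]
    omega
  have hsub : (Finset.univ.filter (fun x : Fin 2 → F => eval x p = 0)) ⊆
      insert a ((Finset.univ : Finset (Option F)).biUnion (fun o =>
        (Finset.univ.filter (fun t : F => t ≠ 0 ∧ eval (a + t • dir o) p = 0)).image
          (fun t => a + t • dir o))) := by
    intro x hx
    simp only [Finset.mem_filter, Finset.mem_univ, true_and] at hx
    by_cases hxa : x = a
    · simp [hxa]
    apply Finset.mem_insert_of_mem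
    simp only [Finset.mem_biUnion, Finset.mem_univ, true_and, Finset.mem_image, Finset.mem_filter]
    by_cases h0 : x 0 = a 0
    · have h1 : x 1 - a 1 ≠ 0 := by
        intro h
        apply hxa
        ext i
        fin_cases i
        · exact h0
        · exact sub_eq_zero.mp h
      have hx' : a + (x 1 - a 1) • dir none = x := by
        ext i
        fin_cases i <;> simp [dir, h0]
      exact ⟨none, x 1 - a 1, ⟨h1, by rw [hx']; exact hx⟩, hx'⟩
    · have h1 : x 0 - a 0 ≠ 0 := sub_ne_zero.mpr h0
      have hx' : a + (x 0 - a 0) • dir (some ((x 1 - a 1) / (x 0 - a 0))) = x := by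
        ext i
        fin_cases i
        · simp [dir]
        · simp [dir]; field_simp; ring
      exact ⟨_, x 0 - a 0, ⟨h1, by rw [hx']; exact hx⟩, hx'⟩
  rw [Nat.card_eq_fintype_card, Fintype.card_subtype]
  refine (Finset.card_le_card hsub).trans ((Finset.card_insert_le _ _).trans ?_)
  have h3 := Finset.card_biUnion_le_card_mul (Finset.univ : Finset (Option F)) (fun o =>
        (Finset.univ.filter (fun t : F => t ≠ 0 ∧ eval (a + t • dir o) p = 0)).image
          (fun t => a + t • dir o)) (e - 1) (fun o _ => Finset.card_image_le.trans (hT o))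
  simp only [Finset.card_univ, Fintype.card_option] at h3
  have : (Fintype.card F + 1) * (e - 1) = (e - 1) * Fintype.card F + (e - 1) := by ring
  omega

lemma finrank_mul_map {F : Type} [Field F] (f : MvPolynomial (Fin 2) F) (hf : f ≠ 0)
    (V : Submodule F (MvPolynomial (Fin 2) F)) :
    finrank F (V.map (LinearMap.mulLeft F f)) = finrank F V := by
  have hinj : Function.Injective (LinearMap.mulLeft F f) := by
    intro a b hab
    exact mul_left_cancel₀ hf hab
  exact (LinearEquiv.finrank_eq (Submodule.equivMapOfInjective _ hinj V)).symm

/-- Hermite interpolation in the plane over a finite field. -/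
lemma hermite {F : Type} [Field F] [Fintype F] (K : Set (Fin 2 → F)) (τ : K → Fin 2 → F)
    (hτ : ∀ x, τ x ≠ 0) (w : K → F × F) :
    ∃ p : MvPolynomial (Fin 2) F, ∀ x : K,
      eval x.1 p = (w x).1 ∧ ∑ i, τ x i * eval x.1 (pderiv i p) = (w x).2 := by
  classical
  have hσ : ∀ x, ∃ σ : Fin 2 → F, ∑ i, τ x i * σ i = 1 := by
    intro x
    by_cases h0 : τ x 0 = 0
    · have h1 : τ x 1 ≠ 0 := by
        intro h1
        apply hτ x
        ext i
        fin_cases i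
        · exact h0
        · exact h1
      exact ⟨![0, (τ x 1)⁻¹], by simp [h1]⟩
    · exact ⟨![(τ x 0)⁻¹, 0], by simp [h0]⟩
  choose σ hσ using hσ
  let l : K → MvPolynomial (Fin 2) F := fun x => ∑ i, C (σ x i) * (X i - C (x.1 i))
  have hl : ∀ x, eval x.1 (l x) = 0 := by
    intro x; simp [l]
  have hl' : ∀ x i, pderiv i (l x) = C (σ x i) := by
    intro x i
    fin_cases i <;> simp [l, pderiv_X]
  let c : K → F := fun x => (w x).2 -
    (w x).1 * 2 * ∑ i, τ x i * eval x.1 (pderiv i (indicator x.1))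
  let m : K → MvPolynomial (Fin 2) F := fun x => C (w x).1 + C (c x) * l x
  refine ⟨∑ x, (indicator x.1) ^ 2 * m x, ?_⟩
  have e1 : ∀ x y : K, eval y.1 (indicator x.1) = if y = x then 1 else 0 := by
    intro x y
    split_ifs with h
    · rw [h, eval_indicator_apply_eq_one]
    · exact eval_indicator_apply_eq_zero _ _ (fun h' => h (Subtype.ext h'))
  intro y
  constructor
  · rw [map_sum, Finset.sum_eq_single y]
    · simp [e1, m, hl]
    · intro x _ hx
      simp [e1, hx.symm]
    · simp
  · have h1 : ∀ i, eval y.1 (pderiv i (∑ x, (indicator x.1) ^ 2 * m x)) =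
        (w y).1 * 2 * eval y.1 (pderiv i (indicator y.1)) + c y * σ y i := by
      intro i
      rw [map_sum, map_sum, Finset.sum_eq_single y]
      · simp [e1, m, hl, hl', Derivation.leibniz, Derivation.leibniz_pow]
        ring
      · intro x _ hx
        simp [e1, hx.symm, Derivation.leibniz, Derivation.leibniz_pow]
      · simp
    simp_rw [h1]
    have h2 := hσ y
    simp only [Fin.sum_univ_two] at h2 ⊢
    simp only [c, Fin.sum_univ_two]
    linear_combination ((w y).2 - (w y).1 * 2 * (τ y 0 * eval y.1 (pderiv 0 (indicator y.1)) + τ y 1 * eval y.1 (pderiv 1 (indicator y.1)))) * h2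

lemma bezout {F : Type} [Field F] [Fintype F] (f h : MvPolynomial (Fin 2) F) (d e : ℕ)
    (hf : Prime f) (hfd : f.totalDegree = d) (hh : h.totalDegree ≤ e) (hnd : ¬ f ∣ h)
    (hP : ∀ x, eval x f = 0 → eval x h = 0 ∧
      ∀ i, eval x (pderiv i h) = - eval x (pderiv i f)) :
    2 * Nat.card {x : Fin 2 → F // eval x f = 0} ≤ d * e := by
  classical
  have hh0 : h ≠ 0 := by rintro rfl; exact hnd (dvd_zero _)
  let K : Set (Fin 2 → F) := {x | eval x f = 0}
  have hτ : ∀ x : K, ∃ τ : Fin 2 → F, τ ≠ 0 ∧ ∑ i, τ i * eval x.1 (pderiv i f) = 0 := by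
    intro x
    by_cases h0 : eval x.1 (pderiv 0 f) = 0
    · exact ⟨![1, 0], fun h => by simpa using congrFun h 0, by simp [h0]⟩
    · exact ⟨![-eval x.1 (pderiv 1 f), eval x.1 (pderiv 0 f)],
        fun h => h0 (by simpa using congrFun h 1), by simp; ring⟩
  choose τ hτ0 hτ1 using hτ
  let Φ : MvPolynomial (Fin 2) F →ₗ[F] (K → F × F) := LinearMap.pi fun x =>
    (aeval x.1).toLinearMap.prod
      (∑ i, τ x i • ((aeval x.1).toLinearMap ∘ₗ (pderiv i).toLinearMap))
  have hΦ : ∀ p x, Φ p x = (eval x.1 p, ∑ i, τ x i * eval x.1 (pderiv i p)) := by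
    intro p x
    simp [Φ]
  have hsurj : Function.Surjective Φ := by
    intro w
    obtain ⟨p, hp⟩ := hermite K τ hτ0 w
    refine ⟨p, ?_⟩
    funext x
    rw [hΦ, (hp x).1, (hp x).2]
  choose s hs using hsurj
  obtain ⟨D0, hD0⟩ : ∃ D0, ∀ w, (s w).totalDegree ≤ D0 :=
    ⟨Finset.univ.sup (fun w => (s w).totalDegree), fun w =>
      Finset.le_sup (f := fun w => (s w).totalDegree) (Finset.mem_univ w)⟩
  let V : ℕ → Submodule F (MvPolynomial (Fin 2) F) := fun D => restrictTotalDegree (Fin 2) F D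
  have hV : ∀ D p, p ∈ V D ↔ p.totalDegree ≤ D := fun D p => mem_restrictTotalDegree _ _ _
  have hfin : ∀ D, FiniteDimensional F (V D) := fun D =>
    inferInstanceAs (Module.Finite F (restrictTotalDegree (Fin 2) F D))
  let D := D0 + d + e
  let Φ' := Φ.domRestrict (V D)
  have hsurj' : LinearMap.range Φ' = ⊤ := by
    rw [LinearMap.range_eq_top]
    intro w
    exact ⟨⟨s w, (hV _ _).2 ((hD0 w).trans (by omega))⟩, hs w⟩
  have hdim := LinearMap.finrank_range_add_finrank_ker Φ'
  rw [hsurj', finrank_top] at hdim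
  have hK : finrank F (K → F × F) = 2 * Nat.card {x : Fin 2 → F // eval x f = 0} := by
    rw [Module.finrank_pi_fintype]
    simp [Nat.card_eq_fintype_card, K, Fintype.card_subtype]
    ring
  let A := (V (D0 + e)).map (LinearMap.mulLeft F f)
  let B := (V (D0 + d)).map (LinearMap.mulLeft F h)
  have hker : A ⊔ B ≤ (LinearMap.ker Φ').map (V D).subtype := by
    refine sup_le ?_ ?_
    · rintro _ ⟨p, hp, rfl⟩
      have hp' := (hV _ _).1 hp
      refine ⟨⟨f * p, (hV _ _).2 ((totalDegree_mul _ _).trans (by omega))⟩, ?_, rfl⟩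
      change Φ (f * p) = 0
      funext x
      rw [hΦ]
      have hx : eval x.1 f = 0 := x.2
      have := hτ1 x
      simp only [Fin.sum_univ_two] at this ⊢
      simp [Derivation.leibniz, hx]
      linear_combination (eval x.1 p) * this
    · rintro _ ⟨p, hp, rfl⟩
      have hp' := (hV _ _).1 hp
      refine ⟨⟨h * p, (hV _ _).2 ((totalDegree_mul _ _).trans (by omega))⟩, ?_, rfl⟩
      change Φ (h * p) = 0
      funext x
      rw [hΦ]
      have hx := hP x.1 x.2
      have := hτ1 x
      simp only [Fin.sum_univ_two] at this ⊢
      simp [Derivation.leibniz, hx]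
      linear_combination (-eval x.1 p) * this
  have hinf : A ⊓ B ≤ (V D0).map (LinearMap.mulLeft F (f * h)) := by
    rintro _ ⟨⟨p, hp, rfl⟩, ⟨r, hr, hpr⟩⟩
    simp only [LinearMap.mulLeft_apply] at hpr ⊢
    have hdv : f ∣ r := (hf.dvd_or_dvd (⟨p, hpr⟩ : f ∣ h * r)).resolve_left hnd
    obtain ⟨c, rfl⟩ := hdv
    refine ⟨c, ?_, ?_⟩
    · have hr' := (hV _ _).1 hr
      refine (hV _ _).2 ?_
      by_cases hc : c = 0
      · simp [hc]
      · rw [totalDegree_mul_of_isDomain hf.ne_zero hc] at hr'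
        omega
    · rw [LinearMap.mulLeft_apply, ← hpr]; ring
  have h1 : finrank F ↥(A ⊔ B) ≤ finrank F (LinearMap.ker Φ') := by
    rw [← Submodule.finrank_map_subtype_eq (V D) (LinearMap.ker Φ')]
    exact Submodule.finrank_mono hker
  have h2 : finrank F ↥(A ⊓ B) ≤ finrank F (V D0) := by
    rw [← finrank_mul_map (f * h) (mul_ne_zero hf.ne_zero hh0) (V D0)]
    exact Submodule.finrank_mono hinf
  have h3 := Submodule.finrank_sup_add_finrank_inf_eq A B
  rw [show finrank F A = _ from finrank_mul_map f hf.ne_zero _,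
    show finrank F B = _ from finrank_mul_map h hh0 _] at h3
  have c1 := finrank_rtd (F := F) D
  have c2 := finrank_rtd (F := F) (D0 + e)
  have c3 := finrank_rtd (F := F) (D0 + d)
  have c4 := finrank_rtd (F := F) D0
  change 2 * finrank F (V _) = _ at c1 c2 c3 c4
  rw [hK] at hdim
  simp only [D] at c1 hdim h1
  nlinarith

lemma coprime_of_no_root {F : Type} [Field F] [Fintype F] (p : Polynomial F)
    (hp : ∀ a, p.eval a ≠ 0) :
    IsCoprime p (Polynomial.X ^ Fintype.card F - Polynomial.X) := by
  classical
  have h1 : ∏ a : F, (Polynomial.X - Polynomial.C a)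
      = Polynomial.X ^ Fintype.card F - Polynomial.X := by
    have hm : (Polynomial.X ^ Fintype.card F - Polynomial.X : Polynomial F).Monic :=
      Polynomial.monic_X_pow_sub (by
        rw [Polynomial.degree_X]
        exact_mod_cast Fintype.one_lt_card)
    have := Polynomial.prod_multiset_X_sub_C_of_monic_of_roots_card_eq hm (by
      rw [FiniteField.roots_X_pow_card_sub_X,
        FiniteField.X_pow_card_sub_X_natDegree_eq F Fintype.one_lt_card]
      simp)
    rw [FiniteField.roots_X_pow_card_sub_X] at this
    exact this
  rw [← h1]
  refine IsCoprime.prod_right fun a _ => ?_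
  rw [isCoprime_comm]
  refine (Polynomial.irreducible_X_sub_C a).coprime_iff_not_dvd.2 ?_
  rw [Polynomial.dvd_iff_isRoot]
  exact hp a

lemma derivative_dehom {F : Type} [Field F] (g : MvPolynomial (Fin 2) F) :
    Polynomial.derivative (aeval ![(1 : Polynomial F), Polynomial.X] g) =
      aeval ![(1 : Polynomial F), Polynomial.X] (pderiv 1 g) := by
  induction g using MvPolynomial.induction_on with
  | C a => simp
  | add p q hp hq => simp only [map_add, hp, hq]
  | mul_X p i hp =>
    rw [map_mul, Polynomial.derivative_mul, hp, Derivation.leibniz]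
    fin_cases i
    · simp [pderiv_X]
    · simp [pderiv_X]
      ring

lemma totalDegree_sub_top {F : Type} [Field F] (k : MvPolynomial (Fin 2) F) (n : ℕ) (hn : 0 < n)
    (hk : k.totalDegree ≤ n) : (k - homogeneousComponent n k).totalDegree < n := by
  rw [totalDegree, Finset.sup_lt_iff (by simpa using hn)]
  intro m hm
  rw [MvPolynomial.mem_support_iff, coeff_sub, coeff_homogeneousComponent] at hm
  change m.degree < n
  by_contra hlt
  by_cases h : m.degree = n
  · simp [h] at hm
  · rw [if_neg h, sub_zero] at hm
    have : m.degree ≤ k.totalDegree := le_totalDegree (MvPolynomial.mem_support_iff.2 hm)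
    omega

/-- The form at infinity cannot be Frobenius nonclassical when it has no rational zero. -/
lemma top_not_dvd {F : Type} [Field F] [Fintype F] (q : ℕ) (hq0 : (q : F) = 0)
    (g : MvPolynomial (Fin 2) F)
    (hg : g.IsHomogeneous (q + 1)) (hnz : ∀ x : Fin 2 → F, x ≠ 0 → eval x g ≠ 0) :
    ¬ g ∣ ∑ i, X i ^ Fintype.card F * pderiv i g := by
  rintro ⟨k, hk⟩
  set φ : MvPolynomial (Fin 2) F →ₐ[F] Polynomial F := aeval ![1, Polynomial.X] with hφ
  have heuler : g = X 0 * pderiv 0 g + X 1 * pderiv 1 g := by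
    have := hg.sum_X_mul_pderiv
    rw [Fin.sum_univ_two] at this
    rw [this, nsmul_eq_mul]
    have : ((q + 1 : ℕ) : MvPolynomial (Fin 2) F) = 1 := by
      rw [← map_natCast (C : F →+* MvPolynomial (Fin 2) F)]
      simp [hq0]
    rw [this, one_mul]
  have hder : Polynomial.derivative (φ g) = φ (pderiv 1 g) := derivative_dehom g
  have e1 := congrArg φ heuler
  have e2 := congrArg φ hk
  rw [Fin.sum_univ_two] at e2
  simp only [map_add, map_mul, map_pow] at e1 e2
  have hX0 : φ (X 0) = 1 := by simp [hφ]
  have hX1 : φ (X 1) = Polynomial.X := by simp [hφ]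
  rw [hX0, hX1, ← hder] at e1 e2
  have hdv : φ g ∣ (Polynomial.X ^ Fintype.card F - Polynomial.X) * Polynomial.derivative (φ g) := by
    refine ⟨φ k - 1, ?_⟩
    simp only [one_pow, one_mul] at e1 e2
    linear_combination e2 + e1
  have hcop := coprime_of_no_root (φ g) (by
    intro a
    rw [hφ, poly_eval_aeval]
    apply hnz
    intro h
    have := congrFun h 0
    simp at this)
  have hdv' := hcop.dvd_of_dvd_mul_left hdv
  have hnd : (φ g).natDegree ≤ q + 1 := by
    refine (MvPolynomial.aeval_natDegree_le (m := q + 1) (n := 1) g hg.totalDegree_le _ ?_).trans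
      (by simp)
    intro i
    fin_cases i <;> simp
  have hco : (φ g).coeff (q + 1) = eval ![0, 1] g := by
    rw [hφ, g.as_sum, map_sum, map_sum, Polynomial.finsetSum_coeff]
    refine Finset.sum_congr rfl fun m hm => ?_
    have hm1 : m.degree = q + 1 := by
      by_contra h
      exact (MvPolynomial.mem_support_iff.1 hm) (hg.coeff_eq_zero h)
    have hm2 : m 0 + m 1 = q + 1 := by
      rw [← hm1, Finsupp.degree_eq_sum, Fin.sum_univ_two]
    rw [aeval_monomial, eval_monomial, Finsupp.prod_fintype _ _ (by simp),
      Finsupp.prod_fintype _ _ (by simp)]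
    simp [Polynomial.coeff_X_pow]
    by_cases h0 : m 0 = 0
    · have : q + 1 = m 1 := by omega
      simp [h0, this]
    · have : q + 1 ≠ m 1 := by omega
      simp [h0, this]
  have hco0 : (φ g).coeff (q + 1) ≠ 0 := by
    rw [hco]
    apply hnz
    intro h
    have := congrFun h 1
    simp at this
  have hdeg : (φ g).natDegree = q + 1 :=
    le_antisymm hnd (Polynomial.le_natDegree_of_ne_zero hco0)
  have hd0 : Polynomial.derivative (φ g) = 0 := by
    by_contra hne
    have h1 := Polynomial.natDegree_le_of_dvd hdv' hne
    have h2 := Polynomial.natDegree_derivative_lt (p := φ g) (by omega)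
    omega
  have := congrArg (fun p => Polynomial.coeff p q) hd0
  simp [Polynomial.coeff_derivative, hq0] at this
  exact hco0 this

lemma one_le_totalDegree {F : Type} [Field F] (a : MvPolynomial (Fin 2) F) (ha : a ≠ 0)
    (hu : ¬ IsUnit a) : 1 ≤ a.totalDegree := by
  by_contra h
  have h0 : a.totalDegree = 0 := by omega
  rw [totalDegree_eq_zero_iff_eq_C] at h0
  apply hu
  rw [h0]
  apply IsUnit.map
  rw [isUnit_iff_ne_zero]
  intro h1
  apply ha
  rw [h0, h1, map_zero]

/-- Key plane lemma. -/
lemma plane_bound {F : Type} [Field F] [Fintype F] (q : ℕ) (hq2 : 2 < q)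
    (hcard : Fintype.card F = q ^ 2) (f g : MvPolynomial (Fin 2) F)
    (hg : g.IsHomogeneous (q + 1)) (hr : (f - g).totalDegree < q + 1)
    (hnz : ∀ x : Fin 2 → F, x ≠ 0 → eval x g ≠ 0)
    (hl : ∀ a v : Fin 2 → F, v ≠ 0 → ∃ t : F, eval (a + t • v) f ≠ 0) :
    Nat.card {x : Fin 2 → F // eval x f = 0} ≤ q ^ 3 := by
  classical
  have hQ0 : ((Fintype.card F : ℕ) : F) = 0 := FiniteField.cast_card_eq_zero F
  have hq0 : (q : F) = 0 := by
    rw [hcard] at hQ0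
    push_cast at hQ0
    exact pow_eq_zero_iff (two_ne_zero) |>.1 hQ0
  have hg0 : g ≠ 0 := by
    rintro rfl
    exact hnz ![1, 0] (fun h => by simpa using congrFun h 0) (by simp)
  have hgd := hg.totalDegree hg0
  have hfg : f = g + (f - g) := by ring
  have hfd : f.totalDegree = q + 1 := by
    rw [hfg, totalDegree_add_eq_left_of_totalDegree_lt (by omega), hgd]
  have hf0 : f ≠ 0 := by rintro rfl; simp at hfd
  by_cases hirr : Irreducible f
  swap
  · have hnu : ¬ IsUnit f := by
      rw [isUnit_iff_totalDegree_of_isReduced]; omega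
    rw [irreducible_iff] at hirr
    push Not at hirr
    obtain ⟨a, b, hab, hua, hub⟩ := hirr hnu
    have ha0 : a ≠ 0 := by rintro rfl; simp at hab; exact hf0 hab
    have hb0 : b ≠ 0 := by rintro rfl; simp at hab; exact hf0 hab
    have ha1 := one_le_totalDegree a ha0 hua
    have hb1 := one_le_totalDegree b hb0 hub
    have hd := totalDegree_mul_of_isDomain ha0 hb0
    rw [← hab, hfd] at hd
    have hna := pencil_bound a _ le_rfl ha1 (fun x v hv => by
      obtain ⟨t, ht⟩ := hl x v hv
      rw [hab, map_mul] at ht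
      exact ⟨t, left_ne_zero_of_mul ht⟩)
    have hnb := pencil_bound b _ le_rfl hb1 (fun x v hv => by
      obtain ⟨t, ht⟩ := hl x v hv
      rw [hab, map_mul] at ht
      exact ⟨t, right_ne_zero_of_mul ht⟩)
    have hsum : Nat.card {x : Fin 2 → F // eval x f = 0} ≤
        Nat.card {x : Fin 2 → F // eval x a = 0} + Nat.card {x : Fin 2 → F // eval x b = 0} := by
      simp only [Nat.card_eq_fintype_card, Fintype.card_subtype]
      refine le_trans (Finset.card_le_card ?_) (Finset.card_union_le _ _)
      intro x
      simp [hab]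
    rw [hcard] at hna hnb
    obtain ⟨m, hm⟩ : ∃ m, a.totalDegree = m + 1 := ⟨_, (Nat.sub_add_cancel ha1).symm⟩
    obtain ⟨n, hn⟩ : ∃ n, b.totalDegree = n + 1 := ⟨_, (Nat.sub_add_cancel hb1).symm⟩
    rw [hm] at hna hd
    rw [hn] at hnb hd
    simp only [Nat.add_sub_cancel] at hna hnb
    have hmn : q = m + n + 1 := by omega
    have : q ^ 3 = m * q ^ 2 + n * q ^ 2 + q ^ 2 := by
      calc q ^ 3 = q * q ^ 2 := by ring
        _ = (m + n + 1) * q ^ 2 := by rw [← hmn]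
        _ = _ := by ring
    nlinarith
  · have hprime : Prime f := hirr.prime
    set h : MvPolynomial (Fin 2) F := ∑ i, (X i ^ Fintype.card F - X i) * pderiv i f with hh
    have hpd : ∀ i, (pderiv i f).totalDegree ≤ q := fun i =>
      (totalDegree_pderiv_le' f i).trans (by omega)
    have hQ1 : 1 < q ^ 2 := by nlinarith
    have hhd : h.totalDegree ≤ q ^ 2 + q := by
      refine totalDegree_finsetSum_le fun i _ => (totalDegree_mul _ _).trans
        (add_le_add ((totalDegree_sub _ _).trans ?_) (hpd i))
      rw [totalDegree_X_pow, totalDegree_X, hcard]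
      exact max_le le_rfl hQ1.le
    have hnd : ¬ f ∣ h := by
      rintro ⟨k, hk⟩
      apply top_not_dvd q hq0 g hg hnz
      refine ⟨homogeneousComponent (q ^ 2 - 1) k, ?_⟩
      have hkd : k.totalDegree ≤ q ^ 2 - 1 := by
        by_cases hk0 : k = 0
        · simp [hk0]
        · rw [hk, totalDegree_mul_of_isDomain hf0 hk0] at hhd
          omega
      set k1 := homogeneousComponent (q ^ 2 - 1) k with hk1
      have hk1h : k1.IsHomogeneous (q ^ 2 - 1) := homogeneousComponent_isHomogeneous _ _
      have hk2 : (k - k1).totalDegree < q ^ 2 - 1 := by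
        exact totalDegree_sub_top k _ (by omega) hkd
      set G := ∑ i, X i ^ Fintype.card F * pderiv i g with hG
      have hGh : G.IsHomogeneous (q ^ 2 + q) := by
        refine IsHomogeneous.sum _ _ _ fun i _ => ?_
        have h1 := (isHomogeneous_X_pow (R := F) i (Fintype.card F)).mul (hg.pderiv (i := i))
        rw [hcard] at h1 ⊢
        exact h1
      have hgk : (g * k1).IsHomogeneous (q ^ 2 + q) := by
        have := hg.mul hk1h
        rwa [show q + 1 + (q ^ 2 - 1) = q ^ 2 + q by omega] at this
      have hid : G - g * k1 = g * (k - k1) + (f - g) * k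
          - (∑ i, X i ^ Fintype.card F * pderiv i (f - g)) + ∑ i, X i * pderiv i f := by
        have : f * k = ∑ i, (X i ^ Fintype.card F - X i) * pderiv i f := by rw [← hk]
        simp only [hG, Fin.sum_univ_two, map_sub] at this ⊢
        linear_combination -this
      have hlt : (G - g * k1).totalDegree < q ^ 2 + q := by
        rw [hid]
        have t1 : (g * (k - k1)).totalDegree < q ^ 2 + q :=
          (totalDegree_mul _ _).trans_lt (by omega)
        have t2 : ((f - g) * k).totalDegree < q ^ 2 + q :=
          (totalDegree_mul _ _).trans_lt (by omega)
        have t3 : (∑ i, X i ^ Fintype.card F * pderiv i (f - g)).totalDegree < q ^ 2 + q := by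
          refine Nat.lt_of_le_pred (by omega) (totalDegree_finsetSum_le fun i _ => ?_)
          refine (totalDegree_mul _ _).trans ?_
          have := totalDegree_pderiv_le' (f - g) i
          rw [totalDegree_X_pow, hcard, Nat.pred_eq_sub_one]
          omega
        have t4 : (∑ i, X i * pderiv i f).totalDegree < q ^ 2 + q := by
          refine Nat.lt_of_le_pred (by omega) (totalDegree_finsetSum_le fun i _ => ?_)
          refine (totalDegree_mul _ _).trans ?_
          have := hpd i
          rw [totalDegree_X, Nat.pred_eq_sub_one]
          omega
        refine (totalDegree_add _ _).trans_lt (max_lt ?_ t4)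
        refine (totalDegree_sub _ _).trans_lt (max_lt ?_ t3)
        exact (totalDegree_add _ _).trans_lt (max_lt t1 t2)
      have hz : G - g * k1 = 0 := by
        by_contra hne
        have := (hGh.sub hgk).totalDegree hne
        omega
      exact sub_eq_zero.1 hz
    have hb := bezout f h (q + 1) (q ^ 2 + q) hprime hfd hhd hnd (by
      intro x hx
      constructor
      · simp [hh, FiniteField.pow_card]
      · intro i
        have hC : ((Fintype.card F : ℕ) : MvPolynomial (Fin 2) F) = 0 := by
          rw [← map_natCast (C : F →+* MvPolynomial (Fin 2) F), hQ0, map_zero]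
        rw [hh, Fin.sum_univ_two]
        fin_cases i <;>
        simp [Derivation.leibniz, Derivation.leibniz_pow, FiniteField.pow_card, pderiv_X, hC])
    nlinarith

lemma mv_eval_aeval {F : Type} [Field F] {n m : ℕ} (g : Fin n → MvPolynomial (Fin m) F)
    (p : MvPolynomial (Fin n) F) (x : Fin m → F) :
    eval x (aeval g p) = eval (fun i => eval x (g i)) p := by
  have := MvPolynomial.comp_aeval_apply (R := F) (f := g) (aeval x) p
  simpa [MvPolynomial.coe_aeval_eq_eval] using this

lemma eval_smul_homog {F : Type} [Field F] {n : ℕ} {d : ℕ} (p : MvPolynomial (Fin n) F)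
    (hp : p.IsHomogeneous d) (c : F) (x : Fin n → F) :
    eval (c • x) p = c ^ d * eval x p := by
  rw [eval_eq, eval_eq, Finset.mul_sum]
  refine Finset.sum_congr rfl fun m hm => ?_
  have hm1 : m.degree = d := by
    by_contra h
    exact (MvPolynomial.mem_support_iff.1 hm) (hp.coeff_eq_zero h)
  have h2 : ∏ i ∈ m.support, c ^ m i = c ^ d := by
    rw [Finset.prod_pow_eq_pow_sum, ← hm1]; rfl
  simp only [Pi.smul_apply, smul_eq_mul, mul_pow, Finset.prod_mul_distrib, h2]
  ring

/-- `b` has degree at most `k` and `a` agrees with `b` up to terms of degree less than `k`. -/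
def TopAgree {F : Type} [Field F] {m : ℕ} (k : ℕ) (a b : MvPolynomial (Fin m) F) : Prop :=
  b.totalDegree ≤ k ∧ (a = b ∨ (a - b).totalDegree < k)

lemma TopAgree.left {F : Type} [Field F] {m k : ℕ} {a b : MvPolynomial (Fin m) F}
    (h : TopAgree k a b) : a.totalDegree ≤ k := by
  obtain ⟨h1, rfl | h2⟩ := h
  · exact h1
  · have : a = (a - b) + b := by ring
    rw [this]
    exact (totalDegree_add _ _).trans (max_le h2.le h1)

lemma TopAgree.mul {F : Type} [Field F] {m k l : ℕ} {a b a' b' : MvPolynomial (Fin m) F}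
    (h : TopAgree k a b) (h' : TopAgree l a' b') : TopAgree (k + l) (a * a') (b * b') := by
  refine ⟨(totalDegree_mul _ _).trans (add_le_add h.1 h'.1), ?_⟩
  have hid : a * a' - b * b' = (a - b) * a' + b * (a' - b') := by ring
  have hl' := h'.left
  have t1 := totalDegree_mul (a - b) a'
  have t2 := totalDegree_mul b (a' - b')
  have hb := h.1
  rcases h.2 with e1 | e1 <;> rcases h'.2 with e2 | e2
  · left; rw [e1, e2]
  · right
    rw [hid, e1, sub_self, zero_mul, zero_add]
    omega
  · right
    rw [hid, e2, sub_self, mul_zero, add_zero]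
    rw [e2] at t1
    have := h'.1
    omega
  · right
    rw [hid]
    exact (totalDegree_add _ _).trans_lt (max_lt (by omega) (by omega))

lemma TopAgree.one {F : Type} [Field F] {m : ℕ} :
    TopAgree 0 (1 : MvPolynomial (Fin m) F) 1 := ⟨by simp, Or.inl rfl⟩

lemma TopAgree.pow {F : Type} [Field F] {m k : ℕ} {a b : MvPolynomial (Fin m) F}
    (h : TopAgree k a b) (j : ℕ) : TopAgree (j * k) (a ^ j) (b ^ j) := by
  induction j with
  | zero => simpa using TopAgree.one
  | succ j ih =>
    rw [pow_succ, pow_succ, Nat.succ_mul]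
    exact ih.mul h

lemma TopAgree.prod {F : Type} [Field F] {m : ℕ} {ι : Type} (s : Finset ι) (k : ι → ℕ)
    (a b : ι → MvPolynomial (Fin m) F) (h : ∀ i ∈ s, TopAgree (k i) (a i) (b i)) :
    TopAgree (∑ i ∈ s, k i) (∏ i ∈ s, a i) (∏ i ∈ s, b i) := by
  classical
  induction s using Finset.induction_on with
  | empty => simpa using TopAgree.one
  | insert i s hi ih =>
    rw [Finset.sum_insert hi, Finset.prod_insert hi, Finset.prod_insert hi]
    exact (h i (Finset.mem_insert_self _ _)).mul
      (ih fun j hj => h j (Finset.mem_insert_of_mem hj))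

lemma subst_top {F : Type} [Field F] {n m d : ℕ} (f : MvPolynomial (Fin n) F) (hd : 0 < d)
    (hf : f.IsHomogeneous d) (a b : Fin n → MvPolynomial (Fin m) F)
    (hab : ∀ i, TopAgree 1 (a i) (b i)) :
    (aeval a f - aeval b f).totalDegree < d := by
  have h1 : aeval a f - aeval b f = ∑ s ∈ f.support,
      C (coeff s f) * (∏ i ∈ s.support, a i ^ s i - ∏ i ∈ s.support, b i ^ s i) := by
    rw [aeval_def, aeval_def, eval₂_eq, eval₂_eq, ← Finset.sum_sub_distrib]
    refine Finset.sum_congr rfl fun s _ => ?_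
    rw [MvPolynomial.algebraMap_eq, mul_sub]
  rw [h1]
  refine Nat.lt_of_le_pred hd (totalDegree_finsetSum_le fun s hs => ?_)
  have hm1 : s.degree = d := by
    by_contra h
    exact (MvPolynomial.mem_support_iff.1 hs) (hf.coeff_eq_zero h)
  have h2 := TopAgree.prod s.support (fun i => s i * 1) (fun i => a i ^ s i) (fun i => b i ^ s i)
    (fun i _ => (hab i).pow (s i))
  have h3 : ∑ i ∈ s.support, s i * 1 = d := by
    simp only [mul_one]; exact hm1
  rw [h3] at h2
  refine (totalDegree_mul _ _).trans ?_
  rw [totalDegree_C, zero_add]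
  rcases h2.2 with e | e
  · rw [e, sub_self]; simp
  · exact Nat.le_pred_of_lt e

lemma proj_count {F V : Type} [Field F] [Fintype F] [AddCommGroup V] [Module F V] [Finite V]
    (A : Set (Projectivization F V)) :
    Nat.card {v : V // ∃ h : v ≠ 0, Projectivization.mk F v h ∈ A} =
      A.ncard * (Fintype.card F - 1) := by
  classical
  have hmk : ∀ (P : Projectivization F V) (c : Fˣ) (h : c • P.rep ≠ 0),
      Projectivization.mk F (c • P.rep) h = P := by
    intro P c h
    conv_rhs => rw [← P.mk_rep]
    rw [Projectivization.mk_eq_mk_iff]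
    exact ⟨c, rfl⟩
  have hne : ∀ (P : Projectivization F V) (c : Fˣ), c • P.rep ≠ 0 := fun P c =>
    (smul_ne_zero_iff_ne c).2 P.rep_nonzero
  let φ : A × Fˣ → {v : V // ∃ h : v ≠ 0, Projectivization.mk F v h ∈ A} := fun x =>
    ⟨x.2 • x.1.1.rep, hne _ _, by rw [hmk]; exact x.1.2⟩
  have hφ : Function.Bijective φ := by
    constructor
    · rintro ⟨⟨P, hP⟩, c⟩ ⟨⟨P', hP'⟩, c'⟩ h
      have h1 : c • P.rep = c' • P'.rep := congrArg Subtype.val h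
      have h2 : P = P' := by
        rw [← hmk P c (hne _ _), ← hmk P' c' (hne _ _)]
        congr 1
      subst h2
      have h3 : c = c' := by
        have : (c : F) • P.rep = (c' : F) • P.rep := h1
        exact Units.ext (smul_left_injective F P.rep_nonzero this)
      rw [h3]
    · rintro ⟨v, hv, hA⟩
      obtain ⟨a, ha⟩ := Projectivization.exists_smul_eq_mk_rep F v hv
      refine ⟨(⟨_, hA⟩, a⁻¹), ?_⟩
      apply Subtype.ext
      change a⁻¹ • (Projectivization.mk F v hv).rep = v
      rw [← ha, inv_smul_smul]
  rw [← Nat.card_congr (Equiv.ofBijective φ hφ), Nat.card_prod, Nat.card_units,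
    Nat.card_eq_fintype_card (α := F)]
  rfl

/-- A coset of a two-dimensional space missing the hypersurface has at most `q^3` zeros. -/
lemma coset_bound {F : Type} [Field F] [Fintype F] (q : ℕ) (hq2 : 2 < q)
    (hcard : Fintype.card F = q ^ 2) {n : ℕ} (f : MvPolynomial (Fin n) F)
    (hf : f.IsHomogeneous (q + 1)) (u₁ u₂ : Fin n → F)
    (hu : ∀ s t : F, eval (s • u₁ + t • u₂) f = 0 → s = 0 ∧ t = 0) (b : Fin n → F) :
    Nat.card {x : Fin 2 → F // eval (b + (x 0 • u₁ + x 1 • u₂)) f = 0} ≤ q ^ 3 := by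
  classical
  let l : Fin n → MvPolynomial (Fin 2) F := fun i => C (u₁ i) * X 0 + C (u₂ i) * X 1
  let l' : Fin n → MvPolynomial (Fin 2) F := fun i => C (b i) + l i
  have hl : ∀ i, (l i).IsHomogeneous 1 := fun i =>
    (isHomogeneous_C_mul_X _ _).add (isHomogeneous_C_mul_X _ _)
  have hg : (aeval l f).IsHomogeneous (q + 1) := by
    simpa using hf.aeval l hl
  have hr : (aeval l' f - aeval l f).totalDegree < q + 1 := by
    refine subst_top f (by omega) hf _ _ fun i => ⟨(hl i).totalDegree_le, Or.inr ?_⟩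
    simp [l']
  have ev : ∀ x, eval x (aeval l f) = eval (x 0 • u₁ + x 1 • u₂) f := by
    intro x
    rw [mv_eval_aeval]
    congr 2
    ext i
    simp [l]; ring
  have ev' : ∀ x, eval x (aeval l' f) = eval (b + (x 0 • u₁ + x 1 • u₂)) f := by
    intro x
    rw [mv_eval_aeval]
    congr 2
    ext i
    simp [l', l]; ring
  have key := plane_bound q hq2 hcard (aeval l' f) (aeval l f) hg hr (by
    intro x hx h0
    rw [ev] at h0
    obtain ⟨h1, h2⟩ := hu _ _ h0
    apply hx
    ext i
    fin_cases i
    · exact h1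
    · exact h2) (by
    intro a v hv
    by_contra hall
    push Not at hall
    set c := b + (a 0 • u₁ + a 1 • u₂) with hc
    set w := v 0 • u₁ + v 1 • u₂ with hw
    have hcw : ∀ t : F, eval (c + t • w) f = 0 := by
      intro t
      have := hall t
      rw [ev'] at this
      rw [← this]
      congr 2
      rw [hc, hw]
      simp only [Pi.add_apply, Pi.smul_apply, smul_eq_mul]
      module
    have hw0 : eval w f ≠ 0 := by
      intro h0
      obtain ⟨h1, h2⟩ := hu _ _ h0
      apply hv
      ext i
      fin_cases i
      · exact h1
      · exact h2
    have hlc := line_card f (q + 1) hf.totalDegree_le w c 0 (by simpa using hw0)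
    have hge : Fintype.card F - 1 ≤ Nat.card {t : F // eval (w + t • c) f = 0} := by
      rw [Nat.card_eq_fintype_card, Fintype.card_subtype, ← Finset.card_univ,
        ← Finset.card_erase_of_mem (Finset.mem_univ (0 : F))]
      refine Finset.card_le_card fun t ht => ?_
      have ht0 : t ≠ 0 := (Finset.mem_erase.1 ht).1
      simp only [Finset.mem_filter, Finset.mem_univ, true_and]
      have : w + t • c = t • (c + t⁻¹ • w) := by
        rw [smul_add t c, smul_smul, mul_inv_cancel₀ ht0, one_smul, add_comm]
      rw [this, eval_smul_homog f hf, hcw, mul_zero]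
    rw [hcard] at hge
    have : 3 * q ≤ q ^ 2 := by nlinarith
    omega)
  simpa only [ev'] using key

/-- A subspace of dimension four with few zeros contains a zero-free two-dimensional subspace. -/
lemma exists_external_line {F : Type} [Field F] [Fintype F] {n d : ℕ} (hd : 0 < d)
    (f : MvPolynomial (Fin n) F) (hf : f.IsHomogeneous d) (W : Submodule F (Fin n → F))
    (hW : finrank F W = 4)
    (hc : Nat.card {v : Fin n → F // (v ≠ 0 ∧ eval v f = 0) ∧ v ∈ W} + 1 < Fintype.card F ^ 3) :
    ∃ u₁ ∈ W, ∃ u₂ ∈ W, ∀ s t : F, eval (s • u₁ + t • u₂) f = 0 → s = 0 ∧ t = 0 := by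
  classical
  set Q := Fintype.card F with hQ
  have hQ1 : 1 < Q := Fintype.one_lt_card
  have hWc : (Finset.univ.filter (fun v : Fin n → F => v ∈ W)).card = Q ^ 4 := by
    rw [← Fintype.card_subtype, ← Nat.card_eq_fintype_card, hQ, ← hW,
      ← Nat.card_eq_fintype_card (α := F)]
    exact Module.natCard_eq_pow_finrank
  set Z := Finset.univ.filter (fun v : Fin n → F => (v ≠ 0 ∧ eval v f = 0) ∧ v ∈ W) with hZ
  rw [Nat.card_eq_fintype_card, Fintype.card_subtype, ← hZ] at hc
  have hf00 : eval (0 : Fin n → F) f = 0 := by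
    have := eval_smul_homog f hf 0 0
    rw [zero_smul, zero_pow hd.ne', zero_mul] at this
    exact this
  obtain ⟨w, hwW, hw⟩ : ∃ w ∈ W, eval w f ≠ 0 := by
    by_contra hall
    push Not at hall
    have : (Finset.univ.filter (fun v : Fin n → F => v ∈ W)) ⊆ insert 0 Z := by
      intro v hv
      have hv' : v ∈ W := by simpa using hv
      by_cases h0 : v = 0
      · simp [h0]
      · simp [hZ, h0, hv', hall v hv']
    have := (Finset.card_le_card this).trans (Finset.card_insert_le _ _)
    have h34 : Q ^ 3 ≤ Q ^ 4 := Nat.pow_le_pow_right (by omega) (by omega)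
    omega
  have hw0 : w ≠ 0 := by rintro rfl; exact hw hf00
  set M := Finset.univ.filter (fun v : Fin n → F => v ∈ W ∧ v ∉ Submodule.span F {w}) with hM
  have hMc : M.card + Q = Q ^ 4 := by
    rw [← hWc]
    have hs : (Finset.univ.filter (fun v : Fin n → F => v ∈ Submodule.span F {w})).card = Q := by
      rw [← Fintype.card_subtype, ← Nat.card_eq_fintype_card]
      have := Module.natCard_eq_pow_finrank (K := F) (V := Submodule.span F {w})
      rw [finrank_span_singleton hw0, pow_one, Nat.card_eq_fintype_card (α := F)] at this
      exact this
    rw [← hs, ← Finset.card_union_of_disjoint]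
    · congr 1
      ext v
      have : v ∈ Submodule.span F {w} → v ∈ W := fun h =>
        (Submodule.span_singleton_le_iff_mem _ _).2 hwW h
      simp [hM]
      tauto
    · rw [Finset.disjoint_left]
      intro v hv hv'
      simp [hM] at hv hv'
      exact hv.2 hv'
  have hspan : ∀ t : F, t • w ∈ Submodule.span F {w} := fun t =>
    Submodule.smul_mem _ _ (Submodule.mem_span_singleton_self w)
  obtain ⟨u, hu, hu0⟩ : ∃ u ∈ M, ∀ t : F, eval (u + t • w) f ≠ 0 := by
    by_contra hall
    push Not at hall
    have h1 : M.card ≤ ∑ t : F, (M.filter (fun v => eval (v + t • w) f = 0)).card := by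
      rw [← Finset.card_sigma]
      refine Finset.card_le_card_of_surjOn (fun x => x.2) ?_
      intro v hv
      obtain ⟨t, ht⟩ := hall v hv
      refine ⟨⟨t, v⟩, ?_, rfl⟩
      simpa [ht] using hv
    have h2 : ∀ t : F, (M.filter (fun v => eval (v + t • w) f = 0)).card ≤ Z.card := by
      intro t
      refine Finset.card_le_card_of_injOn (fun v => v + t • w) ?_ ?_
      · intro v hv
        simp only [hM, Finset.coe_filter, Finset.mem_filter, Finset.mem_univ, true_and,
          Set.mem_setOf_eq] at hv
        simp only [hZ, Finset.coe_filter, Finset.mem_univ, true_and, Set.mem_setOf_eq]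
        refine ⟨⟨?_, hv.2⟩, W.add_mem hv.1.1 (W.smul_mem _ hwW)⟩
        intro h0
        apply hv.1.2
        rw [eq_neg_of_add_eq_zero_left h0]
        exact Submodule.neg_mem _ (hspan t)
      · intro a _ b _ h
        exact add_right_cancel h
    have h3 := h1.trans (Finset.sum_le_sum fun t _ => h2 t)
    simp only [Finset.sum_const, Finset.card_univ, smul_eq_mul, ← hQ] at h3
    have h4 : Q * (Z.card + 2) ≤ Q * Q ^ 3 := Nat.mul_le_mul_left _ hc
    have h5 : Q * Q ^ 3 = Q ^ 4 := by ring
    nlinarith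
  have huW : u ∈ W := by simp [hM] at hu; exact hu.1
  refine ⟨u, huW, w, hwW, fun s t hst => ?_⟩
  by_cases hs : s = 0
  · subst hs
    rw [zero_smul, zero_add, eval_smul_homog f hf] at hst
    exact ⟨rfl, eq_zero_of_pow_eq_zero ((mul_eq_zero.1 hst).resolve_right hw)⟩
  · exfalso
    have : s • u + t • w = s • (u + (s⁻¹ * t) • w) := by
      rw [smul_add, smul_smul, mul_inv_cancel_left₀ hs]
    rw [this, eval_smul_homog f hf] at hst
    exact hu0 _ ((mul_eq_zero.1 hst).resolve_left (pow_ne_zero _ hs))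

lemma outside_bound {F : Type} [Field F] [Fintype F] (q : ℕ) (hq2 : 2 < q)
    (hcard : Fintype.card F = q ^ 2) (f : MvPolynomial (Fin 7) F)
    (hf : f.IsHomogeneous (q + 1)) (W : Submodule F (Fin 7 → F)) (hW : finrank F W = 4)
    (u₁ u₂ : Fin 7 → F) (h₁ : u₁ ∈ W) (h₂ : u₂ ∈ W)
    (hu : ∀ s t : F, eval (s • u₁ + t • u₂) f = 0 → s = 0 ∧ t = 0) :
    q ^ 4 * Nat.card {v : Fin 7 → F // eval v f = 0 ∧ v ∉ W} + q ^ 3 * q ^ 8 ≤ q ^ 3 * q ^ 14 := by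
  classical
  set M := Finset.univ.filter (fun v : Fin 7 → F => v ∉ W) with hM
  have hMc : M.card + q ^ 8 = q ^ 14 := by
    have hWc : (Finset.univ.filter (fun v : Fin 7 → F => v ∈ W)).card = q ^ 8 := by
      rw [← Fintype.card_subtype, ← Nat.card_eq_fintype_card,
        show q ^ 8 = (q ^ 2) ^ 4 by ring, ← hcard, ← hW, ← Nat.card_eq_fintype_card (α := F)]
      exact Module.natCard_eq_pow_finrank
    have := Finset.card_filter_add_card_filter_not (s := (Finset.univ : Finset (Fin 7 → F)))
      (fun v => v ∈ W)
    rw [hWc, Finset.card_univ, Fintype.card_fun, hcard, Fintype.card_fin] at this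
    rw [hM]
    rw [show q ^ 14 = (q ^ 2) ^ 7 by ring, ← this]
    ring
  set N := Nat.card {v : Fin 7 → F // eval v f = 0 ∧ v ∉ W} with hN
  have hx : ∀ x : Fin 2 → F, x 0 • u₁ + x 1 • u₂ ∈ W := fun x =>
    W.add_mem (W.smul_mem _ h₁) (W.smul_mem _ h₂)
  have hA : ∀ x : Fin 2 → F,
      (M.filter (fun v => eval (v + (x 0 • u₁ + x 1 • u₂)) f = 0)).card = N := by
    intro x
    rw [hN, Nat.card_eq_fintype_card, Fintype.card_subtype]
    refine Finset.card_bij (fun v _ => v + (x 0 • u₁ + x 1 • u₂)) ?_ ?_ ?_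
    · intro v hv
      simp only [hM, Finset.mem_filter, Finset.mem_univ, true_and] at hv ⊢
      exact ⟨hv.2, fun h => hv.1 ((W.add_mem_iff_left (hx x)).1 h)⟩
    · intro a _ b _ h
      exact add_right_cancel h
    · intro v hv
      simp only [Finset.mem_filter, Finset.mem_univ, true_and] at hv
      refine ⟨v - (x 0 • u₁ + x 1 • u₂), ?_, by simp⟩
      simp only [hM, Finset.mem_filter, Finset.mem_univ, true_and, sub_add_cancel]
      exact ⟨fun h => hv.2 ((W.sub_mem_iff_left (hx x)).1 h), hv.1⟩
  have hswap : ∑ x : Fin 2 → F, (M.filter (fun v => eval (v + (x 0 • u₁ + x 1 • u₂)) f = 0)).card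
      = ∑ v ∈ M, (Finset.univ.filter
        (fun x : Fin 2 → F => eval (v + (x 0 • u₁ + x 1 • u₂)) f = 0)).card := by
    simp only [Finset.card_filter]
    exact Finset.sum_comm
  have hB : ∑ v ∈ M, (Finset.univ.filter
        (fun x : Fin 2 → F => eval (v + (x 0 • u₁ + x 1 • u₂)) f = 0)).card ≤ M.card * q ^ 3 := by
    rw [← smul_eq_mul]
    refine Finset.sum_le_card_nsmul _ _ _ fun v _ => ?_
    have := coset_bound q hq2 hcard f hf u₁ u₂ hu v
    rwa [Nat.card_eq_fintype_card, Fintype.card_subtype] at this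
  rw [← hswap, Finset.sum_congr rfl (fun x _ => hA x), Finset.sum_const, Finset.card_univ,
    Fintype.card_fun, hcard, Fintype.card_fin, smul_eq_mul] at hB
  rw [← hMc]
  nlinarith

theorem stmt_0 (q : ℕ) (hq : ∃ p k : ℕ, p.Prime ∧ 0 < k ∧ q = p ^ k) (hq2 : 2 < q)
    (F : Type) [Field F] [Fintype F] (hcardF : Fintype.card F = q ^ 2)
    (f : MvPolynomial (Fin 7) F) (hf0 : f ≠ 0) (hfdeg : f.IsHomogeneous (q + 1))
    (S : Set (Projectivization F (Fin 7 → F))) (hS : S = hypersurfacePts f)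
    (hnosolid : ¬ ∃ W : Submodule F (Fin 7 → F), Module.finrank F W = 4 ∧ projPts W ⊆ S)
    (hcardS : S.ncard = q ^ 11 + q ^ 9 + q ^ 7 + q ^ 4 + q ^ 2 + 1) :
    ∀ W : Submodule F (Fin 7 → F), Module.finrank F W = 4 →
      q ^ 4 + q ^ 2 + 1 ≤ (S ∩ projPts W).ncard := by
  classical
  intro W hW
  by_contra hlt
  push Not at hlt
  have hmemS : ∀ (v : Fin 7 → F) (hv : v ≠ 0),
      Projectivization.mk F v hv ∈ S ↔ eval v f = 0 := by
    intro v hv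
    obtain ⟨a, ha⟩ := Projectivization.exists_smul_eq_mk_rep F v hv
    rw [hS]
    change eval (Projectivization.mk F v hv).rep f = 0 ↔ _
    rw [← ha]
    change eval ((a : F) • v) f = 0 ↔ _
    rw [eval_smul_homog f hfdeg]
    simp
  have hmemW : ∀ (v : Fin 7 → F) (hv : v ≠ 0),
      Projectivization.mk F v hv ∈ projPts W ↔ v ∈ W := by
    intro v hv
    change (Projectivization.mk F v hv).submodule ≤ W ↔ _
    rw [Projectivization.submodule_mk, Submodule.span_singleton_le_iff_mem]
  have c1 := proj_count S
  have c2 := proj_count (S ∩ projPts W)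
  have e1 : Nat.card {v : Fin 7 → F // ∃ h : v ≠ 0, Projectivization.mk F v h ∈ S} =
      Nat.card {v : Fin 7 → F // v ≠ 0 ∧ eval v f = 0} := by
    refine Nat.card_congr (Equiv.subtypeEquivRight fun v => ?_)
    constructor
    · rintro ⟨h, h'⟩; exact ⟨h, (hmemS v h).1 h'⟩
    · rintro ⟨h, h'⟩; exact ⟨h, (hmemS v h).2 h'⟩
  have e2 : Nat.card {v : Fin 7 → F // ∃ h : v ≠ 0, Projectivization.mk F v h ∈ S ∩ projPts W} =
      Nat.card {v : Fin 7 → F // (v ≠ 0 ∧ eval v f = 0) ∧ v ∈ W} := by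
    refine Nat.card_congr (Equiv.subtypeEquivRight fun v => ?_)
    constructor
    · rintro ⟨h, h1, h2⟩; exact ⟨⟨h, (hmemS v h).1 h1⟩, (hmemW v h).1 h2⟩
    · rintro ⟨⟨h, h1⟩, h2⟩; exact ⟨h, (hmemS v h).2 h1, (hmemW v h).2 h2⟩
  rw [e1, hcardS] at c1
  rw [e2] at c2
  have e3 : Nat.card {v : Fin 7 → F // v ≠ 0 ∧ eval v f = 0} =
      Nat.card {v : Fin 7 → F // (v ≠ 0 ∧ eval v f = 0) ∧ v ∈ W} +
      Nat.card {v : Fin 7 → F // eval v f = 0 ∧ v ∉ W} := by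
    simp only [Nat.card_eq_fintype_card, Fintype.card_subtype]
    rw [← Finset.card_filter_add_card_filter_not (fun v => v ∈ W), Finset.filter_filter,
      Finset.filter_filter]
    congr 2
    ext v
    simp only [Finset.mem_filter, Finset.mem_univ, true_and]
    constructor
    · rintro ⟨⟨_, h⟩, h'⟩; exact ⟨h, h'⟩
    · rintro ⟨h, h'⟩; exact ⟨⟨by rintro rfl; exact h' W.zero_mem, h⟩, h'⟩
  set x := (S ∩ projPts W).ncard with hx
  obtain ⟨r, hr⟩ : ∃ r, q ^ 2 = r + 1 := ⟨q ^ 2 - 1, by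
    have : 1 ≤ q ^ 2 := Nat.one_le_pow _ _ (by omega)
    omega⟩
  have hr1 : 1 ≤ r := by nlinarith
  rw [hcardF, show q ^ 2 - 1 = r by omega] at c1 c2
  have hq4 : q ^ 4 = (r + 1) ^ 2 := by rw [← hr]; ring
  obtain ⟨u₁, h₁, u₂, h₂, hu⟩ := exists_external_line (d := q + 1) (by omega) f hfdeg W hW (by
    rw [c2, hcardF, hr]
    rw [hr, hq4] at hlt
    have : x * r ≤ ((r + 1) ^ 2 + (r + 1)) * r := Nat.mul_le_mul_right _ (by omega)
    nlinarith)
  have hout := outside_bound q hq2 hcardF f hfdeg W hW u₁ u₂ h₁ h₂ hu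
  set N := Nat.card {v : Fin 7 → F // eval v f = 0 ∧ v ∉ W} with hN
  have h6 : (q ^ 11 + q ^ 9 + q ^ 7 + 1) * r ≤ N := by
    have h7 : x * r ≤ (q ^ 4 + q ^ 2) * r := Nat.mul_le_mul_right _ (by omega)
    have h8 : (q ^ 11 + q ^ 9 + q ^ 7 + q ^ 4 + q ^ 2 + 1) * r =
      (q ^ 11 + q ^ 9 + q ^ 7 + 1) * r + (q ^ 4 + q ^ 2) * r := by ring
    omega
  have h9 := Nat.mul_le_mul_left (q ^ 4) h6
  have h10 : q ^ 4 * ((q ^ 11 + q ^ 9 + q ^ 7 + 1) * r) + q ^ 3 * q ^ 8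
      = q ^ 3 * q ^ 14 + q ^ 4 * r := by
    have hz : (r : ℤ) = (q : ℤ) ^ 2 - 1 := by
      have : ((q ^ 2 : ℕ) : ℤ) = ((r + 1 : ℕ) : ℤ) := by rw [hr]
      push_cast at this
      linarith
    zify
    rw [hz]
    ring
  have h11 : 0 < q ^ 4 * r := by positivity
  omega
end

section
/- Let q be a prime power with q > 2 and let S be an algebraic hypersurface of PG(6,q^2) of degree q+1 defined over GF(q^2), not containing any solid, whose number of GF(q^2)-rational points equals q^11 + q^9 + q^7 + q^4 + q^2 + 1. If there exists at least one solid Sigma_3 of PG(6,q^2) such that |Sigma_3 ∩ S| = q^4 + q^2 + 1, then S is a non-singular Hermitian variety H(6,q^2) of PG(6,q^2). -/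
open MvPolynomial Module

/-- `S` is a non-singular Hermitian variety of `PG(n-1, q²)`: the set of points `⟨v⟩`
with `vᵀ M v^(q) = 0` for an invertible matrix `M` with `Mᵀ` the entrywise `q`-th
power of `M`. -/
def IsNonsingularHermitian (q : ℕ) {F : Type} [Field F] {n : ℕ}
    (S : Set (Projectivization F (Fin n → F))) : Prop :=
  ∃ M : Matrix (Fin n) (Fin n) F, IsUnit M.det ∧ M.transpose = M.map (· ^ q) ∧
    S = {P | ∑ i, ∑ j, P.rep i * M i j * (P.rep j) ^ q = 0}

namespace Herm

/-- The univariate polynomial `f(x + T y)`. -/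
noncomputable def uni {F : Type} [Field F] {n : ℕ} (f : MvPolynomial (Fin n) F)
    (x y : Fin n → F) : Polynomial F :=
  aeval (fun i => Polynomial.C (x i) + Polynomial.C (y i) * Polynomial.X) f

/-- The derivative of `f` at `x` in direction `y`. -/
noncomputable def dd {F : Type} [Field F] {n : ℕ} (f : MvPolynomial (Fin n) F)
    (x y : Fin n → F) : F :=
  ∑ i, y i * eval x (pderiv i f)

section
variable {F : Type} [Field F] {n : ℕ} (f : MvPolynomial (Fin n) F)

lemma eval_uni (x y : Fin n → F) (t : F) :
    (uni f x y).eval t = eval (x + t • y) f := by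
  induction f using MvPolynomial.induction_on with
  | C a =>
    rw [uni, aeval_C, eval_C, Polynomial.algebraMap_apply, Polynomial.eval_C]; rfl
  | add p r hp hr => simp only [uni, map_add, Polynomial.eval_add] at *; rw [hp, hr]
  | mul_X p i hp =>
    simp only [uni, map_mul, Polynomial.eval_mul, aeval_X, eval_X] at *
    rw [hp]; simp only [Polynomial.eval_add, Polynomial.eval_mul, Polynomial.eval_C, Polynomial.eval_X, Pi.add_apply, Pi.smul_apply, smul_eq_mul]
    rw [mul_comm (y i) t]

lemma natDegree_uni_le {d : ℕ} (hf : f.totalDegree ≤ d) (x y : Fin n → F) :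
    (uni f x y).natDegree ≤ d := by
  have := MvPolynomial.aeval_natDegree_le f hf
    (fun i => Polynomial.C (x i) + Polynomial.C (y i) * Polynomial.X) (n := 1)
    (fun i => by compute_degree)
  simpa [uni] using this

lemma derivative_aeval (g : Fin n → Polynomial F) :
    Polynomial.derivative (aeval g f) =
      ∑ i, aeval g (pderiv i f) * Polynomial.derivative (g i) := by
  induction f using MvPolynomial.induction_on with
  | C a => simp
  | add p r hp hr => simp [hp, hr, add_mul, Finset.sum_add_distrib]
  | mul_X p i hp =>
    simp only [map_mul, aeval_X, Polynomial.derivative_mul, hp, Derivation.leibniz, pderiv_X,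
      smul_eq_mul, map_add, add_mul, Finset.sum_add_distrib]
    rw [add_comm]
    congr 1
    · rw [Finset.sum_eq_single i]
      · simp
      · intro b _ hb
        simp [hb]
      · simp
    · rw [Finset.sum_mul]
      exact Finset.sum_congr rfl (fun j _ => by ring)

lemma uni_coeff_zero (x y : Fin n → F) : (uni f x y).coeff 0 = eval x f := by
  rw [Polynomial.coeff_zero_eq_eval_zero, eval_uni]; simp

lemma uni_coeff_one (x y : Fin n → F) : (uni f x y).coeff 1 = dd f x y := by
  have h : (uni f x y).coeff 1 = (Polynomial.derivative (uni f x y)).eval 0 := by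
    rw [← Polynomial.coeff_zero_eq_eval_zero, Polynomial.coeff_derivative]; simp
  rw [h, uni, derivative_aeval, Polynomial.eval_finsetSum, dd]
  refine Finset.sum_congr rfl (fun i _ => ?_)
  have := eval_uni (pderiv i f) x y 0
  rw [uni] at this
  rw [Polynomial.eval_mul, this, mul_comm, zero_smul, add_zero]
  congr 1
  simp

lemma dd_add (x y z : Fin n → F) : dd f x (y + z) = dd f x y + dd f x z := by
  simp [dd, add_mul, Finset.sum_add_distrib]

lemma dd_smul (x y : Fin n → F) (t : F) : dd f x (t • y) = t * dd f x y := by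
  simp [dd, Finset.mul_sum, mul_assoc]

lemma dd_sub (x y z : Fin n → F) : dd f x (y - z) = dd f x y - dd f x z := by
  simp [dd, sub_mul, Finset.sum_sub_distrib]

variable {f}

lemma eval_smul' {d : ℕ} (hf : f.IsHomogeneous d) (t : F) (x : Fin n → F) :
    eval (t • x) f = t ^ d * eval x f := by
  rw [MvPolynomial.eval_eq, MvPolynomial.eval_eq, Finset.mul_sum]
  refine Finset.sum_congr rfl (fun e he => ?_)
  have h1 := hf.degree_eq_sum_deg_support he
  have : ∏ i, (t • x) i ^ e i = t ^ d * ∏ i, x i ^ e i := by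
    simp only [Pi.smul_apply, smul_eq_mul, mul_pow, Finset.prod_mul_distrib,
      Finset.prod_pow_eq_pow_sum]
    congr 2
    rw [h1]
    symm
    refine Finset.sum_subset (Finset.subset_univ _) (fun i _ hi => by simpa using hi)
  have h3 : ∀ z : Fin n → F, ∏ i ∈ e.support, z i ^ e i = ∏ i, z i ^ e i := fun z =>
    Finset.prod_subset (Finset.subset_univ _) (fun i _ hi => by
      have : e i = 0 := by simpa using hi
      simp [this])
  rw [h3, h3, this]
  ring

lemma dd_self {d : ℕ} (hf : f.IsHomogeneous d) (x : Fin n → F) :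
    dd f x x = d * eval x f := by
  have := congrArg (eval x) hf.sum_X_mul_pderiv
  simpa [dd] using this

/-- a polynomial with many zeros vanishes -/
lemma poly_eq_of_ne [Fintype F] {p r : Polynomial F} {a : F} (hp : p.natDegree + 1 < Fintype.card F)
    (hr : r.natDegree + 1 < Fintype.card F) (h : ∀ t, t ≠ a → p.eval t = r.eval t) : p = r := by
  classical
  refine Polynomial.eq_of_degree_sub_lt_of_eval_finset_eq (Finset.univ.erase a) ?_ ?_
  · rw [Finset.card_erase_of_mem (Finset.mem_univ _), Finset.card_univ]
    have h1 : (p - r).natDegree ≤ max p.natDegree r.natDegree := Polynomial.natDegree_sub_le _ _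
    refine lt_of_le_of_lt Polynomial.degree_le_natDegree ?_
    norm_cast
    omega
  · intro t ht
    exact h t (Finset.ne_of_mem_erase ht)

lemma poly_eq_of_forall [Fintype F] {p r : Polynomial F} (hp : p.natDegree < Fintype.card F)
    (hr : r.natDegree < Fintype.card F) (h : ∀ t, p.eval t = r.eval t) : p = r := by
  classical
  refine Polynomial.eq_of_degree_sub_lt_of_eval_finset_eq (Finset.univ) ?_ ?_
  · rw [Finset.card_univ]
    have h1 : (p - r).natDegree ≤ max p.natDegree r.natDegree := Polynomial.natDegree_sub_le _ _
    refine lt_of_le_of_lt Polynomial.degree_le_natDegree ?_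
    norm_cast
    omega
  · intro t ht
    exact h t 

lemma uni_reflect [Fintype F] {d : ℕ} (hf : f.IsHomogeneous d) (hd : d + 1 < Fintype.card F)
    (x y : Fin n → F) : uni f x y = Polynomial.reflect d (uni f y x) := by
  have hdeg := natDegree_uni_le f hf.totalDegree_le
  refine poly_eq_of_ne (a := 0) ?_ ?_ ?_
  · have := hdeg x y; omega
  · have : (Polynomial.reflect d (uni f y x)).natDegree ≤ d := by
      refine Polynomial.natDegree_le_iff_coeff_eq_zero.2 (fun N hN => ?_)
      rw [Polynomial.coeff_reflect, Polynomial.revAt_eq_self_of_lt hN]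
      exact Polynomial.coeff_eq_zero_of_natDegree_lt (lt_of_le_of_lt (hdeg y x) hN)
    omega
  · intro t ht
    have : Invertible (t⁻¹) := invertibleOfNonzero (inv_ne_zero ht)
    have h2 := Polynomial.eval₂_reflect_mul_pow (RingHom.id F) (t⁻¹) d (uni f y x) (hdeg y x)
    simp only [invOf_eq_inv, inv_inv, Polynomial.eval₂_id] at h2
    have h3 : (Polynomial.reflect d (uni f y x)).eval t = t ^ d * (uni f y x).eval t⁻¹ := by
      rw [← h2, inv_pow]; field_simp
    rw [h3, eval_uni, eval_uni, ← eval_smul' hf]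
    congr 2
    rw [smul_add, smul_smul, mul_inv_cancel₀ ht, one_smul, add_comm]

lemma uni_coeff_top [Fintype F] {d : ℕ} (hf : f.IsHomogeneous d) (hd : d + 1 < Fintype.card F)
    (x y : Fin n → F) : (uni f x y).coeff d = eval y f := by
  rw [uni_reflect hf hd, Polynomial.coeff_reflect, ← uni_coeff_zero f y x]
  simp [Polynomial.revAt_le]

lemma uni_coeff_q [Fintype F] {q : ℕ} (hf : f.IsHomogeneous (q + 1))
    (hd : q + 1 + 1 < Fintype.card F)
    (x y : Fin n → F) : (uni f x y).coeff q = dd f y x := by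
  rw [uni_reflect hf hd, Polynomial.coeff_reflect, ← uni_coeff_one f y x]
  rw [Polynomial.revAt_le (by omega)]
  congr 1
  omega

/-- total degree at most `k` for bivariate polynomials -/
def Good (k : ℕ) (B : Polynomial (Polynomial F)) : Prop :=
  ∀ j, B.coeff j ≠ 0 → (B.coeff j).natDegree + j ≤ k

lemma Good.add {k : ℕ} {A B : Polynomial (Polynomial F)} (hA : Good k A) (hB : Good k B) :
    Good k (A + B) := by
  intro j hj
  rw [Polynomial.coeff_add] at hj ⊢
  by_cases h1 : A.coeff j = 0
  · rw [h1, zero_add] at hj ⊢; exact hB j hj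
  by_cases h2 : B.coeff j = 0
  · rw [h2, add_zero] at hj ⊢; exact hA j hj
  have := Polynomial.natDegree_add_le (A.coeff j) (B.coeff j)
  have := hA j h1
  have := hB j h2
  omega

lemma Good.sum {k : ℕ} {ι : Type*} (s : Finset ι) (A : ι → Polynomial (Polynomial F))
    (hA : ∀ i ∈ s, Good k (A i)) : Good k (∑ i ∈ s, A i) :=
  Finset.sum_induction _ (Good k) (fun _ _ => Good.add) (fun j hj => by simp at hj) hA

lemma Good.mul {k l : ℕ} {A B : Polynomial (Polynomial F)} (hA : Good k A) (hB : Good l B) :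
    Good (k + l) (A * B) := by
  intro j hj
  rw [Polynomial.coeff_mul] at hj ⊢
  have : (∑ x ∈ Finset.HasAntidiagonal.antidiagonal j, A.coeff x.1 * B.coeff x.2).natDegree ≤ k + l - j := by
    refine Polynomial.natDegree_sum_le_of_forall_le _ _ (fun x hx => ?_)
    have hx := Finset.HasAntidiagonal.mem_antidiagonal.1 hx
    by_cases h : A.coeff x.1 = 0
    · simp [h]
    by_cases h' : B.coeff x.2 = 0
    · simp [h']
    have := Polynomial.natDegree_mul_le (p := A.coeff x.1) (q := B.coeff x.2)
    have := hA _ h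
    have := hB _ h'
    omega
  have hjk : j ≤ k + l := by
    obtain ⟨x, hx, hne⟩ := Finset.exists_ne_zero_of_sum_ne_zero hj
    have hx := Finset.HasAntidiagonal.mem_antidiagonal.1 hx
    have := hA _ (left_ne_zero_of_mul hne)
    have := hB _ (right_ne_zero_of_mul hne)
    omega
  omega

lemma Good.one : Good 0 (1 : Polynomial (Polynomial F)) := by
  intro j hj
  rw [Polynomial.coeff_one] at hj ⊢
  split_ifs at hj ⊢ with h
  · simp [h]
  · exact absurd rfl hj

lemma Good.pow {k : ℕ} {A : Polynomial (Polynomial F)} (hA : Good k A) (m : ℕ) :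
    Good (m * k) (A ^ m) := by
  induction m with
  | zero => simpa using Good.one
  | succ m ih => rw [pow_succ, add_mul, one_mul]; exact ih.mul hA

lemma Good.prod {ι : Type*} (s : Finset ι) (A : ι → Polynomial (Polynomial F)) (k : ι → ℕ)
    (hA : ∀ i ∈ s, Good (k i) (A i)) : Good (∑ i ∈ s, k i) (∏ i ∈ s, A i) := by
  classical
  induction s using Finset.induction_on with
  | empty => simpa using Good.one
  | insert a s ha ih =>
    rw [Finset.sum_insert ha, Finset.prod_insert ha]
    exact (hA a (by simp)).mul (ih (fun i hi => hA i (by simp [hi])))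

/-- the coefficient of `X^m` in `f(x + T d + X y)` is a polynomial in `T` of degree at most
`deg f - m`. -/
lemma uni_coeff_poly {d : ℕ} (hf : f.totalDegree ≤ d) (x z y : Fin n → F) (m : ℕ) :
    ∃ e : Polynomial F, e.natDegree ≤ d - m ∧
      ∀ t, e.eval t = (uni f (x + t • z) y).coeff m := by
  have key : ∃ B : Polynomial (Polynomial F), (∀ k, (B.coeff k).natDegree ≤ d - k) ∧
      (∀ k, d < k → B.coeff k = 0) ∧
      ∀ t, B.map (Polynomial.evalRingHom t) = uni f (x + t • z) y := by
    let g : Fin n → Polynomial (Polynomial F) := fun i =>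
      Polynomial.C (Polynomial.C (x i) + Polynomial.C (z i) * Polynomial.X) +
        Polynomial.C (Polynomial.C (y i)) * Polynomial.X
    have hg : ∀ i, Good 1 (g i) := by
      intro i j hj
      have h0 : ((Polynomial.C (x i) + Polynomial.C (z i) * Polynomial.X) :
        Polynomial F).natDegree ≤ 1 := by compute_degree
      rcases j with _ | _ | j
      · simpa [g] using h0
      · simp [g]
      · exfalso
        apply hj
        simp [g, Polynomial.coeff_C]
    have hB : Good d (aeval g f) := by
      rw [MvPolynomial.aeval_def, MvPolynomial.eval₂_eq']
      refine Good.sum _ _ (fun e he => ?_)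
      have h1 := Good.prod Finset.univ (fun i => g i ^ e i) (fun i => e i * 1)
        (fun i _ => (hg i).pow (e i))
      have h2 : Good 0 (algebraMap F (Polynomial (Polynomial F)) (coeff e f)) := by
        intro j hj
        have : algebraMap F (Polynomial (Polynomial F)) (coeff e f) =
          Polynomial.C (Polynomial.C (coeff e f)) := rfl
        rw [this, Polynomial.coeff_C] at hj ⊢
        split_ifs at hj ⊢ with h
        · simp [h]
        · exact absurd rfl hj
      have h3 := h2.mul h1
      have h4 : ∑ i, e i ≤ d := by
        refine le_trans ?_ ((MvPolynomial.le_totalDegree he).trans hf)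
        rw [Finsupp.sum_fintype _ _ (fun _ => rfl)]
      intro j hj
      have := h3 j hj
      simp only [mul_one] at this
      omega
    refine ⟨aeval g f, fun k => ?_, fun k hk => ?_, fun t => ?_⟩
    · by_cases h : (aeval g f).coeff k = 0
      · simp [h]
      · have := hB k h; omega
    · by_contra h
      have := hB k h; omega
    · have h1 : ((Polynomial.mapRingHom (Polynomial.evalRingHom t)).comp
          (aeval g : MvPolynomial (Fin n) F →ₐ[F] _).toRingHom) =
          (aeval (fun i => Polynomial.C ((x + t • z) i) + Polynomial.C (y i) * Polynomial.X) :
            MvPolynomial (Fin n) F →ₐ[F] Polynomial F).toRingHom := by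
        refine MvPolynomial.ringHom_ext (fun r => ?_) (fun i => ?_)
        · have h5 : algebraMap F (Polynomial (Polynomial F)) r =
            Polynomial.C (Polynomial.C r) := rfl
          simp [h5]
        · simp only [g, RingHom.comp_apply, AlgHom.toRingHom_eq_coe, RingHom.coe_coe, aeval_X]
          simp only [Polynomial.coe_mapRingHom, Polynomial.map_add, Polynomial.map_mul, Polynomial.map_C, Polynomial.map_X, Pi.add_apply, Pi.smul_apply, smul_eq_mul, Polynomial.coe_evalRingHom, Polynomial.eval_add, Polynomial.eval_mul, Polynomial.eval_C, Polynomial.eval_X]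
          rw [mul_comm (z i) t]
      exact DFunLike.congr_fun h1 f
  obtain ⟨B, h1, h2, h3⟩ := key
  refine ⟨B.coeff m, h1 m, fun t => ?_⟩
  rw [← h3, Polynomial.coeff_map]; rfl

end
end Herm

namespace Herm

lemma uni_mul {F : Type} [Field F] {n : ℕ} (f g : MvPolynomial (Fin n) F) (x y : Fin n → F) :
    uni (f * g) x y = uni f x y * uni g x y := by simp [uni]

lemma star_count {F E : Type} [Field F] [Fintype F] [AddCommGroup E] [Module F E] [Finite E]
    (Z : E → Prop) (b : ℕ)
    (h : ∀ D : E, D ≠ 0 → Nat.card {t : F // t ≠ 0 ∧ Z (t • D)} ≤ b) :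
    (Fintype.card F - 1) * Nat.card {D : E // D ≠ 0 ∧ Z D} ≤ (Nat.card E - 1) * b := by
  classical
  have := Fintype.ofFinite E
  have e : ({t : F // t ≠ 0} × {D : E // D ≠ 0 ∧ Z D}) ≃
      (Σ D : {D : E // D ≠ 0}, {t : F // t ≠ 0 ∧ Z (t • D.1)}) :=
    { toFun := fun p => ⟨⟨p.1.1⁻¹ • p.2.1, smul_ne_zero (inv_ne_zero p.1.2) p.2.2.1⟩,
        ⟨p.1.1, p.1.2, by
          simp only [smul_smul, mul_inv_cancel₀ p.1.2, one_smul]; exact p.2.2.2⟩⟩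
      invFun := fun s => ⟨⟨s.2.1, s.2.2.1⟩, ⟨s.2.1 • s.1.1, smul_ne_zero s.2.2.1 s.1.2, s.2.2.2⟩⟩
      left_inv := by
        rintro ⟨⟨t, ht⟩, ⟨D, hD⟩⟩
        simp [smul_smul, mul_inv_cancel₀ ht]
      right_inv := by
        rintro ⟨⟨D, hD⟩, ⟨t, ht, hZ⟩⟩
        have : t⁻¹ • t • D = D := by rw [smul_smul, inv_mul_cancel₀ ht, one_smul]
        simp only
        congr 1
        · exact Subtype.ext this
        · refine (Subtype.heq_iff_coe_eq ?_).2 rfl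
          intro x; simp only [this] }
  have h1 := Nat.card_congr e
  rw [Nat.card_prod, Nat.card_sigma] at h1
  have h2 : Nat.card {t : F // t ≠ 0} = Fintype.card F - 1 := by
    rw [Nat.card_eq_fintype_card, Fintype.card_subtype_compl, Fintype.card_subtype_eq]
  have h3 : Fintype.card {D : E // D ≠ 0} = Nat.card E - 1 := by
    rw [Fintype.card_subtype_compl, Fintype.card_subtype_eq, Nat.card_eq_fintype_card]
  rw [h2] at h1
  rw [h1]
  refine (Finset.sum_le_card_nsmul _ _ b (fun D _ => h D.1 D.2)).trans ?_
  rw [Finset.card_univ, h3, smul_eq_mul]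

lemma card_roots_le {F : Type} [Field F] [Fintype F] {P : Polynomial F} (hP : P ≠ 0) :
    Nat.card {t : F // P.eval t = 0} ≤ P.natDegree := by
  classical
  have : Nat.card {t : F // P.eval t = 0} = P.roots.toFinset.card := by
    rw [Nat.card_eq_fintype_card, Fintype.card_subtype]
    congr 1
    ext t
    simp [hP]
  rw [this]
  exact (Multiset.toFinset_card_le _).trans (Polynomial.card_roots' P)

lemma card_roots_ne_le {F : Type} [Field F] [Fintype F] {P : Polynomial F} (hP : P ≠ 0)
    {a : F} (h0 : P.eval a = 0) :
    Nat.card {t : F // t ≠ a ∧ P.eval t = 0} ≤ P.natDegree - 1 := by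
  classical
  have h1 : Nat.card {t : F // P.eval t = 0} = Nat.card {t : F // t ≠ a ∧ P.eval t = 0} + 1 := by
    rw [Nat.card_eq_fintype_card, Nat.card_eq_fintype_card, Fintype.card_subtype,
      Fintype.card_subtype]
    rw [← Finset.card_erase_add_one (a := a) (by simp [h0])]
    congr 2
    ext t; simp
  have := card_roots_le hP
  omega

/-- affine point -/
def pt {F : Type} [Field F] (p : F × F) : Fin 3 → F := ![p.1, p.2, 1]
/-- affine direction -/
def dr {F : Type} [Field F] (p : F × F) : Fin 3 → F := ![p.1, p.2, 0]

lemma pt_add {F : Type} [Field F] (p d : F × F) (t : F) : pt p + t • dr d = pt (p + t • d) := by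
  ext i; fin_cases i <;> simp [pt, dr]

lemma factor_count {F : Type} [Field F] [Fintype F] (c : MvPolynomial (Fin 3) F) (k : ℕ)
    (hk : c.totalDegree ≤ k)
    (hne : ∀ p d, d ≠ 0 → uni c (pt p) (dr d) ≠ 0) :
    Nat.card {p : F × F // eval (pt p) c = 0} ≤ 1 + (Fintype.card F + 1) * (k - 1) := by
  classical
  by_cases hex : ∃ p, eval (pt p) c = 0
  · obtain ⟨p, hp⟩ := hex
    have h1 := star_count (F := F) (E := F × F) (fun D => eval (pt (p + D)) c = 0) (k - 1) (by
      intro D hD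
      have h2 := card_roots_ne_le (hne p D hD) (a := 0) (by rw [eval_uni]; simpa using hp)
      have h3 := natDegree_uni_le c hk (pt p) (dr D)
      simp only [eval_uni, pt_add] at h2
      omega)
    have h4 : Nat.card {q : F × F // eval (pt q) c = 0} =
        Nat.card {D : F × F // D ≠ 0 ∧ eval (pt (p + D)) c = 0} + 1 := by
      rw [Nat.card_eq_fintype_card, Nat.card_eq_fintype_card, Fintype.card_subtype,
        Fintype.card_subtype]
      rw [← Finset.card_erase_add_one (a := p) (by simp [hp])]
      congr 1
      refine Finset.card_bij (fun a _ => a - p) ?_ ?_ ?_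
      · intro a ha; simpa [sub_eq_zero] using ha
      · intro a _ b _ h; simpa using h
      · intro b hb; exact ⟨p + b, by simpa using hb, by simp⟩
    rw [h4]
    have hc : Nat.card (F × F) = Fintype.card F * Fintype.card F := by simp
    have h5 : 2 ≤ Fintype.card F := Fintype.one_lt_card
    obtain ⟨m, hm⟩ : ∃ m, Fintype.card F = m + 2 := ⟨_, (Nat.sub_add_cancel h5).symm⟩
    rw [hc, hm] at h1
    rw [hm]
    have h6 : (m + 2) * (m + 2) - 1 = (m + 1) * (m + 3) := by
      have : (m + 2) * (m + 2) = (m + 1) * (m + 3) + 1 := by ring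
      omega
    rw [h6, show m + 2 - 1 = m + 1 from rfl, mul_assoc] at h1
    have := Nat.le_of_mul_le_mul_left h1 (Nat.succ_pos m)
    rw [show m + 2 + 1 = m + 3 from rfl]
    omega
  · have : IsEmpty {p : F × F // eval (pt p) c = 0} := ⟨fun x => hex ⟨x.1, x.2⟩⟩
    simp

lemma curve_irreducible {F : Type} [Field F] [Fintype F] {q : ℕ} (hq : 3 ≤ q)
    (hF : Fintype.card F = q ^ 2) (f : MvPolynomial (Fin 3) F) (hf : f.IsHomogeneous (q + 1))
    (h0 : ∀ d : F × F, d ≠ 0 → eval (dr d) f ≠ 0)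
    (hN : q ^ 3 ≤ Nat.card {p : F × F // eval (pt p) f = 0}) : Irreducible f := by
  classical
  have hd : q + 1 + 1 < Fintype.card F := by rw [hF]; nlinarith
  have hlead : ∀ p d, d ≠ 0 → uni f (pt p) (dr d) ≠ 0 := by
    intro p d hd' h
    have := uni_coeff_top hf hd (pt p) (dr d)
    rw [h] at this
    exact h0 d hd' this.symm
  have hfne : f ≠ 0 := by
    rintro rfl
    exact h0 (1, 0) (by simp) (by simp)
  have hnu : ∀ c : MvPolynomial (Fin 3) F, c.totalDegree = 0 → c ≠ 0 → IsUnit c := by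
    intro c hc hc0
    rw [MvPolynomial.totalDegree_eq_zero_iff_eq_C] at hc
    rw [hc] at hc0 ⊢
    refine (isUnit_iff_ne_zero.2 ?_).map C
    rintro h
    rw [h] at hc0
    simp at hc0
  constructor
  · intro hu
    obtain ⟨r, hr, h⟩ := (MvPolynomial.isUnit_iff_eq_C_of_isReduced).1 hu
    have := hf.totalDegree hfne
    rw [h] at this
    simp at this
  · intro c p hcp
    by_contra hcon
    push Not at hcon
    have hc0 : c ≠ 0 := by rintro rfl; simp at hcp; exact hfne hcp
    have hp0 : p ≠ 0 := by rintro rfl; simp at hcp; exact hfne hcp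
    have hdeg : c.totalDegree + p.totalDegree = q + 1 := by
      rw [← MvPolynomial.totalDegree_mul_of_isDomain hc0 hp0, ← hcp, hf.totalDegree hfne]
    have h1 : 1 ≤ c.totalDegree := by
      by_contra h; exact hcon.1 (hnu c (by omega) hc0)
    have h2 : 1 ≤ p.totalDegree := by
      by_contra h; exact hcon.2 (hnu p (by omega) hp0)
    have h3 := factor_count c _ le_rfl (fun x d hd h => hlead x d hd (by
      rw [hcp, uni_mul, h, zero_mul]))
    have h4 := factor_count p _ le_rfl (fun x d hd h => hlead x d hd (by
      rw [hcp, uni_mul, h, mul_zero]))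
    have h5 : Nat.card {p : F × F // eval (pt p) f = 0} ≤
        Nat.card {p : F × F // eval (pt p) c = 0} +
        Nat.card {x : F × F // eval (pt x) p = 0} := by
      rw [Nat.card_eq_fintype_card, Nat.card_eq_fintype_card, Nat.card_eq_fintype_card,
        Fintype.card_subtype, Fintype.card_subtype, Fintype.card_subtype]
      refine le_trans (Finset.card_le_card ?_) (Finset.card_union_le _ _)
      intro x hx
      simpa [hcp] using hx
    rw [hF] at h3 h4
    have h6 : q ^ 3 ≤ 2 + (q ^ 2 + 1) * (q - 1) := by
      have : q - 1 = (c.totalDegree - 1) + (p.totalDegree - 1) := by omega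
      rw [this, mul_add]
      omega
    obtain ⟨k, rfl⟩ : ∃ k, q = k + 1 := ⟨q - 1, by omega⟩
    rw [Nat.add_sub_cancel] at h6
    nlinarith

end Herm

namespace Herm

lemma finrank_homog {F : Type} [Field F] (m : ℕ) :
    finrank F (homogeneousSubmodule (Fin 3) F m) = (m + 2).choose 2 := by
  classical
  have h : homogeneousSubmodule (Fin 3) F m = restrictSupport F {d : Fin 3 →₀ ℕ | d.degree = m} :=
    homogeneousSubmodule_eq_finsupp_supported (Fin 3) F m
  rw [h, finrank_eq_nat_card_basis (basisRestrictSupport F {d : Fin 3 →₀ ℕ | d.degree = m})]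
  have h2 : {d : Fin 3 →₀ ℕ | d.degree = m} = ((Finset.univ : Finset (Fin 3)).finsuppAntidiag m : Set _) := by
    ext d
    simp [Finset.mem_finsuppAntidiag, Finsupp.degree_eq_sum]
  rw [h2, Nat.card_eq_card_toFinset, Finset.toFinset_coe, Finset.card_finsuppAntidiag_nat_eq_choose]
  rw [Finset.card_univ, Fintype.card_fin, show 3 + m - 1 = m + 2 by omega]
  exact Nat.choose_symm_of_eq_add (by omega)

instance finite_homog {F : Type} [Field F] (m : ℕ) :
    Module.Finite F (homogeneousSubmodule (Fin 3) F m) :=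
  Module.Finite.iff_fg.2 (homogeneousSubmodule_fg (Fin 3) F m)

lemma homog_div {F : Type} [Field F] {n k l : ℕ} {f b c : MvPolynomial (Fin n) F}
    (hf : f.IsHomogeneous k) (hb : b.IsHomogeneous (k + l)) (h : b = f * c) :
    ∃ c', c'.IsHomogeneous l ∧ b = f * c' := by
  refine ⟨homogeneousComponent l c, homogeneousComponent_isHomogeneous _ _, ?_⟩
  let _ := MvPolynomial.gradedAlgebra (σ := Fin n) (R := F)
  have := DirectSum.coe_decompose_mul_add_of_left_mem (homogeneousSubmodule (Fin n) F) (j := l)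
    (a := f) (b := c) (i := k) hf
  rw [← h] at this
  have h2 : ∀ (i : ℕ) (φ : MvPolynomial (Fin n) F),
    ((DirectSum.decompose (homogeneousSubmodule (Fin n) F) φ i : _) : MvPolynomial (Fin n) F) =
      homogeneousComponent i φ := fun i φ => decomposition.decompose'_apply φ i
  rw [h2, h2] at this
  rw [← this]
  rw [homogeneousComponent_of_mem hb]
  simp

lemma bezout_bound {F : Type} [Field F] {d e : ℕ} {f g : MvPolynomial (Fin 3) F}
    (hf : f.IsHomogeneous d) (hg : g.IsHomogeneous e) (hp : Prime f) (hfg : ¬ f ∣ g)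
    {V : Type} [AddCommGroup V] [Module F V] [Module.Finite F V]
    (J : MvPolynomial (Fin 3) F →ₗ[F] V) (hJf : ∀ a, J (f * a) = 0) (hJg : ∀ a, J (g * a) = 0)
    (k : ℕ)
    (hs : ∀ v, ∃ a : MvPolynomial (Fin 3) F, a.IsHomogeneous (d + e + k) ∧ J a = v) :
    finrank F V ≤ d * e := by
  have hg0 : g ≠ 0 := by rintro rfl; exact hfg (dvd_zero _)
  have hf0 : f ≠ 0 := hp.ne_zero
  set P := fun m => homogeneousSubmodule (Fin 3) F m with hP
  have hinj : ∀ h : MvPolynomial (Fin 3) F, h ≠ 0 →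
      Function.Injective (LinearMap.mulLeft F h) := by
    intro h hh a b hab
    exact mul_left_cancel₀ hh hab
  have hmap : ∀ (h : MvPolynomial (Fin 3) F) (_ : h ≠ 0) (m : ℕ),
      finrank F ((P m).map (LinearMap.mulLeft F h)) = (m + 2).choose 2 := by
    intro h hh m
    rw [← finrank_homog (F := F) m]
    exact ((P m).equivMapOfInjective _ (hinj h hh)).finrank_eq.symm
  set A := (P (e + k)).map (LinearMap.mulLeft F f)
  set B := (P (d + k)).map (LinearMap.mulLeft F g)
  set C := (P k).map (LinearMap.mulLeft F (f * g))
  have hA : finrank F A = (e + k + 2).choose 2 := hmap f hf0 _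
  have hB : finrank F B = (d + k + 2).choose 2 := hmap g hg0 _
  have hC : finrank F C = (k + 2).choose 2 := hmap (f * g) (mul_ne_zero hf0 hg0) _
  have hAB : A ⊓ B ≤ C := by
    rintro x ⟨⟨a, ha, rfl⟩, ⟨b, hb, hab⟩⟩
    simp only [LinearMap.mulLeft_apply] at hab
    have hfb : f ∣ b := (hp.dvd_or_dvd ⟨a, hab⟩).resolve_left hfg
    obtain ⟨c, hc⟩ := hfb
    obtain ⟨c', hc', hbc⟩ := homog_div hf hb hc
    refine ⟨c', hc', ?_⟩
    simp only [LinearMap.mulLeft_apply]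
    rw [← hab, hbc]; ring
  have hle : A ⊔ B ≤ P (d + e + k) ⊓ LinearMap.ker J := by
    refine sup_le ?_ ?_
    · rintro x ⟨a, ha, rfl⟩
      refine ⟨?_, hJf a⟩
      have := hf.mul ha
      rw [← add_assoc] at this
      exact this
    · rintro x ⟨a, ha, rfl⟩
      refine ⟨?_, hJg a⟩
      have := hg.mul ha
      rw [← add_assoc, add_comm e d] at this
      exact this
  have h1 := Submodule.finrank_sup_add_finrank_inf_eq A B
  have h2 : finrank F (A ⊓ B : Submodule F _) ≤ finrank F C := Submodule.finrank_mono hAB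
  have : Module.Finite F (P (d + e + k) ⊓ LinearMap.ker J : Submodule F _) :=
    Submodule.finiteDimensional_inf_left _ _
  have h3 : finrank F (A ⊔ B : Submodule F _) ≤
    finrank F (P (d + e + k) ⊓ LinearMap.ker J : Submodule F _) := Submodule.finrank_mono hle
  have h4 := LinearMap.finrank_range_add_finrank_ker (J.domRestrict (P (d + e + k)))
  have h5 : LinearMap.range (J.domRestrict (P (d + e + k))) = ⊤ := by
    rw [LinearMap.range_eq_top]
    intro v
    obtain ⟨a, ha, h⟩ := hs v
    exact ⟨⟨a, ha⟩, h⟩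
  have h6 : finrank F (LinearMap.ker (J.domRestrict (P (d + e + k)))) =
      finrank F (P (d + e + k) ⊓ LinearMap.ker J : Submodule F _) := by
    rw [← Submodule.map_comap_subtype, Submodule.finrank_map_subtype_eq]
    rfl
  rw [h5, finrank_top, h6, finrank_homog] at h4
  have ch : ∀ n : ℕ, ((n + 2).choose 2 : ℤ) * 2 = (n + 1) * (n + 2) := by
    intro n
    have := Nat.triangle_succ (n + 1)
    rw [Nat.choose_two_right, show n + 2 - 1 = n + 1 from rfl]
    have h := Nat.div_mul_cancel (Nat.even_mul_succ_self (n + 1)).two_dvd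
    have h' : (n + 2) * (n + 1) / 2 * 2 = (n + 1) * (n + 2) := by
      rw [mul_comm (n + 2)]; exact h
    exact_mod_cast h'
  have c1 := ch (d + e + k)
  have c2 := ch (e + k)
  have c3 := ch (d + k)
  have c4 := ch k
  push_cast at c1 c2 c3 c4
  zify at h1 h2 h3 h4 hA hB hC ⊢
  nlinarith

end Herm

namespace Herm

lemma dd_mul {F : Type} [Field F] {n : ℕ} (f g : MvPolynomial (Fin n) F) (x y : Fin n → F) :
    dd (f * g) x y = dd f x y * eval x g + eval x f * dd g x y := by
  simp only [dd, Derivation.leibniz, smul_eq_mul, map_add, map_mul, mul_add,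
    Finset.sum_add_distrib, Finset.sum_mul, Finset.mul_sum]
  rw [add_comm]
  congr 1 <;> exact Finset.sum_congr rfl (fun i _ => by ring)

lemma dd_fadd {F : Type} [Field F] {n : ℕ} (f g : MvPolynomial (Fin n) F) (x y : Fin n → F) :
    dd (f + g) x y = dd f x y + dd g x y := by
  simp [dd, mul_add, Finset.sum_add_distrib]

lemma dd_X {F : Type} [Field F] {n : ℕ} (i : Fin n) (x y : Fin n → F) :
    dd (X i) x y = y i := by
  classical
  simp only [dd, pderiv_X]
  rw [Finset.sum_eq_single i]
  · simp
  · intro b _ hb; simp [hb]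
  · simp

lemma dd_C {F : Type} [Field F] {n : ℕ} (c : F) (x y : Fin n → F) :
    dd (C c) x y = 0 := by
  simp [dd]

lemma dd_fsmul {F : Type} [Field F] {n : ℕ} (c : F) (f : MvPolynomial (Fin n) F) (x y : Fin n → F) :
    dd (c • f) x y = c * dd f x y := by
  rw [smul_eq_C_mul, dd_mul, dd_C]; simp

lemma pointJet {F : Type} [Field F] [Fintype F] (hF : 2 < Fintype.card F) (P w : F × F)
    (hw : w ≠ 0) (α β : F) :
    ∃ a : MvPolynomial (Fin 3) F, a.IsHomogeneous (4 * (Fintype.card F - 1) + 1) ∧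
      eval (pt P) a = α ∧ dd a (pt P) (dr w) = β ∧
      ∀ P', P' ≠ P → ∀ w', eval (pt P') a = 0 ∧ dd a (pt P') w' = 0 := by
  set Q := Fintype.card F with hQ
  set l0 : MvPolynomial (Fin 3) F := X 0 - C P.1 * X 2 with hl0
  set l1 : MvPolynomial (Fin 3) F := X 1 - C P.2 * X 2 with hl1
  have hh0 : l0.IsHomogeneous 1 := (isHomogeneous_X F _).sub (isHomogeneous_C_mul_X _ _)
  have hh1 : l1.IsHomogeneous 1 := (isHomogeneous_X F _).sub (isHomogeneous_C_mul_X _ _)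
  set I : MvPolynomial (Fin 3) F := (X 2 ^ (Q - 1) - l0 ^ (Q - 1)) * (X 2 ^ (Q - 1) - l1 ^ (Q - 1))
    with hI
  have hIh : I.IsHomogeneous ((Q - 1) + (Q - 1)) := by
    refine IsHomogeneous.mul ?_ ?_
    · exact (isHomogeneous_X_pow _ _).sub (by simpa using hh0.pow (Q - 1))
    · exact (isHomogeneous_X_pow _ _).sub (by simpa using hh1.pow (Q - 1))
  have e0 : ∀ p : F × F, eval (pt p) l0 = p.1 - P.1 := fun p => by simp [hl0, pt]
  have e1 : ∀ p : F × F, eval (pt p) l1 = p.2 - P.2 := fun p => by simp [hl1, pt]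
  have e2 : ∀ p : F × F, eval (pt p) (X 2 : MvPolynomial (Fin 3) F) = 1 := fun p => by simp [pt]
  have hI0 : ∀ P', P' ≠ P → eval (pt P') I = 0 := by
    intro P' hP'
    have : P'.1 ≠ P.1 ∨ P'.2 ≠ P.2 := by
      by_contra h; push Not at h; exact hP' (Prod.ext h.1 h.2)
    rcases this with h | h
    · rw [hI, map_mul, map_sub, map_pow, map_pow, e0, e2,
        FiniteField.pow_card_sub_one_eq_one _ (sub_ne_zero.2 h)]
      simp
    · rw [hI, map_mul]
      have : eval (pt P') (X 2 ^ (Q - 1) - l1 ^ (Q - 1)) = 0 := by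
        rw [map_sub, map_pow, map_pow, e1, e2,
          FiniteField.pow_card_sub_one_eq_one _ (sub_ne_zero.2 h)]
        simp
      rw [this, mul_zero]
  have hI1 : eval (pt P) I = 1 := by
    rw [hI, map_mul, map_sub, map_sub, map_pow, map_pow, map_pow, e0, e1, e2]
    simp [show Q - 1 ≠ 0 by omega]
  have d0 : dd l0 (pt P) (dr w) = w.1 := by
    rw [hl0, sub_eq_add_neg, ← neg_mul, ← C_neg, dd_fadd, dd_mul, dd_C, dd_X, dd_X]
    simp [dr]
  have d1 : dd l1 (pt P) (dr w) = w.2 := by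
    rw [hl1, sub_eq_add_neg, ← neg_mul, ← C_neg, dd_fadd, dd_mul, dd_C, dd_X, dd_X]
    simp [dr]
  obtain ⟨L, hL, hL0, hL1⟩ : ∃ L : MvPolynomial (Fin 3) F, L.IsHomogeneous 1 ∧
      eval (pt P) L = 0 ∧ dd L (pt P) (dr w) = 1 := by
    by_cases hw1 : w.1 = 0
    · have hw2 : w.2 ≠ 0 := fun h => hw (Prod.ext hw1 h)
      refine ⟨C (w.2)⁻¹ * l1, hh1.C_mul _, ?_, ?_⟩
      · simp [e1]
      · rw [dd_mul, d1, dd_C]; simp [hw2]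
    · refine ⟨C (w.1)⁻¹ * l0, hh0.C_mul _, ?_, ?_⟩
      · simp [e0]
      · rw [dd_mul, d0, dd_C]; simp [hw1]
  clear_value I
  set γ := dd (I * I) (pt P) (dr w) with hγ
  clear_value γ
  refine ⟨I * I * (C α * X 2 + C (β - γ * α) * L), ?_, ?_, ?_, ?_⟩
  · have := (hIh.mul hIh).mul (((isHomogeneous_X F (2 : Fin 3)).C_mul α).add
      (hL.C_mul (β - γ * α)))
    convert this using 1
    omega
  · rw [map_mul, map_mul, hI1, map_add, map_mul, map_mul, hL0, e2]; simp
  · rw [dd_mul, ← hγ, dd_fadd, dd_mul, dd_mul, dd_C, dd_C, dd_X, hL1, map_add, map_mul, map_mul,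
      map_mul, hI1, hL0, e2]
    simp only [eval_C]
    simp [dr]
  · intro P' hP' w'
    constructor
    · rw [map_mul, map_mul, hI0 P' hP']; simp
    · rw [dd_mul, dd_mul, map_mul, hI0 P' hP']; simp

lemma not_dvd_g {F : Type} [Field F] [Fintype F] {q : ℕ} (hq : 3 ≤ q) (hqF : (q : F) = 0)
    (hF : Fintype.card F = q ^ 2) (f : MvPolynomial (Fin 3) F) (hf : f.IsHomogeneous (q + 1))
    (h0 : ∀ d : F × F, d ≠ 0 → eval (dr d) f ≠ 0) :
    ¬ f ∣ ∑ i, X i ^ (Fintype.card F) * pderiv i f := by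
  rintro ⟨h, hh⟩
  have hd : q + 1 + 1 < Fintype.card F := by rw [hF]; nlinarith
  set Q := Fintype.card F with hQ
  set x : Fin 3 → F := dr (0, 1)
  set y : Fin 3 → F := dr (1, 0)
  have h1 : uni f x y ∣ uni (∑ i, X i ^ Q * pderiv i f) x y := ⟨uni h x y, by rw [hh, uni_mul]⟩
  have huX : ∀ i, uni (X i) x y = Polynomial.C (x i) + Polynomial.C (y i) * Polynomial.X := by
    intro i; simp [uni]
  have hsum : uni (∑ i, X i ^ Q * pderiv i f) x y =
      Polynomial.X ^ Q * uni (pderiv 0 f) x y + uni (pderiv 1 f) x y := by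
    have : uni (∑ i, X i ^ Q * pderiv i f) x y =
        ∑ i, (uni (X i) x y) ^ Q * uni (pderiv i f) x y := by
      simp only [uni, map_sum, map_mul, map_pow]
    rw [this, Fin.sum_univ_three, huX, huX, huX]
    have : Q ≠ 0 := by omega
    simp [x, y, dr, this]
  have heul : Polynomial.X * uni (pderiv 0 f) x y + uni (pderiv 1 f) x y = uni f x y := by
    have h2 := hf.sum_X_mul_pderiv
    have h3 : uni (∑ i, X i * pderiv i f) x y =
        ∑ i, (uni (X i) x y) * uni (pderiv i f) x y := by
      simp only [uni, map_sum, map_mul]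
    rw [h2, Fin.sum_univ_three, huX, huX, huX] at h3
    have h4 : uni ((q + 1) • f) x y = uni f x y := by
      have : ((q + 1 : ℕ) : F) = 1 := by push_cast; rw [hqF, zero_add]
      rw [← Nat.cast_smul_eq_nsmul F, this, one_smul]
    rw [h4] at h3
    rw [h3]
    simp [x, y, dr]
  have hder : Polynomial.derivative (uni f x y) = uni (pderiv 0 f) x y := by
    rw [uni, derivative_aeval, Fin.sum_univ_three]
    simp [x, y, dr, uni]
  have h5 : uni f x y ∣ (Polynomial.X ^ Q - Polynomial.X) * Polynomial.derivative (uni f x y) := by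
    have : (Polynomial.X ^ Q - Polynomial.X) * Polynomial.derivative (uni f x y) =
        uni (∑ i, X i ^ Q * pderiv i f) x y - uni f x y := by
      rw [hsum, hder, ← heul]; ring
    rw [this]
    exact dvd_sub h1 dvd_rfl
  have hroot : ∀ t, (uni f x y).eval t ≠ 0 := by
    intro t
    rw [eval_uni]
    have : x + t • y = dr (t, 1) := by
      ext i; fin_cases i <;> simp [x, y, dr]
    rw [this]
    exact h0 _ (by simp)
  have hcop : IsCoprime (uni f x y) (Polynomial.X ^ Q - Polynomial.X) := by
    have hsp := FiniteField.X_pow_card_sub_X_natDegree_eq F (p := Q) (by omega)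
    have hroots := FiniteField.roots_X_pow_card_sub_X F
    have hprod : (Polynomial.X ^ Q - Polynomial.X : Polynomial F) =
        ∏ a : F, (Polynomial.X - Polynomial.C a) := by
      have := Polynomial.prod_multiset_X_sub_C_of_monic_of_roots_card_eq
        (p := (Polynomial.X ^ Q - Polynomial.X : Polynomial F)) (by
          exact Polynomial.monic_X_pow_sub (by rw [Polynomial.degree_X]; exact_mod_cast (by omega)))
        (by rw [hroots, hsp]; simp [hQ])
      rw [← this, hroots]
      rfl
    rw [hprod]
    refine IsCoprime.prod_right (fun a _ => ?_)
    refine ((Polynomial.irreducible_X_sub_C a).coprime_iff_not_dvd.2 ?_).symm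
    rw [Polynomial.dvd_iff_isRoot]
    exact hroot a
  have h6 := hcop.dvd_of_dvd_mul_left h5
  have htop : (uni f x y).coeff (q + 1) ≠ 0 := by
    rw [uni_coeff_top hf hd]; exact h0 _ (by simp)
  have hnd : (uni f x y).natDegree = q + 1 :=
    le_antisymm (natDegree_uni_le f hf.totalDegree_le _ _) (Polynomial.le_natDegree_of_ne_zero htop)
  have h7 : Polynomial.derivative (uni f x y) = 0 := by
    refine Polynomial.eq_zero_of_dvd_of_natDegree_lt h6 ?_
    exact Polynomial.natDegree_derivative_lt (by omega)
  have h8 := Polynomial.coeff_derivative (uni f x y) q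
  rw [h7, hqF] at h8
  simp at h8
  exact htop h8.symm

lemma pderiv_comm' {F : Type} [Field F] {n : ℕ} (i j : Fin n) (f : MvPolynomial (Fin n) F) :
    pderiv i (pderiv j f) = pderiv j (pderiv i f) := by
  classical
  have h : ⁅(pderiv i : Derivation F (MvPolynomial (Fin n) F) (MvPolynomial (Fin n) F)),
      (pderiv j : Derivation F (MvPolynomial (Fin n) F) (MvPolynomial (Fin n) F))⁆ = 0 := by
    refine MvPolynomial.derivation_ext (fun k => ?_)
    rw [Derivation.commutator_apply]
    simp only [pderiv_X, Pi.single_apply]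
    split_ifs <;> simp
  have := DFunLike.congr_fun h f
  rw [Derivation.commutator_apply] at this
  exact sub_eq_zero.1 this

lemma curve {F : Type} [Field F] [Fintype F] {q : ℕ} (hq : 3 ≤ q) (hqF : (q : F) = 0)
    (hF : Fintype.card F = q ^ 2) (f : MvPolynomial (Fin 3) F) (hf : f.IsHomogeneous (q + 1))
    (h0 : ∀ d : F × F, d ≠ 0 → eval (dr d) f ≠ 0) :
    Nat.card {p : F × F // eval (pt p) f = 0} < q ^ 3 := by
  classical
  by_contra hN
  push Not at hN
  have hirr := curve_irreducible hq hF f hf h0 hN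
  have hndvd := not_dvd_g hq hqF hF f hf h0
  set g := ∑ i, X i ^ (Fintype.card F) * pderiv i f with hg
  have hgh : g.IsHomogeneous (Fintype.card F + q) := by
    refine IsHomogeneous.sum _ _ _ (fun i _ => ?_)
    exact (isHomogeneous_X_pow _ _).mul (by simpa using hf.pderiv (i := i))
  have hQF : ((Fintype.card F : ℕ) : F) = 0 := by rw [hF]; push_cast; rw [hqF]; simp [pow_two]
  have hg0 : ∀ v : Fin 3 → F, eval v f = 0 → eval v g = 0 := by
    intro v hv
    have h1 := dd_self hf v
    rw [hv, mul_zero, dd] at h1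
    rw [hg, map_sum, ← h1]
    refine Finset.sum_congr rfl (fun i _ => ?_)
    rw [map_mul, map_pow, eval_X, FiniteField.pow_card]
  have hg1 : ∀ v w : Fin 3 → F, dd g v w = 0 := by
    intro v w
    rw [dd]
    refine Finset.sum_eq_zero (fun j _ => ?_)
    have hj : eval v (pderiv j g) = 0 := by
      have h2 := dd_self (hf.pderiv (i := j)) v
      rw [show q + 1 - 1 = q from rfl, hqF, zero_mul, dd] at h2
      rw [hg, map_sum, map_sum, ← h2]
      refine Finset.sum_congr rfl (fun i _ => ?_)
      rw [Derivation.leibniz, Derivation.leibniz_pow]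
      simp only [smul_eq_mul, map_add, map_mul, map_pow, eval_X, FiniteField.pow_card]
      rw [show pderiv j (pderiv i f) = pderiv i (pderiv j f) from
        pderiv_comm' j i f]
      rw [nsmul_eq_mul, map_mul, map_natCast, hQF]
      ring
    rw [hj, mul_zero]
  have hw : ∀ P : F × F, ∃ w : F × F, w ≠ 0 ∧ dd f (pt P) (dr w) = 0 := by
    intro P
    by_cases h1 : eval (pt P) (pderiv 0 f) = 0
    · exact ⟨(1, 0), by simp, by simp [dd, Fin.sum_univ_three, dr, h1]⟩
    · refine ⟨(- eval (pt P) (pderiv 1 f), eval (pt P) (pderiv 0 f)), by simp [h1], ?_⟩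
      simp [dd, Fin.sum_univ_three, dr]; ring
  choose w hw0 hw1 using hw
  let Z := {p : F × F // eval (pt p) f = 0}
  let J : MvPolynomial (Fin 3) F →ₗ[F] (Z → F × F) :=
    { toFun := fun a P => (eval (pt P.1) a, dd a (pt P.1) (dr (w P.1)))
      map_add' := fun a b => by ext P <;> simp [dd_fadd]
      map_smul' := fun c a => by ext P <;> simp [dd_fsmul, smul_eval] }
  have hJ : ∀ a P, J a P = (eval (pt P.1) a, dd a (pt P.1) (dr (w P.1))) := fun a P => rfl
  have hcq : q + 1 + (q ^ 2 + q) ≤ 4 * (q ^ 2 - 1) + 1 := by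
    have : 9 ≤ q ^ 2 := by nlinarith
    have : 3 * q ≤ q ^ 2 := by nlinarith
    omega
  obtain ⟨k, hk⟩ := Nat.exists_eq_add_of_le hcq
  have hb := bezout_bound hf hgh hirr.prime hndvd J
    (fun a => by
      ext P
      · simp [hJ, P.2]
      · simp [hJ, dd_mul, P.2, hw1])
    (fun a => by
      ext P
      · simp [hJ, hg0 _ P.2]
      · simp [hJ, dd_mul, hg0 _ P.2, hg1]) k (by
      intro v
      have hpj := fun P : Z => pointJet (F := F) (by rw [hF]; nlinarith) P.1 (w P.1) (hw0 P.1) (v P).1 (v P).2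
      choose a ha1 ha2 ha3 ha4 using hpj
      refine ⟨∑ P, a P, ?_, ?_⟩
      · refine IsHomogeneous.sum _ _ _ (fun P _ => ?_)
        have := ha1 P
        rw [hF, hk] at this
        rw [hF]; exact this
      · rw [map_sum]
        funext P
        rw [Finset.sum_apply, Finset.sum_eq_single P]
        · rw [hJ, ha2, ha3]
        · intro P' _ hne
          have := ha4 P' P.1 (fun h => hne (Subtype.ext h.symm)) (dr (w P.1))
          rw [hJ, this.1, this.2]; rfl
        · simp)
  have hfin : finrank F (Z → F × F) = Nat.card Z * 2 := by
    rw [Module.finrank_pi_fintype]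
    simp
  rw [hfin, hF] at hb
  have h10 : q ^ 3 * 2 ≤ (q + 1) * (q ^ 2 + q) := le_trans (Nat.mul_le_mul_right 2 hN) hb
  nlinarith [mul_le_mul hq hq (by norm_num) (by omega), mul_self_nonneg (q - 1)]

end Herm

namespace Herm

lemma coset_count {F V : Type} [Field F] [AddCommGroup V] [Module F V] [Fintype V]
    (L : Submodule F V) (T Z : V → Prop) [Fintype {v // T v}] (hT : ∀ v, ∀ l ∈ L, T v → T (v + l)) :
    ∑ v : {v // T v}, Nat.card {l : L // Z (v.1 + l.1)} =
      Nat.card L * Nat.card {v // T v ∧ Z v} := by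
  classical
  have e : (Σ v : {v // T v}, {l : L // Z (v.1 + l.1)}) ≃ L × {v // T v ∧ Z v} :=
    { toFun := fun s => (s.2.1, ⟨s.1.1 + s.2.1.1, hT _ _ s.2.1.2 s.1.2, s.2.2⟩)
      invFun := fun p => ⟨⟨p.2.1 - p.1.1, by
          rw [sub_eq_add_neg]; exact hT _ _ (L.neg_mem p.1.2) p.2.2.1⟩,
        ⟨p.1, by simpa using p.2.2.2⟩⟩
      left_inv := by
        rintro ⟨⟨v, hv⟩, ⟨l, hl⟩⟩
        have : v + l.1 - l.1 = v := by abel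
        simp only
        congr 1
        · exact Subtype.ext this
        · refine (Subtype.heq_iff_coe_eq ?_).2 rfl
          intro x; simp only [this]
      right_inv := by
        rintro ⟨l, ⟨v, hv⟩⟩
        simp }
  rw [← Nat.card_prod, ← Nat.card_congr e, Nat.card_sigma]

/-- zeros in cosets of a 2-dim'l zero free subspace -/
lemma coset_lt {F : Type} [Field F] [Fintype F] {q : ℕ} (hq : 3 ≤ q) (hqF : (q : F) = 0)
    (hF : Fintype.card F = q ^ 2) {n : ℕ} (f : MvPolynomial (Fin n) F)
    (hf : f.IsHomogeneous (q + 1)) (L : Submodule F (Fin n → F)) (hL : finrank F L = 2)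
    (h0 : ∀ v ∈ L, v ≠ 0 → eval v f ≠ 0) (v : Fin n → F) :
    Nat.card {l : L // eval (v + l.1) f = 0} < q ^ 3 := by
  classical
  let b := Module.finBasisOfFinrankEq F L hL
  let f3 : MvPolynomial (Fin 3) F := aeval (fun i => C ((b 0).1 i) * X 0 + C ((b 1).1 i) * X 1
    + C (v i) * X 2) f
  have hf3 : f3.IsHomogeneous (q + 1) := by
    have := hf.aeval (fun i => (C ((b 0).1 i) * X 0 + C ((b 1).1 i) * X 1
      + C (v i) * X 2 : MvPolynomial (Fin 3) F)) (n := 1) (fun i =>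
        ((isHomogeneous_C_mul_X _ _).add (isHomogeneous_C_mul_X _ _)).add
          (isHomogeneous_C_mul_X _ _))
    rwa [one_mul] at this
  have hev : ∀ x : Fin 3 → F, eval x f3 = eval (x 0 • (b 0).1 + x 1 • (b 1).1 + x 2 • v) f := by
    intro x
    simp only [f3]
    rw [← MvPolynomial.coe_aeval_eq_eval, ← MvPolynomial.coe_aeval_eq_eval]
    simp only [RingHom.coe_coe]
    rw [← AlgHom.comp_apply, MvPolynomial.comp_aeval]
    congr 2
    ext i
    simp [mul_comm]
  let e : F × F ≃ L := (finTwoArrowEquiv F).symm.trans b.equivFun.symm.toEquiv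
  have he : ∀ p : F × F, (e p).1 = p.1 • (b 0).1 + p.2 • (b 1).1 := by
    intro p
    simp [e, Basis.equivFun_symm_apply, Fin.sum_univ_two]
  have hc := curve hq hqF hF f3 hf3 (by
    intro d hd
    rw [hev]
    have : dr d 0 • (b 0).1 + dr d 1 • (b 1).1 + dr d 2 • v = (e d).1 := by
      rw [he]; simp [dr]
    rw [this]
    refine h0 _ (e d).2 (fun h => hd ?_)
    have h1 : e d = 0 := Subtype.ext h
    have h2 : e 0 = 0 := Subtype.ext (by rw [he]; simp)
    exact e.injective (h1.trans h2.symm))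
  refine lt_of_le_of_lt (le_of_eq (Nat.card_congr (e.subtypeEquiv ?_)).symm) hc
  intro p
  rw [hev, he]
  simp only [pt]
  simp [add_comm]

lemma card_sub {F : Type} [Field F] [Fintype F] {q : ℕ}
    (hF : Fintype.card F = q ^ 2) {V : Type} [AddCommGroup V] [Module F V] [Module.Finite F V] :
    Nat.card V = q ^ (2 * finrank F V) := by
  rw [Module.natCard_eq_pow_finrank (K := F), Nat.card_eq_fintype_card, hF, pow_mul]

lemma step1a {F : Type} [Field F] [Fintype F] {q : ℕ} (hq : 3 ≤ q) (hqF : (q : F) = 0)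
    (hF : Fintype.card F = q ^ 2) (f : MvPolynomial (Fin 7) F)
    (hf : f.IsHomogeneous (q + 1)) (W : Submodule F (Fin 7 → F)) (hW : finrank F W = 4)
    (hN : Nat.card {v : Fin 7 → F // v ∉ W ∧ eval v f = 0} + q ^ 7 = q ^ 13)
    (L : Submodule F (Fin 7 → F)) (hL : finrank F L = 2) (hLW : L ≤ W) :
    ∃ v ∈ L, v ≠ 0 ∧ eval v f = 0 := by
  classical
  by_contra hcon
  push Not at hcon
  have h1 := coset_count L (fun v => v ∉ W) (fun v => eval v f = 0) (by
    intro v l hl hv h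
    exact hv ((W.add_mem_iff_left (hLW hl)).1 h))
  have h2 : ∑ v : {v // v ∉ W}, Nat.card {l : L // eval (v.1 + l.1) f = 0} ≤
      Fintype.card {v // v ∉ W} * (q ^ 3 - 1) := by
    rw [← Finset.card_univ, ← smul_eq_mul]
    refine Finset.sum_le_card_nsmul _ _ _ (fun v _ => ?_)
    have := coset_lt hq hqF hF f hf L hL hcon v.1
    omega
  have h3 : Fintype.card {v // v ∉ W} = q ^ 14 - q ^ 8 := by
    rw [Fintype.card_subtype_compl, ← Nat.card_eq_fintype_card, ← Nat.card_eq_fintype_card,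
      card_sub hF]
    have := card_sub hF (V := W)
    rw [hW] at this
    rw [show Nat.card {x // x ∈ W} = Nat.card W from rfl, this]
    simp
  rw [h1, h3, card_sub hF, hL] at h2
  have h4 : q ^ 8 ≤ q ^ 14 := Nat.pow_le_pow_right (by omega) (by omega)
  have h5 : 1 ≤ q ^ 3 := Nat.one_le_pow _ _ (by omega)
  zify [h4, h5] at h2 hN
  have hq' : (3 : ℤ) ≤ q := by exact_mod_cast hq
  have h6 : (Nat.card {v : Fin 7 → F // v ∉ W ∧ eval v f = 0} : ℤ) = q ^ 13 - q ^ 7 := by linarith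
  rw [h6] at h2
  have h7 : (q : ℤ) ^ 8 < q ^ 14 := pow_lt_pow_right₀ (by linarith) (by norm_num)
  have h8 : (q : ℤ) ^ (2 * 2) * (q ^ 13 - q ^ 7) - (q ^ 14 - q ^ 8) * (q ^ 3 - 1) = q ^ 14 - q ^ 8 := by ring
  linarith

lemma step1 {F : Type} [Field F] [Fintype F] {q : ℕ} (hq : 3 ≤ q) (hqF : (q : F) = 0)
    (hF : Fintype.card F = q ^ 2) (f : MvPolynomial (Fin 7) F)
    (hf : f.IsHomogeneous (q + 1)) (W : Submodule F (Fin 7 → F)) (hW : finrank F W = 4)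
    (hN : Nat.card {v : Fin 7 → F // v ∉ W ∧ eval v f = 0} + q ^ 7 = q ^ 13)
    (hNW : Nat.card {v : Fin 7 → F // v ∈ W ∧ eval v f = 0} = q ^ 6) :
    ∃ E : Submodule F (Fin 7 → F), E ≤ W ∧ finrank F E = 3 ∧
      ∀ v ∈ W, (eval v f = 0 ↔ v ∈ E) := by
  classical
  have hz0 : eval (0 : Fin 7 → F) f = 0 := by
    have := eval_smul' hf (0 : F) (0 : Fin 7 → F)
    simpa using this
  have hsm : ∀ (t : F) (v : Fin 7 → F), eval v f = 0 → eval (t • v) f = 0 := by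
    intro t v hv
    rw [eval_smul' hf, hv, mul_zero]
  have hsub : ∀ x y, x ∈ W → eval x f = 0 → y ∈ W → eval y f = 0 → eval (x - y) f = 0 := by
    intro x y hx hx0 hy hy0
    by_contra hP
    have hP0 : x - y ≠ 0 := by intro h; rw [h] at hP; exact hP hz0
    let P : W := ⟨x - y, W.sub_mem hx hy⟩
    have hPne : P ≠ 0 := fun h => hP0 (congrArg Subtype.val h)
    let S : Submodule F W := Submodule.span F {P}
    let π : {v : Fin 7 → F // v ∈ W ∧ eval v f = 0} → W ⧸ S := fun v =>
      S.mkQ ⟨v.1, v.2.1⟩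
    have hsurj : Function.Surjective π := by
      intro c
      obtain ⟨w, rfl⟩ := S.mkQ_surjective c
      by_cases hw : w ∈ S
      · refine ⟨⟨0, W.zero_mem, hz0⟩, ?_⟩
        have h1 : S.mkQ w = 0 := by simpa using hw
        rw [h1]
        exact map_zero _
      · have hli : LinearIndependent F ![P.1, w.1] := by
          rw [LinearIndependent.pair_iff' hP0]
          intro a ha
          exact hw (Submodule.mem_span_singleton.2 ⟨a, Subtype.ext ha⟩)
        let L := Submodule.span F (Set.range ![P.1, w.1])
        have hL : finrank F L = 2 := by
          have := finrank_span_eq_card hli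
          simpa using this
        have hLW : L ≤ W := by
          refine Submodule.span_le.2 ?_
          rintro _ ⟨i, rfl⟩
          fin_cases i
          · exact P.2
          · exact w.2
        obtain ⟨v, hvL, hv0, hv⟩ := step1a hq hqF hF f hf W hW hN L hL hLW
        have hvL' : v ∈ Submodule.span F {P.1, w.1} := by
          have : Set.range ![P.1, w.1] = {P.1, w.1} := by simp [Matrix.range_cons, Set.pair_comm]
          rw [← this]; exact hvL
        obtain ⟨β, α, hαβ⟩ := Submodule.mem_span_pair.1 hvL'
        have hα : α ≠ 0 := by
          rintro rfl
          rw [zero_smul, add_zero] at hαβ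
          have hβ : β ≠ 0 := by rintro rfl; exact hv0 (by rw [← hαβ, zero_smul])
          apply hP
          have := hsm β⁻¹ v hv
          rwa [← hαβ, smul_smul, inv_mul_cancel₀ hβ, one_smul] at this
        have hz := hsm α⁻¹ v hv
        refine ⟨⟨α⁻¹ • v, W.smul_mem _ (hLW hvL), hz⟩, ?_⟩
        refine (Submodule.Quotient.eq S).2 ?_
        refine Submodule.mem_span_singleton.2 ⟨α⁻¹ * β, Subtype.ext ?_⟩
        simp only [Submodule.coe_smul, Submodule.coe_sub]
        rw [← hαβ, smul_add, smul_smul, smul_smul, inv_mul_cancel₀ hα, one_smul]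
        abel
    have hcard : Nat.card (W ⧸ S) = q ^ 6 := by
      have h1 := S.finrank_quotient_add_finrank
      rw [hW, finrank_span_singleton hPne] at h1
      rw [card_sub hF, show finrank F (W ⧸ S) = 3 by omega]
    have hbij := (Nat.bijective_iff_surjective_and_card π).2 ⟨hsurj, by rw [hcard, hNW]⟩
    have : (⟨x, hx, hx0⟩ : {v : Fin 7 → F // v ∈ W ∧ eval v f = 0}) = ⟨y, hy, hy0⟩ := by
      apply hbij.1
      refine (Submodule.Quotient.eq S).2 ?_
      exact Submodule.mem_span_singleton.2 ⟨1, by rw [one_smul]; rfl⟩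
    have : x = y := congrArg Subtype.val this
    exact hP0 (sub_eq_zero.2 this)
  let E : Submodule F (Fin 7 → F) :=
    { carrier := {v | v ∈ W ∧ eval v f = 0}
      add_mem' := by
        rintro a b ⟨ha, ha0⟩ ⟨hb, hb0⟩
        refine ⟨W.add_mem ha hb, ?_⟩
        have := hsub a ((-1 : F) • b) ha ha0 (W.smul_mem _ hb) (hsm _ _ hb0)
        simpa using this
      zero_mem' := ⟨W.zero_mem, hz0⟩
      smul_mem' := by
        rintro c x ⟨hx, hx0⟩
        exact ⟨W.smul_mem _ hx, hsm _ _ hx0⟩ }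
  refine ⟨E, fun v hv => hv.1, ?_, fun v hv => ⟨fun h => ⟨hv, h⟩, fun h => h.2⟩⟩
  have h1 : Nat.card E = q ^ 6 := hNW
  rw [card_sub hF] at h1
  have := Nat.pow_right_injective (by omega : 2 ≤ q) h1
  omega

end Herm

namespace Herm

/-- The situation after the first step of the proof. -/
structure Setup (q : ℕ) {F : Type} [Field F] [Fintype F] (f : MvPolynomial (Fin 7) F)
    (W E : Submodule F (Fin 7 → F)) : Prop where
  hq : 3 ≤ q
  hF : Fintype.card F = q ^ 2
  hqF : (q : F) = 0
  frob : ∀ x y : F, (x + y) ^ q = x ^ q + y ^ q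
  hf : f.IsHomogeneous (q + 1)
  hEW : E ≤ W
  hW : finrank F W = 4
  hE : finrank F E = 3
  hWE : ∀ v ∈ W, (eval v f = 0 ↔ v ∈ E)
  hN : Nat.card {v : Fin 7 → F // v ∉ W ∧ eval v f = 0} + q ^ 7 = q ^ 13
  hns : ∀ u, u ∉ W → ∃ a ∈ E, eval (u + a) f ≠ 0

lemma line_count {F E : Type} [Field F] [Fintype F] [AddCommGroup E] [Module F E] [Fintype E]
    (v : E) (Z : E → Prop) :
    ∑ a : E, Nat.card {s : F // Z (a + s • v)} = Fintype.card F * Nat.card {a // Z a} := by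
  classical
  have e : (Σ a : E, {s : F // Z (a + s • v)}) ≃ F × {a // Z a} :=
    { toFun := fun x => (x.2.1, ⟨x.1 + x.2.1 • v, x.2.2⟩)
      invFun := fun p => ⟨p.2.1 - p.1 • v, ⟨p.1, by simpa using p.2.2⟩⟩
      left_inv := by
        rintro ⟨a, ⟨s, hs⟩⟩
        have : a + s • v - s • v = a := by abel
        simp only
        congr 1
        refine (Subtype.heq_iff_coe_eq ?_).2 rfl
        intro x; simp only [this]
      right_inv := by
        rintro ⟨s, ⟨a, ha⟩⟩
        simp }
  rw [← Nat.card_eq_fintype_card, ← Nat.card_prod, ← Nat.card_congr e, Nat.card_sigma]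

namespace Setup
variable {q : ℕ} {F : Type} [Field F] [Fintype F] {f : MvPolynomial (Fin 7) F}
    {W E : Submodule F (Fin 7 → F)} (S : Setup q f W E)
include S

lemma hd : q + 1 + 1 < Fintype.card F := by
  have := S.hq; rw [S.hF]; nlinarith

lemma E_zero {v : Fin 7 → F} (hv : v ∈ E) : eval v f = 0 := (S.hWE v (S.hEW hv)).2 hv

lemma A_zero {a v : Fin 7 → F} (ha : a ∈ E) (hv : v ∈ E) : dd f v a = 0 := by
  rw [← uni_coeff_q S.hf S.hd]
  have : uni f a v = 0 := by
    refine poly_eq_of_forall ?_ ?_ (fun t => ?_)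
    · have := natDegree_uni_le f S.hf.totalDegree_le a v
      have := S.hd
      omega
    · simpa using Fintype.card_pos
    · rw [eval_uni, S.E_zero (E.add_mem ha (E.smul_mem t hv))]; simp
  rw [this]; simp

lemma deg_le {v : Fin 7 → F} (hv : v ∈ E) (x : Fin 7 → F) : (uni f x v).natDegree ≤ q := by
  have h1 := natDegree_uni_le f S.hf.totalDegree_le x v
  have h2 := uni_coeff_top S.hf S.hd x v
  rw [S.E_zero hv] at h2
  refine Polynomial.natDegree_le_iff_coeff_eq_zero.2 (fun N hN => ?_)
  rcases Nat.lt_or_ge (q + 1) N with h | h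
  · exact Polynomial.coeff_eq_zero_of_natDegree_lt (lt_of_le_of_lt h1 h)
  · rw [show N = q + 1 by omega, h2]

lemma deg_le' {v : Fin 7 → F} (hv : v ∈ E) {x : Fin 7 → F} (h0 : dd f v x = 0) :
    (uni f x v).natDegree ≤ q - 1 := by
  have h1 := S.deg_le hv x
  have h2 := uni_coeff_q S.hf S.hd x v
  rw [h0] at h2
  refine Polynomial.natDegree_le_iff_coeff_eq_zero.2 (fun N hN => ?_)
  rcases Nat.lt_or_ge q N with h | h
  · exact Polynomial.coeff_eq_zero_of_natDegree_lt (lt_of_le_of_lt h1 h)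
  · rw [show N = q by omega, h2]

lemma line_le {u v a : Fin 7 → F} (hv : v ∈ E) (ha : a ∈ E) (hA : dd f v u ≠ 0) :
    Nat.card {s : F // eval (u + (a + s • v)) f = 0} ≤ q := by
  have h1 : uni f (u + a) v ≠ 0 := by
    intro h
    have h2 := uni_coeff_q S.hf S.hd (u + a) v
    rw [h, dd_add, S.A_zero ha hv, add_zero] at h2
    exact hA (by simpa using h2.symm)
  have h2 := card_roots_le h1
  simp only [eval_uni, add_assoc] at h2
  exact h2.trans (S.deg_le hv _)

lemma nu_lt {u : Fin 7 → F} (hu : u ∉ W) (h : ∀ v ∈ E, dd f v u = 0) :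
    Nat.card {a : E // eval (u + a.1) f = 0} < q ^ 5 := by
  classical
  obtain ⟨a0, ha0, hne⟩ := S.hns u hu
  have h1 := star_count (F := F) (E := E) (fun D => eval (u + a0 + D.1) f = 0) (q - 1) (by
    intro D hD
    have hz : dd f D.1 (u + a0) = 0 := by
      rw [dd_add, h _ D.2, S.A_zero ha0 D.2, add_zero]
    have h2 := S.deg_le' D.2 hz
    have hne0 : uni f (u + a0) D.1 ≠ 0 := by
      intro h3
      have := uni_coeff_zero f (u + a0) D.1
      rw [h3] at this
      exact hne (by simpa using this.symm)
    have h4 := card_roots_le hne0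
    simp only [eval_uni] at h4
    refine le_trans (Nat.card_le_card_of_injective
      (fun t : {t : F // t ≠ 0 ∧ eval (u + a0 + (t • D : E).1) f = 0} =>
        (⟨t.1, t.2.2⟩ : {t : F // eval (u + a0 + t • D.1) f = 0})) ?_) (h4.trans h2)
    intro x y hxy
    simp only [Subtype.mk.injEq] at hxy
    exact Subtype.ext hxy)
  have h5 : Nat.card {a : E // eval (u + a.1) f = 0} ≤
      Nat.card {D : E // D ≠ 0 ∧ eval (u + a0 + D.1) f = 0} := by
    refine Nat.card_le_card_of_injective (fun a => ⟨a.1 - ⟨a0, ha0⟩, ?_, ?_⟩) ?_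
    · intro h6
      apply hne
      have : a.1 = ⟨a0, ha0⟩ := sub_eq_zero.1 h6
      have h7 := a.2
      rw [this] at h7
      exact h7
    · have h7 := a.2
      have : u + a0 + (a.1 - (⟨a0, ha0⟩ : E) : E).1 = u + a.1.1 := by
        rw [Submodule.coe_sub]; abel
      rw [this]; exact h7
    · intro x y hxy
      have := congrArg Subtype.val hxy
      simp only [sub_left_inj] at this
      exact Subtype.ext this
  rw [card_sub S.hF (V := E), S.hE, S.hF] at h1
  have hq := S.hq
  have h6 := Nat.mul_le_mul_left (q ^ 2 - 1) h5
  have h7 := h6.trans h1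
  by_contra hcon
  push Not at hcon
  have h8 := (Nat.mul_le_mul_left (q ^ 2 - 1) hcon).trans h7
  have h9 : 1 ≤ q ^ 2 := Nat.one_le_pow _ _ (by omega)
  have h10 : 1 ≤ q ^ (2 * 3) := Nat.one_le_pow _ _ (by omega)
  have h11 : 1 ≤ q := by omega
  zify [h9, h10, h11] at h8
  have hq' : (3 : ℤ) ≤ q := by exact_mod_cast hq
  have h12 : ((q : ℤ) ^ 2 - 1) * q ^ 5 - (q ^ (2 * 3) - 1) * (q - 1) =
    (q ^ 2 - 1) * (q ^ 4 - q ^ 3 + q ^ 2 - q + 1) := by ring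
  have h13 : 0 < ((q : ℤ) ^ 2 - 1) * (q ^ 4 - q ^ 3 + q ^ 2 - q + 1) := by
    apply mul_pos
    · nlinarith
    · have : (q : ℤ) ^ 4 - q ^ 3 + q ^ 2 - q + 1 = q ^ 3 * (q - 1) + q * (q - 1) + 1 := by ring
      rw [this]
      have : (0 : ℤ) ≤ q - 1 := by linarith
      positivity
  linarith

lemma line_sum [Fintype E] {u v : Fin 7 → F} (hv : v ∈ E) :
    ∑ a : E, Nat.card {s : F // eval (u + (a.1 + s • v)) f = 0} =
      q ^ 2 * Nat.card {a : E // eval (u + a.1) f = 0} := by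
  have := line_count (F := F) (E := E) ⟨v, hv⟩ (fun a => eval (u + a.1) f = 0)
  rw [S.hF] at this
  exact this

lemma cardE [Fintype E] : Fintype.card E = q ^ 6 := by
  rw [← Nat.card_eq_fintype_card, card_sub S.hF, S.hE]

lemma nu_le {u : Fin 7 → F} (hu : u ∉ W) :
    Nat.card {a : E // eval (u + a.1) f = 0} ≤ q ^ 5 := by
  have := Fintype.ofFinite E
  by_cases h : ∀ v ∈ E, dd f v u = 0
  · exact (S.nu_lt hu h).le
  · push Not at h
    obtain ⟨v, hv, hA⟩ := h
    have h1 := S.line_sum (u := u) hv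
    have h2 : ∑ a : E, Nat.card {s : F // eval (u + (a.1 + s • v)) f = 0} ≤ q ^ 6 * q := by
      rw [← S.cardE, ← Finset.card_univ, ← smul_eq_mul]
      exact Finset.sum_le_card_nsmul _ _ _ (fun a _ => S.line_le hv a.2 hA)
    rw [h1] at h2
    have h3 : q ^ 6 * q = q ^ 2 * q ^ 5 := by ring
    rw [h3] at h2
    exact Nat.le_of_mul_le_mul_left h2 (pow_pos (by have := S.hq; omega) _)

lemma nu_eq {u : Fin 7 → F} (hu : u ∉ W) :
    Nat.card {a : E // eval (u + a.1) f = 0} = q ^ 5 := by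
  classical
  have := Fintype.ofFinite E
  have h1 := coset_count E (fun v => v ∉ W) (fun v => eval v f = 0) (by
    intro v l hl hv h
    exact hv ((W.add_mem_iff_left (S.hEW hl)).1 h))
  have h3 : Fintype.card {v // v ∉ W} = q ^ 14 - q ^ 8 := by
    rw [Fintype.card_subtype_compl, ← Nat.card_eq_fintype_card, ← Nat.card_eq_fintype_card,
      card_sub S.hF]
    have := card_sub S.hF (V := W)
    rw [S.hW] at this
    rw [show Nat.card {x // x ∈ W} = Nat.card W from rfl, this]
    simp
  have h4 : q ^ 8 ≤ q ^ 14 := Nat.pow_le_pow_right (by have := S.hq; omega) (by omega)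
  have h5 : ∑ v : {v // v ∉ W}, Nat.card {l : E // eval (v.1 + l.1) f = 0} =
      ∑ v : {v // v ∉ W}, q ^ 5 := by
    rw [h1, Finset.sum_const, Finset.card_univ, h3, Nat.card_eq_fintype_card, S.cardE, smul_eq_mul]
    have hN := S.hN
    zify [h4] at hN ⊢
    have : (Nat.card {v : Fin 7 → F // v ∉ W ∧ eval v f = 0} : ℤ) = q ^ 13 - q ^ 7 := by linarith
    rw [this]; ring
  have := (Finset.sum_eq_sum_iff_of_le (fun v _ => S.nu_le v.2)).1 h5 ⟨u, hu⟩ (Finset.mem_univ _)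
  exact this

lemma exists_A {u : Fin 7 → F} (hu : u ∉ W) : ∃ v ∈ E, dd f v u ≠ 0 := by
  by_contra h
  push Not at h
  have := S.nu_lt hu h
  rw [S.nu_eq hu] at this
  exact lt_irrefl _ this

lemma line_eq {u v a : Fin 7 → F} (hu : u ∉ W) (hv : v ∈ E) (ha : a ∈ E) (hA : dd f v u ≠ 0) :
    Nat.card {s : F // eval (u + (a + s • v)) f = 0} = q := by
  have := Fintype.ofFinite E
  have h1 := S.line_sum (u := u) hv
  rw [S.nu_eq hu] at h1
  have h2 : ∑ a : E, Nat.card {s : F // eval (u + (a.1 + s • v)) f = 0} = ∑ a : E, q := by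
    rw [h1, Finset.sum_const, Finset.card_univ, S.cardE, smul_eq_mul]; ring
  exact (Finset.sum_eq_sum_iff_of_le (fun a _ => S.line_le hv a.2 hA)).1 h2 ⟨a, ha⟩
    (Finset.mem_univ _)

end Setup
end Herm

namespace Herm

lemma plane_full {F : Type} [Field F] [Fintype F] {q : ℕ} (hq : 3 ≤ q)
    (hF : Fintype.card F = q ^ 2) (Zp : F → F → Prop)
    (h1 : ∀ t, Nat.card {s // Zp t s} = q)
    (h2 : ∀ β c, (∀ t, Zp t (c + β * t)) ∨ Nat.card {t // Zp t (c + β * t)} ≤ q)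
    (t0 s0 : F) (h0 : Zp t0 s0) : ∃ β c, (∀ t, Zp t (c + β * t)) ∧ s0 = c + β * t0 := by
  classical
  by_contra hcon
  push Not at hcon
  have key : ∀ β, ((Finset.univ.erase t0).filter (fun t => Zp t (s0 + β * (t - t0)))).card
      ≤ q - 1 := by
    intro β
    have e1 : ∀ t, s0 + β * (t - t0) = (s0 - β * t0) + β * t := fun t => by ring
    rcases h2 β (s0 - β * t0) with h | h
    · exact absurd (by ring) (hcon _ _ h)
    · rw [Nat.card_eq_fintype_card, Fintype.card_subtype] at h
      rw [Finset.filter_erase, Finset.card_erase_of_mem]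
      · simp only [e1]; omega
      · simpa using h0
  have h3 : ∑ β : F, ((Finset.univ.erase t0).filter (fun t => Zp t (s0 + β * (t - t0)))).card =
      ∑ t ∈ Finset.univ.erase t0, (Finset.univ.filter (fun β : F => Zp t (s0 + β * (t - t0)))).card := by
    simp only [Finset.card_filter]
    exact Finset.sum_comm
  have h4 : ∀ t ∈ Finset.univ.erase t0,
      (Finset.univ.filter (fun β : F => Zp t (s0 + β * (t - t0)))).card = q := by
    intro t ht
    have ht : t - t0 ≠ 0 := sub_ne_zero.2 (Finset.ne_of_mem_erase ht)
    rw [← h1 t, Nat.card_eq_fintype_card, Fintype.card_subtype]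
    refine Finset.card_bij (fun β _ => s0 + β * (t - t0)) ?_ ?_ ?_
    · intro β hβ; simpa using hβ
    · intro a _ b _ hab
      have := add_left_cancel hab
      exact mul_right_cancel₀ ht this
    · intro s hs
      refine ⟨(s - s0) / (t - t0), ?_, ?_⟩
      · have : s0 + (s - s0) / (t - t0) * (t - t0) = s := by field_simp; ring
        simpa [this] using hs
      · field_simp; ring
  rw [Finset.sum_congr rfl h4, Finset.sum_const, Finset.card_erase_of_mem (Finset.mem_univ _),
    Finset.card_univ, hF, smul_eq_mul] at h3
  have h5 := Finset.sum_le_card_nsmul Finset.univ _ _ (fun β _ => key β)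
  rw [h3, Finset.card_univ, hF, smul_eq_mul] at h5
  obtain ⟨k, rfl⟩ : ∃ k, q = k + 3 := ⟨q - 3, by omega⟩
  have : (k + 3) ^ 2 - 1 = k ^ 2 + 6 * k + 8 := by
    have : (k + 3) ^ 2 = k ^ 2 + 6 * k + 8 + 1 := by ring
    omega
  rw [this, show k + 3 - 1 = k + 2 by omega] at h5
  nlinarith

lemma plane {F : Type} [Field F] [Fintype F] {q : ℕ} (hq : 3 ≤ q)
    (hF : Fintype.card F = q ^ 2) (Zp : F → F → Prop)
    (h1 : ∀ t, Nat.card {s // Zp t s} = q)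
    (h2 : ∀ β c, (∀ t, Zp t (c + β * t)) ∨ Nat.card {t // Zp t (c + β * t)} ≤ q) :
    ∃ β, ∀ t s, Zp t s ↔ Zp 0 (s - β * t) := by
  classical
  have hA := plane_full hq hF Zp h1 h2
  set L : Finset (F × F) := Finset.univ.filter (fun p => ∀ t, Zp t (p.2 + p.1 * t)) with hL
  have memL : ∀ p, p ∈ L ↔ ∀ t, Zp t (p.2 + p.1 * t) := by intro p; simp [hL]
  have h1' : ∀ t, (Finset.univ.filter (Zp t)).card = q := by
    intro t
    rw [← h1 t, Nat.card_eq_fintype_card, Fintype.card_subtype]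
  have himg : ∀ t, L.image (fun p => p.2 + p.1 * t) = Finset.univ.filter (Zp t) := by
    intro t
    ext s
    simp only [Finset.mem_image, Finset.mem_filter, Finset.mem_univ, true_and]
    constructor
    · rintro ⟨p, hp, rfl⟩
      exact (memL p).1 hp t
    · intro hs
      obtain ⟨β, c, h, e⟩ := hA t s hs
      exact ⟨(β, c), (memL _).2 h, e.symm⟩
  have meet : ∀ p p' : F × F, ∀ t t', t ≠ t' → p.2 + p.1 * t = p'.2 + p'.1 * t →
      p.2 + p.1 * t' = p'.2 + p'.1 * t' → p = p' := by
    intro p p' t t' htt e1 e2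
    have h3 : (p.1 - p'.1) * (t - t') = 0 := by linear_combination e1 - e2
    have h4 : p.1 = p'.1 := by
      rcases mul_eq_zero.1 h3 with h | h
      · exact sub_eq_zero.1 h
      · exact absurd (sub_eq_zero.1 h) htt
    refine Prod.ext h4 ?_
    rw [h4] at e1
    exact add_right_cancel e1
  have hle : L.card ≤ q := by
    by_contra hcon
    push Not at hcon
    obtain ⟨L', hL', hc⟩ := Finset.exists_subset_card_eq (Nat.succ_le_of_lt hcon)
    have h5 : ∀ t, ∃ x y, x ∈ L' ∧ y ∈ L' ∧ x ≠ y ∧ x.2 + x.1 * t = y.2 + y.1 * t := by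
      intro t
      obtain ⟨x, hx, y, hy, hxy, he⟩ := Finset.exists_ne_map_eq_of_card_lt_of_maps_to
        (s := L') (t := Finset.univ.filter (Zp t)) (by rw [h1' t, hc]; omega)
        (f := fun p => p.2 + p.1 * t) (by
          intro p hp
          simpa using (memL p).1 (hL' hp) t)
      exact ⟨x, y, hx, hy, hxy, he⟩
    choose x y hx hy hxy he using h5
    have h6 : (Finset.univ : Finset F).card ≤ (L'.powersetCard 2).card := by
      refine Finset.card_le_card_of_injOn (fun t => {x t, y t}) ?_ ?_
      · intro t _
        simp only [Finset.mem_coe, Finset.mem_powersetCard]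
        refine ⟨?_, Finset.card_pair (hxy t)⟩
        intro z hz
        simp only [Finset.mem_insert, Finset.mem_singleton] at hz
        rcases hz with rfl | rfl
        · exact hx t
        · exact hy t
      · intro t _ t' _ htt
        by_contra hne
        simp only at htt
        have m1 : x t ∈ ({x t', y t'} : Finset (F × F)) := by rw [← htt]; simp
        have m2 : y t ∈ ({x t', y t'} : Finset (F × F)) := by rw [← htt]; simp
        simp only [Finset.mem_insert, Finset.mem_singleton] at m1 m2
        have e2 : (x t).2 + (x t).1 * t' = (y t).2 + (y t).1 * t' := by
          have := he t'
          rcases m1 with m1 | m1 <;> rcases m2 with m2 | m2 <;> rw [m1, m2]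
          · exact this
          · exact this.symm
        exact hxy t (meet _ _ _ _ hne (he t) e2)
    rw [Finset.card_univ, hF, Finset.card_powersetCard, hc, Nat.choose_two_right] at h6
    have h7 : (q + 1) * (q + 1 - 1) / 2 * 2 ≤ (q + 1) * (q + 1 - 1) := Nat.div_mul_le_self _ _
    rw [Nat.add_sub_cancel] at h7
    simp only [Nat.succ_eq_add_one, Nat.add_sub_cancel] at h6
    nlinarith
  have hinj : ∀ t, Set.InjOn (fun p : F × F => p.2 + p.1 * t) L := by
    intro t
    apply Finset.card_image_iff.1
    apply le_antisymm Finset.card_image_le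
    rw [himg t, h1' t]
    exact hle
  have slope : ∀ p ∈ L, ∀ p' ∈ L, p.1 = p'.1 := by
    intro p hp p' hp'
    by_contra hne
    have hne' : p.1 - p'.1 ≠ 0 := sub_ne_zero.2 hne
    have := hinj ((p'.2 - p.2) / (p.1 - p'.1)) hp hp' (by
      simp only; field_simp; ring)
    exact hne (by rw [this])
  have hne : L.Nonempty := by
    have : (Finset.univ.filter (Zp 0)).Nonempty := by
      rw [← Finset.card_pos, h1' 0]; omega
    rw [← himg 0] at this
    exact Finset.image_nonempty.1 this
  obtain ⟨p0, hp0⟩ := hne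
  refine ⟨p0.1, fun t s => ⟨fun h => ?_, fun h => ?_⟩⟩
  · obtain ⟨β, c, hf, rfl⟩ := hA t s h
    have e := slope _ ((memL (β, c)).2 hf) _ hp0
    simp only at e
    have := hf 0
    rw [← e]
    simpa using this
  · obtain ⟨β, c, hf, e1⟩ := hA _ _ h
    have e := slope _ ((memL (β, c)).2 hf) _ hp0
    simp only at e
    have h3 := hf t
    have : c + β * t = s := by rw [e]; linear_combination -e1
    rwa [this] at h3

end Herm

namespace Herm

lemma trans_inv {F : Type} [Field F] [Fintype F] (R : Finset F) (hne : R.Nonempty)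
    (hR : R.card < Fintype.card F) (δ : F) (h : ∀ t : F, ∀ r ∈ R, r + t * δ ∈ R) : δ = 0 := by
  by_contra hδ
  obtain ⟨r, hr⟩ := hne
  have := Finset.card_le_card_of_injOn (s := Finset.univ) (t := R) (fun t : F => r + t * δ)
    (fun t _ => h t r hr) (by
      intro x _ y _ hxy
      exact mul_right_cancel₀ hδ (add_left_cancel hxy))
  rw [Finset.card_univ] at this
  omega

namespace Setup
variable {q : ℕ} {F : Type} [Field F] [Fintype F] {f : MvPolynomial (Fin 7) F}
    {W E : Submodule F (Fin 7 → F)} (S : Setup q f W E)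
include S

lemma pow_qq (x : F) : (x ^ q) ^ q = x := by
  rw [← pow_mul, ← sq, ← S.hF, FiniteField.pow_card]

lemma pow_inj {x y : F} (h : x ^ q = y ^ q) : x = y := by
  rw [← S.pow_qq x, h, S.pow_qq]

lemma slope {u v a y : Fin 7 → F} (hu : u ∉ W) (hv : v ∈ E) (hA : dd f v u ≠ 0)
    (ha : a ∈ E) (hy : y ∈ E) : ∃ β : F, ∀ t s : F,
      (eval (u + ((a + t • y) + s • v)) f = 0 ↔ eval (u + (a + (s - β * t) • v)) f = 0) := by
  obtain ⟨β, hβ⟩ := plane S.hq S.hF (fun t s => eval (u + ((a + t • y) + s • v)) f = 0)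
    (fun t => S.line_eq hu hv (E.add_mem ha (E.smul_mem t hy)) hA) (by
      intro β c
      have e : ∀ t : F, eval (u + ((a + t • y) + (c + β * t) • v)) f =
          (uni f (u + a + c • v) (y + β • v)).eval t := by
        intro t
        rw [eval_uni]
        congr 1
        congr 1
        ext i
        simp only [Pi.add_apply, Pi.smul_apply, smul_eq_mul]
        ring
      simp only [e]
      by_cases h : uni f (u + a + c • v) (y + β • v) = 0
      · left; intro t; rw [h]; simp
      · right
        exact (card_roots_le h).trans (S.deg_le (E.add_mem hy (E.smul_mem _ hv)) _))
  refine ⟨β, fun t s => ?_⟩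
  rw [hβ t s]
  simp

open Classical in
lemma fact {u v a : Fin 7 → F} (hu : u ∉ W) (hv : v ∈ E) (hA : dd f v u ≠ 0)
    (ha : a ∈ E) : uni f (u + a) v = Polynomial.C (dd f v u) *
      ∏ r ∈ Finset.univ.filter (fun s : F => eval (u + (a + s • v)) f = 0),
        (Polynomial.X - Polynomial.C r) := by
  have hc := uni_coeff_q S.hf S.hd (u + a) v
  rw [dd_add, S.A_zero ha hv, add_zero] at hc
  have hdeg := S.deg_le hv (u + a)
  have hdeg' : (uni f (u + a) v).natDegree = q :=
    le_antisymm hdeg (Polynomial.le_natDegree_of_ne_zero (by rw [hc]; exact hA))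
  have hlc : (uni f (u + a) v).leadingCoeff = dd f v u := by
    rw [Polynomial.leadingCoeff, hdeg', hc]
  have hne : uni f (u + a) v ≠ 0 := by
    intro h; rw [h] at hc; exact hA (by simpa using hc.symm)
  set R := Finset.univ.filter (fun s : F => eval (u + (a + s • v)) f = 0) with hR
  have hcR : R.card = q := by
    rw [← S.line_eq hu hv ha hA, Nat.card_eq_fintype_card, Fintype.card_subtype]
  have hle : R.val ≤ (uni f (u + a) v).roots := by
    rw [Multiset.le_iff_subset R.nodup]
    intro r hr
    have hr : r ∈ R := hr
    rw [hR, Finset.mem_filter] at hr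
    rw [Polynomial.mem_roots hne, Polynomial.IsRoot, eval_uni, add_assoc]
    exact hr.2
  have heq : R.val = (uni f (u + a) v).roots := by
    refine Multiset.eq_of_le_of_card_le hle ?_
    refine (Polynomial.card_roots' _).trans ?_
    rw [hdeg']
    exact hcR.ge
  have := Polynomial.C_leadingCoeff_mul_prod_multiset_X_sub_C (p := uni f (u + a) v) (by
    rw [← heq, hdeg']; exact hcR)
  rw [← this, hlc, ← heq]
  rfl

open Classical in
lemma slope_eq {u v a y : Fin 7 → F} (hu : u ∉ W) (hv : v ∈ E) (hA : dd f v u ≠ 0)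
    (ha : a ∈ E) (hy : y ∈ E) : ∀ t s : F,
      (eval (u + ((a + t • y) + s • v)) f = 0 ↔
        eval (u + (a + (s + t * (dd f y u ^ q / dd f v u ^ q)) • v)) f = 0) := by
  obtain ⟨β, hβ⟩ := S.slope hu hv hA ha hy
  set R := Finset.univ.filter (fun s : F => eval (u + (a + s • v)) f = 0) with hR
  have hcR : R.card = q := by
    rw [← S.line_eq hu hv ha hA, Nat.card_eq_fintype_card, Fintype.card_subtype]
  have h1 : uni f (u + a) y = Polynomial.C (dd f v u) *
      ∏ r ∈ R, (Polynomial.C (-r) + Polynomial.C (-β) * Polynomial.X) := by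
    have hlin : ∀ r ∈ R, (Polynomial.C (-r) + Polynomial.C (-β) * Polynomial.X).natDegree ≤ 1 := by
      intro r _
      rw [add_comm]
      exact Polynomial.natDegree_linear_le
    refine poly_eq_of_forall ?_ ?_ (fun t => ?_)
    · have := S.deg_le hy (u + a)
      have := S.hd
      omega
    · refine lt_of_le_of_lt (Polynomial.natDegree_C_mul_le _ _) ?_
      refine lt_of_le_of_lt (Polynomial.natDegree_prod_le _ _) ?_
      have := Finset.sum_le_card_nsmul R _ _ hlin
      have := S.hd
      simp only [smul_eq_mul, mul_one] at *
      omega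
    · have h2 := S.fact hu hv hA (E.add_mem ha (E.smul_mem t hy))
      have h3 := congrArg (Polynomial.eval 0) h2
      rw [eval_uni, zero_smul, add_zero, ← add_assoc, ← eval_uni] at h3
      rw [h3, Polynomial.eval_mul, Polynomial.eval_mul, Polynomial.eval_C, Polynomial.eval_C,
        Polynomial.eval_prod, Polynomial.eval_prod]
      refine congrArg (fun z => dd f v u * z) ?_
      refine Finset.prod_bij (fun s _ => s - β * t) ?_ ?_ ?_ ?_
      · intro s hs
        simp only [Finset.mem_filter, Finset.mem_univ, true_and, hR] at hs ⊢
        exact (hβ t s).1 hs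
      · intro x _ y _ h
        exact sub_left_inj.1 h
      · intro s hs
        refine ⟨s + β * t, ?_, by ring⟩
        simp only [Finset.mem_filter, Finset.mem_univ, true_and, hR] at hs ⊢
        rw [hβ]
        simpa using hs
      · intro s _
        simp
        ring
  have h2 := uni_coeff_q S.hf S.hd (u + a) y
  rw [dd_add, S.A_zero ha hy, add_zero, h1, Polynomial.coeff_C_mul] at h2
  have h3 := Polynomial.coeff_prod_of_natDegree_le (s := R)
    (fun r => Polynomial.C (-r) + Polynomial.C (-β) * Polynomial.X) 1 (by
      intro r _
      rw [add_comm]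
      exact Polynomial.natDegree_linear_le)
  rw [hcR, mul_one] at h3
  rw [h3] at h2
  have h4 : ∀ r : F, (Polynomial.C (-r) + Polynomial.C (-β) * Polynomial.X).coeff 1 = -β := by
    intro r
    rw [Polynomial.coeff_add, Polynomial.coeff_C_mul, Polynomial.coeff_X_one, Polynomial.coeff_C]
    simp
  simp only [h4, Finset.prod_const, hcR] at h2
  have h5 : dd f y u ^ q / dd f v u ^ q = -β := by
    rw [← h2, mul_pow, S.pow_qq]
    field_simp
  intro t s
  rw [h5, hβ]
  rw [show s - β * t = s + t * -β by ring]

open Classical in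
lemma step3 {u : Fin 7 → F} (hu : u ∉ W) :
    (∀ a ∈ E, ∀ a' ∈ E, dd f (a + a') u = dd f a u + dd f a' u) ∧
    (∀ a ∈ E, ∀ t : F, dd f (t • a) u = t ^ q * dd f a u) ∧
    ∃ P : Polynomial F, P.Monic ∧ P.natDegree = q ∧
      (∃ r1 r2, r1 ≠ r2 ∧ P.eval r1 = 0 ∧ P.eval r2 = 0) ∧
      ∀ a ∈ E, eval (u + a) f = P.eval (dd f a u ^ q) := by
  obtain ⟨v, hv, hA⟩ := S.exists_A hu
  have hb : dd f v u ^ q ≠ 0 := pow_ne_zero _ hA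
  set R := Finset.univ.filter (fun s : F => eval (u + ((0 : Fin 7 → F) + s • v)) f = 0) with hR
  have hcR : R.card = q := by
    rw [← S.line_eq hu hv E.zero_mem hA, Nat.card_eq_fintype_card, Fintype.card_subtype]
  have hq := S.hq
  have hRne : R.Nonempty := by rw [← Finset.card_pos]; omega
  have hRF : R.card < Fintype.card F := by have := S.hd; omega
  have memR : ∀ s, s ∈ R ↔ eval (u + ((0 : Fin 7 → F) + s • v)) f = 0 := by
    intro s; simp [hR]
  have key : ∀ a ∈ E, ∀ t s : F, eval (u + ((0 + t • a) + s • v)) f = 0 ↔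
      s + t * (dd f a u ^ q / dd f v u ^ q) ∈ R := by
    intro a ha t s
    rw [memR, S.slope_eq hu hv hA E.zero_mem ha]
  refine ⟨?_, ?_, ?_⟩
  · intro a ha a' ha'
    apply S.pow_inj
    rw [S.frob]
    have : (dd f (a + a') u ^ q / dd f v u ^ q) -
        (dd f a u ^ q / dd f v u ^ q + dd f a' u ^ q / dd f v u ^ q) = 0 := by
      refine trans_inv R hRne hRF _ ?_
      intro t r hr
      have h1 := S.slope_eq hu hv hA (E.add_mem E.zero_mem (E.smul_mem t ha)) ha' t
        (r - t * (dd f a u ^ q / dd f v u ^ q) - t * (dd f a' u ^ q / dd f v u ^ q))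
      rw [key a ha] at h1
      have h2 := key (a + a') (E.add_mem ha ha') t
        (r - t * (dd f a u ^ q / dd f v u ^ q) - t * (dd f a' u ^ q / dd f v u ^ q))
      rw [smul_add, ← add_assoc (0 : Fin 7 → F), h1] at h2
      have h3 := h2.1 (by convert hr using 1; ring)
      convert h3 using 1; ring
    field_simp at this
    linear_combination this
  · intro a ha t
    apply S.pow_inj
    rw [mul_pow, S.pow_qq]
    have : (dd f (t • a) u ^ q / dd f v u ^ q) - t * (dd f a u ^ q / dd f v u ^ q) = 0 := by
      refine trans_inv R hRne hRF _ ?_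
      intro t' r hr
      have h1 := key a ha (t' * t) (r - t' * t * (dd f a u ^ q / dd f v u ^ q))
      have h2 := key (t • a) (E.smul_mem t ha) t' (r - t' * t * (dd f a u ^ q / dd f v u ^ q))
      rw [smul_smul, h1] at h2
      have h3 := h2.1 (by convert hr using 1; ring)
      convert h3 using 1; ring
    field_simp at this
    linear_combination this
  · refine ⟨∏ r ∈ R, (Polynomial.X - Polynomial.C (dd f v u ^ q * r)),
      Polynomial.monic_prod_of_monic _ _ (fun r _ => Polynomial.monic_X_sub_C _), ?_, ?_, ?_⟩
    · rw [Polynomial.natDegree_prod_of_monic _ _ (fun r _ => Polynomial.monic_X_sub_C _)]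
      simp only [Polynomial.natDegree_X_sub_C, Finset.sum_const, hcR, smul_eq_mul, mul_one]
    · obtain ⟨r1, h1, r2, h2, hne⟩ := Finset.one_lt_card.1 (show 1 < R.card by omega)
      refine ⟨dd f v u ^ q * r1, dd f v u ^ q * r2, fun h => hne (mul_left_cancel₀ hb h), ?_, ?_⟩
      · rw [Polynomial.eval_prod]
        exact Finset.prod_eq_zero h1 (by simp)
      · rw [Polynomial.eval_prod]
        exact Finset.prod_eq_zero h2 (by simp)
    · intro a ha
      have h2 := S.fact hu hv hA ha
      have h3 := congrArg (Polynomial.eval 0) h2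
      rw [eval_uni, zero_smul, add_zero] at h3
      rw [h3, Polynomial.eval_mul, Polynomial.eval_C, Polynomial.eval_prod, Polynomial.eval_prod]
      have h4 : ∏ j ∈ Finset.univ.filter (fun s : F => eval (u + (a + s • v)) f = 0),
          Polynomial.eval 0 (Polynomial.X - Polynomial.C j) =
          ∏ r ∈ R, (dd f a u ^ q / dd f v u ^ q - r) := by
        have hk : ∀ s : F, eval (u + (a + s • v)) f = 0 ↔
            s + (dd f a u ^ q / dd f v u ^ q) ∈ R := by
          intro s
          have := key a ha 1 s
          simpa using this
        refine Finset.prod_bij (fun s _ => s + (dd f a u ^ q / dd f v u ^ q)) ?_ ?_ ?_ ?_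
        · intro s hs
          simp only [Finset.mem_filter, Finset.mem_univ, true_and] at hs
          exact (hk s).1 hs
        · intro x _ y _ h
          exact add_right_cancel h
        · intro s hs
          refine ⟨s - (dd f a u ^ q / dd f v u ^ q), ?_, by ring⟩
          simp only [Finset.mem_filter, Finset.mem_univ, true_and]
          rw [hk]
          simpa using hs
        · intro s _
          simp
      rw [h4]
      have h5 : ∀ r, Polynomial.eval (dd f a u ^ q)
          (Polynomial.X - Polynomial.C (dd f v u ^ q * r)) =
          dd f v u ^ q * (dd f a u ^ q / dd f v u ^ q - r) := by
        intro r
        simp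
        field_simp
      simp only [h5]
      rw [Finset.prod_mul_distrib, Finset.prod_const, hcR, S.pow_qq]

end Setup
end Herm

namespace Herm

namespace Setup
variable {q : ℕ} {F : Type} [Field F] [Fintype F] {f : MvPolynomial (Fin 7) F}
    {W E : Submodule F (Fin 7 → F)} (S : Setup q f W E)
include S

lemma q_pos : 0 < q := by have := S.hq; omega

lemma exists_out : ∃ d : Fin 7 → F, d ∉ W := by
  by_contra h
  push Not at h
  have : W = ⊤ := by rw [eq_top_iff]; intro x _; exact h x
  have h2 := S.hW
  rw [this, finrank_top] at h2
  simp at h2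

lemma theta : ∃ Θ : (Fin 7 → F) →ₗ[F] (Fin 3 → F), Function.Surjective Θ ∧
    (∀ u, Θ u = 0 ↔ u ∈ W) ∧
    ∀ g : (Fin 3 → F) →ₗ[F] F, ∃ a ∈ E, ∀ u, dd f a u = g (Θ u) := by
  classical
  let b := Module.finBasisOfFinrankEq F E S.hE
  have hsum : ∀ u, u ∉ W → ∀ c : Fin 3 → F,
      dd f (∑ j, c j • (b j : Fin 7 → F)) u = ∑ j, c j ^ q * dd f (b j) u := by
    intro u hu c
    obtain ⟨h1, h2, -⟩ := S.step3 hu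
    have m : ∀ j, c j • (b j : Fin 7 → F) ∈ E := fun j => E.smul_mem _ (b j).2
    rw [Fin.sum_univ_three, Fin.sum_univ_three, h1 _ (E.add_mem (m 0) (m 1)) _ (m 2),
      h1 _ (m 0) _ (m 1), h2 _ (b 0).2, h2 _ (b 1).2, h2 _ (b 2).2]
  let Θ : (Fin 7 → F) →ₗ[F] (Fin 3 → F) :=
    { toFun := fun u j => dd f (b j) u
      map_add' := by intro x y; ext j; simp [dd_add]
      map_smul' := by intro t x; ext j; simp [dd_smul] }
  have hΘ : ∀ u j, Θ u j = dd f (b j) u := fun u j => rfl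
  have hker : LinearMap.ker Θ ≤ W := by
    intro u hu
    by_contra hcon
    obtain ⟨v, hv, hA⟩ := S.exists_A hcon
    apply hA
    have h1 := b.sum_repr ⟨v, hv⟩
    have h2 := congrArg Subtype.val h1
    simp only [Submodule.coe_sum, Submodule.coe_smul] at h2
    rw [← h2, hsum u hcon]
    refine Finset.sum_eq_zero (fun j _ => ?_)
    have : Θ u j = 0 := by rw [LinearMap.mem_ker.1 hu]; rfl
    rw [← hΘ, this, mul_zero]
  have hrn := LinearMap.finrank_range_add_finrank_ker Θ
  have hr3 : finrank F (LinearMap.range Θ) ≤ 3 := by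
    have := Submodule.finrank_le (LinearMap.range Θ)
    simpa using this
  have h7 : finrank F (Fin 7 → F) = 7 := by simp
  rw [h7] at hrn
  have hkW : LinearMap.ker Θ = W := by
    apply Submodule.eq_of_le_of_finrank_le hker
    rw [S.hW]; omega
  have hsurj : LinearMap.range Θ = ⊤ := by
    apply Submodule.eq_top_of_finrank_eq
    rw [hkW, S.hW] at hrn
    rw [show finrank F (Fin 3 → F) = 3 by simp]
    omega
  refine ⟨Θ, LinearMap.range_eq_top.1 hsurj, fun u => by rw [← hkW, LinearMap.mem_ker], ?_⟩
  intro g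
  set a : Fin 7 → F := ∑ j, (g (fun i => if j = i then 1 else 0)) ^ q • (b j : Fin 7 → F) with ha
  have haE : a ∈ E := E.sum_mem (fun j _ => E.smul_mem _ (b j).2)
  have hout : ∀ u, u ∉ W → dd f a u = g (Θ u) := by
    intro u hu
    rw [ha, hsum u hu, LinearMap.pi_apply_eq_sum_univ g]
    refine Finset.sum_congr rfl (fun j _ => ?_)
    rw [S.pow_qq, hΘ, smul_eq_mul, mul_comm]
  refine ⟨a, haE, fun u => ?_⟩
  by_cases hu : u ∈ W
  · obtain ⟨d, hd⟩ := S.exists_out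
    have h1 := hout (u + d) (fun h => hd ((W.add_mem_iff_right hu).1 h))
    rw [dd_add, hout d hd, map_add, map_add] at h1
    exact add_right_cancel h1
  · exact hout u hu

lemma uni_comp {u a : Fin 7 → F} (hu : u ∉ W) (ha : a ∈ E) {P : Polynomial F}
    (hP : P.natDegree = q) (hPe : ∀ a ∈ E, eval (u + a) f = P.eval (dd f a u ^ q)) (m : ℕ) :
    (uni f u a).coeff m = P.coeff m * (dd f a u ^ q) ^ m := by
  have hd := S.hd
  have : uni f u a = P.comp (Polynomial.C (dd f a u ^ q) * Polynomial.X) := by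
    refine poly_eq_of_forall ?_ ?_ (fun t => ?_)
    · have := S.deg_le ha u
      omega
    · refine lt_of_le_of_lt (Polynomial.natDegree_comp_le) ?_
      have : (Polynomial.C (dd f a u ^ q) * Polynomial.X).natDegree ≤ 1 :=
        (Polynomial.natDegree_C_mul_le _ _).trans Polynomial.natDegree_X_le
      rw [hP]
      nlinarith
    · rw [eval_uni, hPe _ (E.smul_mem t ha), (S.step3 hu).2.1 a ha, Polynomial.eval_comp, mul_pow,
        S.pow_qq]
      congr 1
      simp
      ring
  rw [this, Polynomial.comp_C_mul_X_coeff]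

lemma pencil (P : (Fin 7 → F) → Polynomial F)
    (hPd : ∀ u, u ∉ W → (P u).natDegree = q)
    (hPe : ∀ u, u ∉ W → ∀ a ∈ E, eval (u + a) f = (P u).eval (dd f a u ^ q))
    {u d a a' : Fin 7 → F} (hout : ∀ t : F, u + t • d ∉ W) (ha : a ∈ E) (ha' : a' ∈ E)
    (h1 : dd f a u = 1) (h2 : dd f a d = 0) (h3 : dd f a' u = 0) (h4 : dd f a' d = 1) :
    (∀ m, 2 ≤ m → m < q → (P u).coeff m = 0) ∧
      (P (u + d)).coeff 1 = (P u).coeff 1 := by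
  have hq := S.hq
  have hF := S.hF
  have hA : ∀ t : F, dd f a (u + t • d) = 1 := by
    intro t; rw [dd_add, dd_smul, h1, h2]; ring
  have hA' : ∀ t : F, dd f a' (u + t • d) = t := by
    intro t; rw [dd_add, dd_smul, h3, h4]; ring
  have key : ∀ m, ∃ e e' : Polynomial F, e.natDegree ≤ q + 1 - m ∧ e'.natDegree ≤ q + 1 - m ∧
      (∀ t, e.eval t = (P (u + t • d)).coeff m) ∧ ∀ t, e'.eval t = e.eval t * t ^ (q * m) := by
    intro m
    obtain ⟨e, he, hev⟩ := uni_coeff_poly S.hf.totalDegree_le u d a m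
    obtain ⟨e', he', hev'⟩ := uni_coeff_poly S.hf.totalDegree_le u d a' m
    have hev2 : ∀ t, e.eval t = (P (u + t • d)).coeff m := by
      intro t
      rw [hev, S.uni_comp (hout t) ha (hPd _ (hout t)) (hPe _ (hout t)), hA]
      simp
    refine ⟨e, e', he, he', hev2, fun t => ?_⟩
    rw [hev2, hev', S.uni_comp (hout t) ha' (hPd _ (hout t)) (hPe _ (hout t)), hA', ← pow_mul]
  constructor
  · intro m hm hmq
    obtain ⟨e, e', he, he', hev, hee⟩ := key m
    have hn : q * (q + 1 - m) + m < q ^ 2 := by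
      obtain ⟨k, rfl⟩ : ∃ k, m = k + 2 := ⟨m - 2, by omega⟩
      obtain ⟨l, rfl⟩ : ∃ l, q = k + 3 + l := ⟨q - (k + 3), by omega⟩
      rw [show k + 3 + l + 1 - (k + 2) = l + 2 by omega]
      nlinarith
    have hid : e' ^ q = e ^ q * Polynomial.X ^ m := by
      refine poly_eq_of_forall ?_ ?_ (fun t => ?_)
      · refine lt_of_le_of_lt Polynomial.natDegree_pow_le ?_
        have := Nat.mul_le_mul_left q he'
        rw [hF]; omega
      · refine lt_of_le_of_lt Polynomial.natDegree_mul_le ?_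
        have h5 : (e ^ q).natDegree ≤ q * e.natDegree := Polynomial.natDegree_pow_le
        have h6 : (Polynomial.X ^ m : Polynomial F).natDegree ≤ m := Polynomial.natDegree_X_pow_le _
        have := Nat.mul_le_mul_left q he
        rw [hF]; omega
      · rw [Polynomial.eval_mul, Polynomial.eval_pow, Polynomial.eval_pow, Polynomial.eval_pow,
          hee, mul_pow, Polynomial.eval_X, mul_comm q m, pow_mul, S.pow_qq]
    have he0 : e = 0 := by
      by_contra hne
      have h7 := congrArg Polynomial.natDegree hid
      rw [Polynomial.natDegree_mul (pow_ne_zero _ hne) (pow_ne_zero _ Polynomial.X_ne_zero),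
        Polynomial.natDegree_pow, Polynomial.natDegree_pow, Polynomial.natDegree_X_pow] at h7
      have h8 : q ∣ m := (Nat.dvd_add_right (Dvd.intro _ rfl)).1 (h7 ▸ Dvd.intro _ rfl)
      have := Nat.le_of_dvd (by omega) h8
      omega
    have := hev 0
    rw [he0] at this
    simpa using this.symm
  · obtain ⟨e, e', he, he', hev, hee⟩ := key 1
    rw [Nat.add_sub_cancel] at he he'
    have hid : e' = e * Polynomial.X ^ q := by
      refine poly_eq_of_forall ?_ ?_ (fun t => ?_)
      · rw [hF]; nlinarith
      · refine lt_of_le_of_lt Polynomial.natDegree_mul_le ?_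
        have h6 : (Polynomial.X ^ q : Polynomial F).natDegree ≤ q := Polynomial.natDegree_X_pow_le _
        rw [hF]; nlinarith
      · rw [Polynomial.eval_mul, Polynomial.eval_pow, Polynomial.eval_X, hee, mul_one]
    have hc : e.natDegree = 0 := by
      by_cases hne : e = 0
      · rw [hne]; simp
      · have h7 := congrArg Polynomial.natDegree hid
        rw [Polynomial.natDegree_mul hne (pow_ne_zero _ Polynomial.X_ne_zero),
          Polynomial.natDegree_X_pow] at h7
        omega
    have e1 := hev 1
    have e0 := hev 0
    rw [Polynomial.eq_C_of_natDegree_eq_zero hc] at e1 e0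
    rw [one_smul] at e1
    rw [zero_smul, add_zero] at e0
    simp only [Polynomial.eval_C] at e0 e1
    rw [← e1, ← e0]

lemma step4 : ∃ c : F, ∀ u, u ∉ W → ∃ r1 r2 : F, r1 ≠ r2 ∧
    r1 ^ q + c * r1 + eval u f = 0 ∧ r2 ^ q + c * r2 + eval u f = 0 := by
  classical
  have hq := S.hq
  have h := fun u (hu : u ∉ W) => (S.step3 hu).2.2
  choose! P hPm hPd hPr hPe using h
  obtain ⟨Θ, hsur, hker, hdual⟩ := S.theta
  -- independence gives the pencil conclusions
  have indep1 : ∀ u d : Fin 7 → F, Θ u ∉ Submodule.span F {Θ d} →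
      Θ d ∉ Submodule.span F {Θ u} →
      (∀ m, 2 ≤ m → m < q → (P u).coeff m = 0) ∧ (P (u + d)).coeff 1 = (P u).coeff 1 := by
    intro u d h1 h2
    have ex : ∀ x y : Fin 3 → F, x ∉ Submodule.span F {y} → ∃ g : (Fin 3 → F) →ₗ[F] F,
        g x = 1 ∧ g y = 0 := by
      intro x y hxy
      obtain ⟨g, hg, hle⟩ := Submodule.exists_le_ker_of_notMem hxy
      refine ⟨(g x)⁻¹ • g, ?_, ?_⟩
      · simp [hg]
      · have : g y = 0 := hle (Submodule.mem_span_singleton_self y)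
        simp [this]
    obtain ⟨g, g1, g2⟩ := ex _ _ h1
    obtain ⟨g', g1', g2'⟩ := ex _ _ h2
    obtain ⟨a, ha, hga⟩ := hdual g
    obtain ⟨a', ha', hga'⟩ := hdual g'
    refine S.pencil P hPd hPe (a := a) (a' := a') ?_ ha ha' (by rw [hga, g1]) (by rw [hga, g2])
      (by rw [hga', g2']) (by rw [hga', g1'])
    intro t ht
    have h3 := congrArg g ((hker _).2 ht)
    rw [map_add, map_smul, map_add, map_smul, g1, g2] at h3
    simp at h3
  have third : ∀ u u' : Fin 7 → F, ∃ d, Θ d ∉ Submodule.span F {Θ u, Θ u'} := by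
    intro u u'
    by_contra hcon
    push Not at hcon
    have htop : Submodule.span F {Θ u, Θ u'} = ⊤ := by
      rw [eq_top_iff]
      intro x _
      obtain ⟨d, rfl⟩ := hsur x
      exact hcon d
    have h1 : finrank F (Submodule.span F (({Θ u, Θ u'} : Finset (Fin 3 → F)) : Set (Fin 3 → F)))
        ≤ 2 := (finrank_span_finset_le_card _).trans Finset.card_le_two
    rw [Finset.coe_pair, htop, finrank_top] at h1
    simp at h1
  have swap : ∀ x y : Fin 3 → F, x ≠ 0 → y ∉ Submodule.span F {x} → x ∉ Submodule.span F {y} := by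
    intro x y hx hy hcon
    obtain ⟨t, rfl⟩ := Submodule.mem_span_singleton.1 hcon
    have ht : t ≠ 0 := by rintro rfl; simp at hx
    apply hy
    refine Submodule.mem_span_singleton.2 ⟨t⁻¹, ?_⟩
    rw [smul_smul, inv_mul_cancel₀ ht, one_smul]
  have good : ∀ u d, u ∉ W → Θ d ∉ Submodule.span F {Θ u} →
      (∀ m, 2 ≤ m → m < q → (P u).coeff m = 0) ∧ (P d).coeff 1 = (P u).coeff 1 := by
    intro u d hu hd
    have hu' := swap _ _ (fun h => hu ((hker u).1 h)) hd
    have h1 := indep1 u d hu' hd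
    have h2 := indep1 d u hd hu'
    refine ⟨h1.1, ?_⟩
    rw [← h1.2, ← h2.2, add_comm]
  obtain ⟨u0, hu0⟩ := S.exists_out
  refine ⟨(P u0).coeff 1, fun u hu => ?_⟩
  obtain ⟨d, hd⟩ := third u u0
  have hd1 : Θ d ∉ Submodule.span F {Θ u} := fun h =>
    hd (Submodule.span_mono (by simp) h)
  have hd2 : Θ d ∉ Submodule.span F {Θ u0} := fun h =>
    hd (Submodule.span_mono (by simp) h)
  have c1 := good u d hu hd1
  have c2 := good u0 d hu0 hd2
  have hlin : (P u).coeff 1 = (P u0).coeff 1 := by rw [← c1.2, c2.2]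
  have h0 : (P u).coeff 0 = eval u f := by
    have h1 := uni_coeff_zero f u 0
    rw [S.uni_comp hu E.zero_mem (hPd u hu) (hPe u hu)] at h1
    simpa using h1
  have hPeq : P u = Polynomial.X ^ q + Polynomial.C ((P u0).coeff 1) * Polynomial.X +
      Polynomial.C (eval u f) := by
    ext n
    rw [Polynomial.coeff_add, Polynomial.coeff_add, Polynomial.coeff_X_pow, Polynomial.coeff_C_mul,
      Polynomial.coeff_X, Polynomial.coeff_C]
    rcases Nat.lt_trichotomy n q with hn | hn | hn
    · rcases Nat.lt_or_ge n 2 with h2 | h2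
      · interval_cases n
        · rw [h0]; simp; intro h; omega
        · rw [hlin]; simp; omega
      · rw [c1.1 n h2 hn, if_neg (by omega), if_neg (by omega), if_neg (by omega)]
        simp
    · have := hPm u hu
      rw [Polynomial.Monic, Polynomial.leadingCoeff, hPd u hu] at this
      rw [hn, this, if_pos rfl, if_neg (by omega), if_neg (by omega)]
      simp
    · rw [Polynomial.coeff_eq_zero_of_natDegree_lt (by rw [hPd u hu]; exact hn),
        if_neg (by omega), if_neg (by omega), if_neg (by omega)]
      simp
  obtain ⟨r1, r2, hne, e1, e2⟩ := hPr u hu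
  rw [hPeq] at e1 e2
  simp only [Polynomial.eval_add, Polynomial.eval_mul, Polynomial.eval_pow, Polynomial.eval_X,
    Polynomial.eval_C] at e1 e2
  exact ⟨r1, r2, hne, e1, e2⟩

end Setup
end Herm

namespace Herm

namespace Setup
variable {q : ℕ} {F : Type} [Field F] [Fintype F] {f : MvPolynomial (Fin 7) F}
    {W E : Submodule F (Fin 7 → F)} (S : Setup q f W E)
include S

lemma frob_neg (x : F) : (-x) ^ q = -(x ^ q) := by
  have := S.frob x (-x)
  rw [add_neg_cancel, zero_pow S.q_pos.ne'] at this
  linear_combination -this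

lemma frob_sub (x y : F) : (x - y) ^ q = x ^ q - y ^ q := by
  rw [sub_eq_add_neg, S.frob, S.frob_neg]; ring

lemma frob_sum {ι : Type*} (s : Finset ι) (g : ι → F) :
    (∑ i ∈ s, g i) ^ q = ∑ i ∈ s, g i ^ q :=
  map_sum (AddMonoidHom.mk' (fun x : F => x ^ q) S.frob) g s

lemma step5 : ∃ κ : F, κ ≠ 0 ∧ ∀ u, u ∉ W → (κ * eval u f) ^ q = κ * eval u f := by
  have hq := S.hq
  have hs0 : ∃ s0 : F, s0 ^ q ≠ s0 := by
    by_contra h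
    push Not at h
    have : (Polynomial.X ^ q : Polynomial F) = Polynomial.X := by
      refine poly_eq_of_forall ?_ ?_ (fun t => ?_)
      · rw [Polynomial.natDegree_X_pow]; have := S.hd; omega
      · rw [Polynomial.natDegree_X]; have := S.hd; omega
      · simp [h t]
    have := congrArg Polynomial.natDegree this
    rw [Polynomial.natDegree_X_pow, Polynomial.natDegree_X] at this
    omega
  obtain ⟨s0, hs0⟩ := hs0
  obtain ⟨c, hc⟩ := S.step4
  obtain ⟨u0, hu0⟩ := S.exists_out
  obtain ⟨r1, r2, hne, h1, h2⟩ := hc u0 hu0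
  have hρ : r1 - r2 ≠ 0 := sub_ne_zero.2 hne
  have hcρ : (r1 - r2) ^ q + c * (r1 - r2) = 0 := by
    rw [S.frob_sub]; linear_combination h1 - h2
  set ρ := r1 - r2 with hρd
  have hρq : ρ ^ q ≠ 0 := pow_ne_zero _ hρ
  have hd0 : s0 - s0 ^ q ≠ 0 := sub_ne_zero.2 (Ne.symm hs0)
  have hdq : (s0 - s0 ^ q) ^ q = -(s0 - s0 ^ q) := by
    rw [S.frob_sub, S.pow_qq]; ring
  refine ⟨(s0 - s0 ^ q)⁻¹ / ρ ^ q, div_ne_zero (inv_ne_zero hd0) hρq, fun u hu => ?_⟩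
  obtain ⟨r, -, -, hr, -⟩ := hc u hu
  have h3 : eval u f / ρ ^ q = r / ρ - (r / ρ) ^ q := by
    rw [div_pow]
    have hcc : c = - ρ ^ q / ρ := by
      field_simp
      linear_combination hcρ
    rw [hcc] at hr
    field_simp at hr ⊢
    linear_combination hr
  have h4 : (s0 - s0 ^ q)⁻¹ / ρ ^ q * eval u f = (s0 - s0 ^ q)⁻¹ * (r / ρ - (r / ρ) ^ q) := by
    rw [← h3]; ring
  rw [h4, mul_pow, inv_pow, hdq, S.frob_sub, S.pow_qq, inv_neg]
  ring

lemma scale {κ : F} (hκ : κ ≠ 0) : Setup q (C κ * f) W E := by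
  have e : ∀ v, eval v (C κ * f) = 0 ↔ eval v f = 0 := by
    intro v
    rw [map_mul, eval_C]
    simp [hκ]
  exact
  { hq := S.hq
    hF := S.hF
    hqF := S.hqF
    frob := S.frob
    hf := by
      have := (isHomogeneous_C (Fin 7) κ).mul S.hf
      rwa [zero_add] at this
    hEW := S.hEW
    hW := S.hW
    hE := S.hE
    hWE := by intro v hv; rw [e, S.hWE v hv]
    hN := by simp only [e]; exact S.hN
    hns := by
      intro u hu
      obtain ⟨a, ha, h⟩ := S.hns u hu
      exact ⟨a, ha, fun h' => h ((e _).1 h')⟩ }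

lemma frobpoly (g : Polynomial F) (hg : g.natDegree ≤ q + 1) : ∃ h : Polynomial F,
    h.natDegree + 1 < Fintype.card F ∧ (∀ t, h.eval t = g.eval t ^ q) ∧
      h.coeff q = g.coeff 1 ^ q := by
  have hq := S.hq
  set σ : ℕ → ℕ := fun k => if k < q then q * k else if k = q then 1 else q + 1 with hσ
  refine ⟨∑ k ∈ Finset.range (q + 2), Polynomial.C (g.coeff k ^ q) * Polynomial.X ^ σ k, ?_, ?_, ?_⟩
  · have : (∑ k ∈ Finset.range (q + 2),
        Polynomial.C (g.coeff k ^ q) * Polynomial.X ^ σ k).natDegree ≤ q * (q - 1) := by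
      refine Polynomial.natDegree_sum_le_of_forall_le _ _ (fun k hk => ?_)
      refine (Polynomial.natDegree_C_mul_X_pow_le _ _).trans ?_
      obtain ⟨l, rfl⟩ : ∃ l, q = l + 3 := ⟨q - 3, by omega⟩
      simp only [hσ]
      rw [show l + 3 - 1 = l + 2 by omega]
      split_ifs
      · exact Nat.mul_le_mul_left _ (by omega)
      · nlinarith
      · nlinarith
    rw [S.hF]
    obtain ⟨l, rfl⟩ : ∃ l, q = l + 3 := ⟨q - 3, by omega⟩
    rw [show l + 3 - 1 = l + 2 by omega] at this
    nlinarith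
  · intro t
    rw [Polynomial.eval_finsetSum, Polynomial.eval_eq_sum_range' (Nat.lt_succ_of_le hg), S.frob_sum]
    refine Finset.sum_congr rfl (fun k hk => ?_)
    have hk := Finset.mem_range.1 hk
    rw [Polynomial.eval_mul, Polynomial.eval_C, Polynomial.eval_pow, Polynomial.eval_X, mul_pow]
    congr 1
    simp only [hσ]
    split_ifs with h1 h2
    · rw [mul_comm, pow_mul]
    · rw [h2, pow_one, S.pow_qq]
    · rw [show k = q + 1 by omega, pow_succ, mul_pow, S.pow_qq, mul_comm]
  · rw [Polynomial.finsetSum_coeff, Finset.sum_eq_single 1]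
    · have : σ 1 = q := by simp only [hσ]; rw [if_pos (by omega), mul_one]
      rw [this, Polynomial.coeff_C_mul, Polynomial.coeff_X_pow_self, mul_one]
    · intro k hk hk1
      rw [Polynomial.coeff_C_mul, Polynomial.coeff_X_pow, if_neg, mul_zero]
      simp only [hσ]
      split_ifs
      · intro h
        have : q * 1 = q * k := by omega
        exact hk1 (Nat.eq_of_mul_eq_mul_left S.q_pos this).symm
      · omega
      · omega
    · intro h; exact absurd (Finset.mem_range.2 (by omega)) h

lemma fix_all (hfix : ∀ u, u ∉ W → (eval u f) ^ q = eval u f) (u : Fin 7 → F) :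
    (eval u f) ^ q = eval u f := by
  by_cases hu : u ∈ W
  · obtain ⟨d, hd⟩ := S.exists_out
    have hdeg := natDegree_uni_le f S.hf.totalDegree_le u d
    obtain ⟨h, h1, h2, -⟩ := S.frobpoly (uni f u d) hdeg
    have : uni f u d = h := by
      refine poly_eq_of_ne (a := 0) ?_ h1 (fun t ht => ?_)
      · have := S.hq; rw [S.hF]; nlinarith
      · rw [h2, eval_uni, hfix]
        intro hcon
        rw [W.add_mem_iff_right hu] at hcon
        exact hd ((W.smul_mem_iff ht).1 hcon)
    have h3 := h2 0
    rw [← this, eval_uni, zero_smul, add_zero] at h3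
    exact h3.symm
  · exact hfix u hu

lemma dd_symm (hfix : ∀ u, (eval u f) ^ q = eval u f) (x y : Fin 7 → F) :
    dd f y x = dd f x y ^ q := by
  have hdeg := natDegree_uni_le f S.hf.totalDegree_le x y
  obtain ⟨h, h1, h2, h3⟩ := S.frobpoly (uni f x y) hdeg
  have : uni f x y = h := by
    refine poly_eq_of_ne (a := 0) ?_ h1 (fun t ht => ?_)
    · have := S.hq; rw [S.hF]; nlinarith
    · rw [h2, eval_uni, hfix]
  rw [← uni_coeff_q S.hf S.hd, ← uni_coeff_one, this, h3, this]

lemma eval_eq_dd (x : Fin 7 → F) : eval x f = dd f x x := by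
  rw [dd_self S.hf]
  push_cast
  rw [S.hqF]; ring

lemma dd_E_inj (hfix : ∀ u, (eval u f) ^ q = eval u f) {z : Fin 7 → F} (hz : z ∈ E)
    (h : ∀ u, dd f u z = 0) : z = 0 := by
  classical
  obtain ⟨Θ, hsur, hker, hdual⟩ := S.theta
  choose u hu using fun i : Fin 3 => hsur (fun j => if j = i then 1 else 0)
  let T : E →ₗ[F] (Fin 3 → F) :=
    { toFun := fun v i => dd f (u i) v
      map_add' := by intro x y; ext j; simp [dd_add]
      map_smul' := by intro t x; ext j; simp [dd_smul] }
  have hT : ∀ v i, T v i = dd f (u i) v := fun _ _ => rfl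
  have hTs : Function.Surjective T := by
    intro c
    let g : (Fin 3 → F) →ₗ[F] F :=
      { toFun := fun x => ∑ j, c j ^ q * x j
        map_add' := by intro x y; simp [mul_add, Finset.sum_add_distrib]
        map_smul' := by
          intro t x
          simp only [Pi.smul_apply, smul_eq_mul, RingHom.id_apply, Finset.mul_sum]
          refine Finset.sum_congr rfl (fun j _ => by ring) }
    have hg : ∀ x, g x = ∑ j, c j ^ q * x j := fun _ => rfl
    obtain ⟨a, ha, hga⟩ := hdual g
    refine ⟨⟨a, ha⟩, ?_⟩
    ext i
    rw [hT, S.dd_symm hfix a (u i), hga, hu, hg]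
    simp [S.pow_qq]
  have hTi : Function.Injective T :=
    (LinearMap.injective_iff_surjective_of_finrank_eq_finrank (by rw [S.hE]; simp)).2 hTs
  have : (⟨z, hz⟩ : E) = 0 := by
    apply hTi
    rw [map_zero]
    ext i
    rw [hT, h]; rfl
  exact congrArg Subtype.val this

lemma herm_aux (hfix : ∀ u, (eval u f) ^ q = eval u f) :
    ∃ M : Matrix (Fin 7) (Fin 7) F, IsUnit M.det ∧ M.transpose = M.map (· ^ q) ∧
      ∀ x : Fin 7 → F, eval x f = ∑ i, ∑ j, x i * M i j * (x j) ^ q := by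
  classical
  have hsym := S.dd_symm hfix
  let e : Fin 7 → Fin 7 → F := fun i => Pi.single i 1
  have hlin : ∀ x y : Fin 7 → F, dd f x y = ∑ i, y i * dd f x (e i) := by
    intro x y
    have h1 : ∀ i, dd f x (e i) = eval x (pderiv i f) := by
      intro i
      simp only [dd, e, Pi.single_apply]
      simp
    simp only [h1]
    rfl
  have hM : ∀ x : Fin 7 → F, ∀ i, dd f x (e i) = ∑ j, x j ^ q * dd f (e j) (e i) := by
    intro x i
    rw [hsym (e i) x, hlin (e i) x, S.frob_sum]
    refine Finset.sum_congr rfl (fun j _ => ?_)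
    rw [mul_pow, ← hsym]
  refine ⟨Matrix.of (fun i j => dd f (e j) (e i)), ?_, ?_, ?_⟩
  · rw [isUnit_iff_ne_zero]
    intro hdet
    obtain ⟨z, hz0, hz⟩ := Matrix.exists_vecMul_eq_zero_iff.2 hdet
    have h1 : ∀ j, dd f (e j) z = 0 := by
      intro j
      have := congrFun hz j
      rw [hlin]
      simpa [Matrix.vecMul, dotProduct] using this
    have h2 : ∀ y, dd f z y = 0 := by
      intro y
      rw [hlin]
      refine Finset.sum_eq_zero (fun j _ => ?_)
      rw [hsym (e j) z, h1, zero_pow S.q_pos.ne', mul_zero]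
    have h3 : ∀ y, dd f y z = 0 := by
      intro y
      rw [hsym z y, h2, zero_pow S.q_pos.ne']
    have h4 : ∀ y, eval (y + z) f = eval y f := by
      intro y
      rw [S.eval_eq_dd, dd_add, h3, add_zero, hsym y (y + z), dd_add, h3, add_zero, ← S.eval_eq_dd,
        hfix]
    have hzW : z ∈ W := by
      by_contra hzW
      obtain ⟨a, ha, hne⟩ := S.hns z hzW
      rw [add_comm, h4] at hne
      exact hne (S.E_zero ha)
    have hzE : z ∈ E := by
      rw [← S.hWE z hzW]
      have := h4 0
      rw [zero_add, S.E_zero E.zero_mem] at this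
      exact this
    exact hz0 (S.dd_E_inj hfix hzE h3)
  · ext i j
    simp only [Matrix.transpose_apply, Matrix.of_apply, Matrix.map_apply]
    exact hsym _ _
  · intro x
    rw [S.eval_eq_dd, hlin]
    refine Finset.sum_congr rfl (fun i _ => ?_)
    rw [hM, Finset.mul_sum]
    refine Finset.sum_congr rfl (fun j _ => ?_)
    simp only [Matrix.of_apply]
    ring

lemma herm : ∃ M : Matrix (Fin 7) (Fin 7) F, IsUnit M.det ∧ M.transpose = M.map (· ^ q) ∧
      ∀ x : Fin 7 → F, eval x f = 0 ↔ ∑ i, ∑ j, x i * M i j * (x j) ^ q = 0 := by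
  obtain ⟨κ, hκ, hfix⟩ := S.step5
  have S' := S.scale hκ
  have hfix' := S'.fix_all (by
    intro u hu
    rw [map_mul, eval_C]
    exact hfix u hu)
  obtain ⟨M, h1, h2, h3⟩ := S'.herm_aux hfix'
  refine ⟨M, h1, h2, fun x => ?_⟩
  rw [← h3 x, map_mul, eval_C]
  simp [hκ]

end Setup
end Herm

namespace Herm

lemma cone_count {F : Type} [Field F] [Fintype F] {n : ℕ} (p : (Fin n → F) → Prop) (h0 : p 0)
    (hp : ∀ (t : F) v, t ≠ 0 → (p (t • v) ↔ p v)) :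
    Nat.card {v // p v} =
      Set.ncard {P : Projectivization F (Fin n → F) | p P.rep} * (Fintype.card F - 1) + 1 := by
  classical
  have h1 : Nat.card {v // p v} = Nat.card {v // v ≠ 0 ∧ p v} + 1 := by
    rw [Nat.card_eq_fintype_card, Nat.card_eq_fintype_card, Fintype.card_subtype,
      Fintype.card_subtype]
    have : Finset.univ.filter (fun v => v ≠ 0 ∧ p v) = (Finset.univ.filter p).erase 0 := by
      ext v; simp
    rw [this, Finset.card_erase_add_one (by simpa using h0)]
  rw [h1]
  congr 1
  have hbij : Function.Bijective (fun x : {P : Projectivization F (Fin n → F) // p P.rep} × Fˣ =>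
      (⟨x.2.1 • x.1.1.rep, smul_ne_zero x.2.ne_zero x.1.1.rep_nonzero,
        (hp _ _ x.2.ne_zero).2 x.1.2⟩ : {v // v ≠ 0 ∧ p v})) := by
    constructor
    · rintro ⟨⟨P, hP⟩, t⟩ ⟨⟨P', hP'⟩, t'⟩ h
      have h := congrArg Subtype.val h
      simp only at h
      have hPP : P = P' := by
        rw [← P.mk_rep, ← P'.mk_rep, Projectivization.mk_eq_mk_iff']
        refine ⟨t.1⁻¹ * t'.1, ?_⟩
        rw [mul_smul, ← h, smul_smul, inv_mul_cancel₀ t.ne_zero, one_smul]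
      subst hPP
      have : t.1 = t'.1 := smul_left_injective F P.rep_nonzero h
      have : t = t' := Units.ext this
      rw [this]
    · rintro ⟨v, hv, hpv⟩
      obtain ⟨a, ha⟩ := Projectivization.exists_smul_eq_mk_rep F v hv
      have ha' : a.1 • v = (Projectivization.mk F v hv).rep := ha
      refine ⟨(⟨Projectivization.mk F v hv, ?_⟩, a⁻¹), ?_⟩
      · rw [← ha']; exact (hp _ _ a.ne_zero).2 hpv
      · apply Subtype.ext
        simp only
        rw [← ha', smul_smul, Units.inv_mul, one_smul]
  rw [← Nat.card_congr (Equiv.ofBijective _ hbij), Nat.card_prod]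
  congr 1
  rw [Nat.card_eq_fintype_card, Fintype.card_units]

lemma mem_projPts {F : Type} [Field F] {n : ℕ} (W : Submodule F (Fin n → F))
    (P : Projectivization F (Fin n → F)) : P ∈ projPts W ↔ P.rep ∈ W := by
  rw [projPts]
  change P.submodule ≤ W ↔ _
  rw [Projectivization.submodule_eq, Submodule.span_singleton_le_iff_mem]

lemma frob_field {F : Type} [Field F] [Fintype F] {q : ℕ}
    (hq : ∃ p k : ℕ, p.Prime ∧ 0 < k ∧ q = p ^ k) (hF : Fintype.card F = q ^ 2) :
    (q : F) = 0 ∧ ∀ x y : F, (x + y) ^ q = x ^ q + y ^ q := by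
  obtain ⟨p, k, hp, hk, rfl⟩ := hq
  haveI : Fact p.Prime := ⟨hp⟩
  have hp0 : (p : F) = 0 := by
    have := Nat.cast_card_eq_zero F
    rw [hF] at this
    push_cast at this
    exact eq_zero_of_pow_eq_zero (eq_zero_of_pow_eq_zero this)
  haveI : CharP F p := by
    obtain ⟨r, hr⟩ := CharP.exists F
    have h1 : r ∣ p := (CharP.cast_eq_zero_iff F r p).1 hp0
    rcases (Nat.dvd_prime hp).1 h1 with h | h
    · exact absurd h (CharP.char_ne_one F r)
    · rwa [← h]
  refine ⟨?_, fun x y => add_pow_char_pow x y p k⟩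
  push_cast
  rw [hp0, zero_pow hk.ne']

end Herm

/-- If `q > 2` is a prime power and `S` is a hypersurface of `PG(6,q²)` of degree `q+1`
defined over `GF(q²)`, containing no solid, with `q^11+q^9+q^7+q^4+q^2+1` rational points,
and some solid meets `S` in exactly `q^4+q^2+1` points, then `S` is a non-singular
Hermitian variety `H(6,q²)`. -/
theorem stmt_1 (q : ℕ) (hq : ∃ p k : ℕ, p.Prime ∧ 0 < k ∧ q = p ^ k) (hq2 : 2 < q)
    (F : Type) [Field F] [Fintype F] (hcardF : Fintype.card F = q ^ 2)
    (f : MvPolynomial (Fin 7) F) (hf0 : f ≠ 0) (hfdeg : f.IsHomogeneous (q + 1))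
    (S : Set (Projectivization F (Fin 7 → F))) (hS : S = hypersurfacePts f)
    (hnosolid : ¬ ∃ W : Submodule F (Fin 7 → F), Module.finrank F W = 4 ∧ projPts W ⊆ S)
    (hcardS : S.ncard = q ^ 11 + q ^ 9 + q ^ 7 + q ^ 4 + q ^ 2 + 1)
    (hsolid : ∃ W : Submodule F (Fin 7 → F), Module.finrank F W = 4 ∧
      (S ∩ projPts W).ncard = q ^ 4 + q ^ 2 + 1) :
    IsNonsingularHermitian q S := by
  classical
  subst hS
  obtain ⟨hqF, frob⟩ := Herm.frob_field hq hcardF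
  obtain ⟨W, hW, hWc⟩ := hsolid
  have hz0 : eval (0 : Fin 7 → F) f = 0 := by
    have := Herm.eval_smul' hfdeg (0 : F) 0
    rw [zero_smul, zero_pow (by omega), zero_mul] at this
    exact this
  have hsc : ∀ (t : F) v, t ≠ 0 → (eval (t • v) f = 0 ↔ eval v f = 0) := by
    intro t v ht
    rw [Herm.eval_smul' hfdeg]
    simp [ht]
  have hpow : 1 ≤ q ^ 2 := Nat.one_le_pow _ _ (by omega)
  have hall : Nat.card {v : Fin 7 → F // eval v f = 0} + q ^ 7 = q ^ 13 + q ^ 6 := by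
    have h1 := Herm.cone_count (fun v : Fin 7 → F => eval v f = 0) hz0 hsc
    have h2 : Set.ncard {P : Projectivization F (Fin 7 → F) | eval P.rep f = 0} =
      q ^ 11 + q ^ 9 + q ^ 7 + q ^ 4 + q ^ 2 + 1 := hcardS
    rw [h2, hcardF] at h1
    rw [h1]
    zify [hpow]
    ring
  have hNW : Nat.card {v : Fin 7 → F // v ∈ W ∧ eval v f = 0} = q ^ 6 := by
    have h1 := Herm.cone_count (fun v : Fin 7 → F => v ∈ W ∧ eval v f = 0)
      ⟨W.zero_mem, hz0⟩ (by
        intro t v ht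
        rw [hsc t v ht, W.smul_mem_iff ht])
    have h2 : {P : Projectivization F (Fin 7 → F) | P.rep ∈ W ∧ eval P.rep f = 0} =
        hypersurfacePts f ∩ projPts W := by
      ext P
      rw [Set.mem_inter_iff, Herm.mem_projPts, and_comm]
      rfl
    rw [h2, hWc, hcardF] at h1
    rw [h1]
    zify [hpow]
    ring
  have hN : Nat.card {v : Fin 7 → F // v ∉ W ∧ eval v f = 0} + q ^ 7 = q ^ 13 := by
    have h1 : Nat.card {v : Fin 7 → F // eval v f = 0} =
        Nat.card {v : Fin 7 → F // v ∈ W ∧ eval v f = 0} +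
        Nat.card {v : Fin 7 → F // v ∉ W ∧ eval v f = 0} := by
      simp only [Nat.card_eq_fintype_card, Fintype.card_subtype]
      rw [← Finset.card_filter_add_card_filter_not (fun v => v ∈ W), Finset.filter_filter,
        Finset.filter_filter]
      simp only [and_comm]
    omega
  obtain ⟨E, hEW, hE, hWE⟩ := Herm.step1 hq2 hqF hcardF f hfdeg W hW hN hNW
  have S : Herm.Setup q f W E :=
    { hq := hq2
      hF := hcardF
      hqF := hqF
      frob := frob
      hf := hfdeg
      hEW := hEW
      hW := hW
      hE := hE
      hWE := hWE
      hN := hN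
      hns := by
        intro u hu
        by_contra hcon
        push Not at hcon
        apply hnosolid
        refine ⟨E ⊔ Submodule.span F {u}, ?_, ?_⟩
        · have h1 := Submodule.finrank_add_le_finrank_add_finrank E (Submodule.span F {u})
          have h2 : finrank F (Submodule.span F {u}) = 1 := by
            apply finrank_span_singleton
            rintro rfl
            exact hu W.zero_mem
          have h3 : finrank F E < finrank F (E ⊔ Submodule.span F {u} : Submodule F (Fin 7 → F)) := by
            apply Submodule.finrank_lt_finrank_of_lt
            refine lt_of_le_of_ne le_sup_left (fun h => hu (hEW ?_))
            rw [h]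
            exact Submodule.mem_sup_right (Submodule.mem_span_singleton_self u)
          omega
        · intro P hP
          rw [Herm.mem_projPts, Submodule.mem_sup] at hP
          obtain ⟨a, ha, w, hw, hsum⟩ := hP
          obtain ⟨t, rfl⟩ := Submodule.mem_span_singleton.1 hw
          change eval P.rep f = 0
          rw [← hsum]
          by_cases ht : t = 0
          · rw [ht, zero_smul, add_zero]
            exact (hWE a (hEW ha)).2 ha
          · have : a + t • u = t • (u + t⁻¹ • a) := by
              rw [smul_add, smul_smul, mul_inv_cancel₀ ht, one_smul, add_comm]
            rw [this, hsc t _ ht]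
            exact hcon _ (E.smul_mem _ ha) }
  obtain ⟨M, hM1, hM2, hM3⟩ := S.herm
  refine ⟨M, hM1, hM2, ?_⟩
  ext P
  exact hM3 P.rep
end
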